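/- arXiv:quant-ph/0010101 — 6 statements merged into one kernel-verified Lean document; each statement's English description precedes it below -/
import Mathlib

section
/- For every integer k ≥ 1, the complex dimension of the space of G-invariant homogeneous degree-4 polynomial functions on tensor states in (ℂ^2)^{⊗k} equals (2^{k-1} + (-1)^k)/3. -/
/-!
A homogeneous quartic `Q` on tensor states is the same thing as a symmetric tensor
`f : (Fin k → Fin 4 → Fin 2) → ℂ`, where `a m j` is the `m`-th index of the `j`-th of four states
and `Sym(4)` permutes `j` (`toPoly`, `toPoly_inj`, `exists_toPoly_eq`). Substituting `g · u` in `Q`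
becomes contracting every slot of `f` with the matrices `g m` (`eval_act_toPoly`), so `Q` is
invariant iff `f` is; the space of such `f` is `invTensors k`.

In one slot, the `SL(2)`-invariants of `(ℂ²)^{⊗4}` form the plane spanned by
`w₀ = ε(x₀,x₁) ε(x₂,x₃)` and `w₁ = ε(x₀,x₂) ε(x₁,x₃)`, and an invariant is determined by its
coordinates at `0101` and `0011` (`wt_invariant`, `wt_invariant_determined`). Hence the integer
matrix `proj` that reads off these two coordinates and rebuilds is a projection onto this plane. Its
`k`-fold tensor power followed by averaging over `Sym(4)` is a projection of all tensors onto
`invTensors k` (`isProj_invMatrix`), so its trace is the dimension: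
`(1/24) ∑_σ (∑ₓ proj (x ∘ σ) x) ^ k`.

The inner sum is the character of the two-dimensional irreducible representation of `Sym(4)`:
it equals `2` on the Klein four-group, `-1` on the eight 3-cycles and `0` elsewhere. Therefore the
dimension is `(4 · 2^k + 8 · (-1)^k) / 24`; the vanishing of `0 ^ k` is where `k ≥ 1` enters.
-/

open MvPolynomial

/-- Action of `SL(n,ℂ)^k` on tensor states in `(ℂ^n)^{⊗k}`, the `m`-th factor acting on
the `m`-th tensor slot. -/
noncomputable def actTensor {n k : ℕ} (g : Fin k → Matrix.SpecialLinearGroup (Fin n) ℂ)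
    (u : (Fin k → Fin n) → ℂ) : (Fin k → Fin n) → ℂ :=
  fun p => ∑ q : Fin k → Fin n, (∏ m, ((g m : Matrix (Fin n) (Fin n) ℂ) (p m) (q m))) * u q

/-- The space of `G`-invariant homogeneous degree-`d` polynomial functions on tensor
states in `(ℂ^n)^{⊗k}`, where `G = SL(n,ℂ)^k`. -/
noncomputable def invPolySpace (n k d : ℕ) : Submodule ℂ (MvPolynomial (Fin k → Fin n) ℂ) where
  carrier := {Q | Q ∈ MvPolynomial.homogeneousSubmodule (Fin k → Fin n) ℂ d ∧
    ∀ (g : Fin k → Matrix.SpecialLinearGroup (Fin n) ℂ) (u : (Fin k → Fin n) → ℂ),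
      MvPolynomial.eval (actTensor g u) Q = MvPolynomial.eval u Q}
  add_mem' := by
    intro a b ha hb
    exact ⟨Submodule.add_mem _ ha.1 hb.1, fun g u => by simp [ha.2 g u, hb.2 g u]⟩
  zero_mem' := ⟨Submodule.zero_mem _, fun g u => by simp⟩
  smul_mem' := by
    intro c a ha
    exact ⟨Submodule.smul_mem _ c ha.1, fun g u => by
      simp [MvPolynomial.smul_eval, ha.2 g u]⟩

namespace QuarticInv

/-! ### Invariants of four vectors in one slot -/

/-- The volume form `ε` on `ℂ²`, with `ε(0,1) = 1`. -/
def eps (x y : Fin 2) : ℤ := (y : ℤ) - (x : ℤ)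

/-- The two basic invariants `ε(x₀,x₁) ε(x₂,x₃)` and `ε(x₀,x₂) ε(x₁,x₃)`. -/
def wt (i : Fin 2) (x : Fin 4 → Fin 2) : ℤ :=
  if i = 0 then eps (x 0) (x 1) * eps (x 2) (x 3) else eps (x 0) (x 2) * eps (x 1) (x 3)

/-- The multi-indices `0101` and `0011`, at which `wt` is dual: `wt i (ref j) = δ i j`. -/
def ref (i : Fin 2) : Fin 4 → Fin 2 := if i = 0 then ![0, 1, 0, 1] else ![0, 0, 1, 1]

/-- Matrix of the projection `φ ↦ ∑ i, φ (ref i) • wt i` onto the plane of invariants. -/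
def proj (x y : Fin 4 → Fin 2) : ℤ := ∑ i, if y = ref i then wt i x else 0

lemma proj_ref (i : Fin 2) (y : Fin 4 → Fin 2) : proj (ref i) y = if ref i = y then 1 else 0 := by
  have h : ∀ i j, wt j (ref i) = if i = j then 1 else 0 := by decide
  rw [proj, Finset.sum_eq_single i]
  · simp [h, eq_comm]
  · intro j _ hj
    simp [h, hj.symm]
  · simp

lemma proj_eq_zero {x y : Fin 4 → Fin 2} (h : ∀ i, y ≠ ref i) : proj x y = 0 := by
  simp [proj, h]

/-- The trace of `σ` on the plane of invariants, written out with integer arithmetic for the sake of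
evaluation; the digits of `j` in base 2 are `ref 1 j` and `ref 0 j`. -/
def permTrace (σ : Equiv.Perm (Fin 4)) : ℤ :=
  (σ 1 % 2 - σ 0 % 2) * (σ 3 % 2 - σ 2 % 2) + (σ 2 / 2 - σ 0 / 2) * (σ 3 / 2 - σ 1 / 2)

lemma sum_wt_perm (σ : Equiv.Perm (Fin 4)) : ∑ i, wt i (ref i ∘ σ) = permTrace σ := by
  have h0 : ∀ j : Fin 4, ((ref 0 j : ℕ) : ℤ) = (j : ℤ) % 2 := by decide
  have h1 : ∀ j : Fin 4, ((ref 1 j : ℕ) : ℤ) = (j : ℤ) / 2 := by decide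
  simp [Fin.sum_univ_two, wt, eps, permTrace, h0, h1]

lemma trace_values (σ : Equiv.Perm (Fin 4)) :
    permTrace σ = 2 ∨ permTrace σ = 0 ∨ permTrace σ = -1 := by
  revert σ; decide +kernel

lemma card_trace_two :
    (Finset.univ.filter fun σ : Equiv.Perm (Fin 4) => permTrace σ = 2).card = 4 := by
  decide +kernel

lemma card_trace_neg_one :
    (Finset.univ.filter fun σ : Equiv.Perm (Fin 4) => permTrace σ = -1).card = 8 := by
  decide +kernel

lemma sum_proj_perm (σ : Equiv.Perm (Fin 4)) :
    ∑ x, proj (x ∘ σ) x = permTrace σ := by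
  rw [← sum_wt_perm]
  simp only [proj]
  rw [Finset.sum_comm]
  simp

/-- The trace of a permutation on the plane of invariants takes the value `2` four times, `-1` eight
times, and `0` otherwise. -/
lemma sum_trace_pow {k : ℕ} (hk : 1 ≤ k) :
    ∑ σ : Equiv.Perm (Fin 4), (∑ x, proj (x ∘ σ) x) ^ k = 4 * 2 ^ k + 8 * (-1) ^ k := by
  have h : ∀ σ : Equiv.Perm (Fin 4), (∑ x, proj (x ∘ σ) x) ^ k =
      (if permTrace σ = 2 then 2 ^ k else 0) +
        (if permTrace σ = -1 then (-1) ^ k else 0) := by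
    intro σ
    rw [sum_proj_perm]
    rcases trace_values σ with h | h | h <;> rw [h] <;> simp
    omega
  simp only [h, Finset.sum_add_distrib, ← Finset.sum_filter, Finset.sum_const, card_trace_two,
    card_trace_neg_one]
  simp

lemma sum_fin4 {M : Type*} [AddCommMonoid M] (F : (Fin 4 → Fin 2) → M) :
    ∑ x, F x = ∑ a, ∑ b, ∑ c, ∑ d, F ![a, b, c, d] := by
  have h : ∑ p : ((Fin 2 × Fin 2) × Fin 2) × Fin 2, F ![p.1.1.1, p.1.1.2, p.1.2, p.2] =
      ∑ a, ∑ b, ∑ c, ∑ d, F ![a, b, c, d] := by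
    simp only [Fintype.sum_prod_type]
  rw [← h]
  refine Fintype.sum_equiv
    ⟨fun x => (((x 0, x 1), x 2), x 3), fun p => ![p.1.1.1, p.1.1.2, p.1.2, p.2], ?_, ?_⟩ _ _ ?_
  · intro x; ext i; fin_cases i <;> rfl
  · intro p; rfl
  · intro x; congr 1; ext i; fin_cases i <;> rfl

/-- The group `SL(2,ℂ)`. -/
abbrev SL2 := Matrix.SpecialLinearGroup (Fin 2) ℂ

lemma wt_invariant (i : Fin 2) (h : SL2) (z : Fin 4 → Fin 2) :
    ∑ x, (wt i x : ℂ) * ∏ j, (h : Matrix (Fin 2) (Fin 2) ℂ) (x j) (z j) = wt i z := by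
  have hd : ∀ p q, ∑ x, ∑ y, (eps x y : ℂ) * h x p * h y q = eps p q := by
    have := h.det_coe
    rw [Matrix.det_fin_two] at this
    intro p q
    fin_cases p <;> fin_cases q <;> simp [Fin.sum_univ_two, eps]
    · ring
    · linear_combination this
    · linear_combination -this
    · ring
  -- The sixteen-term sum factors into two copies of `hd`, one for each pair of positions.
  have key : ∀ F G H K : Fin 2 → ℂ, ∀ e₁ e₂ : Fin 2 → Fin 2 → ℂ,
      ∑ a, ∑ b, ∑ c, ∑ d, e₁ a b * e₂ c d * (F a * G b * H c * K d) =
        (∑ a, ∑ b, e₁ a b * F a * G b) * ∑ c, ∑ d, e₂ c d * H c * K d := by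
    intro F G H K e₁ e₂
    simp only [Fin.sum_univ_two]
    ring
  have key' : ∀ F G H K : Fin 2 → ℂ, ∀ e₁ e₂ : Fin 2 → Fin 2 → ℂ,
      ∑ a, ∑ b, ∑ c, ∑ d, e₁ a c * e₂ b d * (F a * G b * H c * K d) =
        (∑ a, ∑ b, e₁ a b * F a * H b) * ∑ c, ∑ d, e₂ c d * G c * K d := by
    intro F G H K e₁ e₂
    simp only [Fin.sum_univ_two]
    ring
  rw [sum_fin4]
  fin_cases i
  · refine Eq.trans ?_ ((key (h.1 · (z 0)) (h.1 · (z 1)) (h.1 · (z 2))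
      (h.1 · (z 3)) (fun a b => (eps a b : ℂ)) (fun a b => (eps a b : ℂ))).trans ?_)
    · simp [wt, Fin.prod_univ_four]
    · simp only [hd]
      simp [wt]
  · refine Eq.trans ?_ ((key' (h.1 · (z 0)) (h.1 · (z 1)) (h.1 · (z 2))
      (h.1 · (z 3)) (fun a b => (eps a b : ℂ)) (fun a b => (eps a b : ℂ))).trans ?_)
    · simp [wt, Fin.prod_univ_four]
    · simp only [hd]
      simp [wt]

/-- The `SL(2)`-invariants are spanned by the two `wt i`: the torus element `diag(2, 1/2)` kills all
coordinates of nonzero weight, and a unipotent element gives the linear relations among the other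
six. -/
lemma wt_invariant_determined {φ : (Fin 4 → Fin 2) → ℂ}
    (hφ : ∀ (h : SL2) z, ∑ x, φ x * ∏ j, (h : Matrix (Fin 2) (Fin 2) ℂ) (x j) (z j) = φ z)
    (x : Fin 4 → Fin 2) : φ x = ∑ y, (proj x y : ℂ) * φ y := by
  have h1 : ∀ z, _ := hφ ⟨!![2, 0; 0, 1/2], by simp [Matrix.det_fin_two]⟩
  have h2 : ∀ z, _ := hφ ⟨!![1, 1; 0, 1], by simp [Matrix.det_fin_two]⟩
  have hx : x = ![x 0, x 1, x 2, x 3] := by ext i; fin_cases i <;> rfl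
  have e : ∑ y, (proj x y : ℂ) * φ y = wt 0 x * φ (ref 0) + wt 1 x * φ (ref 1) := by
    simp [proj, Fin.sum_univ_two, add_mul, Finset.sum_add_distrib]
  rw [e, hx]
  have d1 : ∀ a b c d, _ := fun a b c d => h1 ![a,b,c,d]
  have d2 : ∀ a b c d, _ := fun a b c d => h2 ![a,b,c,d]
  simp only [sum_fin4, Fin.sum_univ_two, Fin.prod_univ_four, Fin.forall_fin_two] at d1 d2
  simp at d1 d2
  have r0 : ref 0 = ![0, 1, 0, 1] := rfl
  have r1 : ref 1 = ![0, 0, 1, 1] := rfl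
  rw [r0, r1]
  generalize x 0 = a, x 1 = b, x 2 = c, x 3 = d
  fin_cases a <;> fin_cases b <;> fin_cases c <;> fin_cases d <;> simp [wt, eps] <;> grind

lemma proj_invariant (h : SL2) (z y : Fin 4 → Fin 2) :
    ∑ x, (proj x y : ℂ) * ∏ j, (h : Matrix (Fin 2) (Fin 2) ℂ) (x j) (z j) = proj z y := by
  simp only [proj, Int.cast_sum, Finset.sum_mul]
  rw [Finset.sum_comm]
  refine Finset.sum_congr rfl fun i _ => ?_
  split_ifs
  · exact wt_invariant i h z
  · simp

/-! ### Tensors with `k` slots -/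

variable {k : ℕ}

/-- Indices of a 4-linear form on tensor states: `a m j` is the `m`-th index of the `j`-th argument. -/
abbrev Idx (k : ℕ) : Type := Fin k → Fin 4 → Fin 2

/-- Permutation of the four arguments, simultaneously in every slot. -/
def permIdx (σ : Equiv.Perm (Fin 4)) (a : Idx k) : Idx k := fun m => a m ∘ σ

/-- The 4-linear form with coefficients `f` is symmetric. -/
def IsSymm (f : Idx k → ℂ) : Prop := ∀ σ a, f (permIdx σ a) = f a

/-- Precomposition of the 4-linear form `f` with `g`, the factor `g m` acting on the `m`-th slot of
each argument. -/
noncomputable def pull (g : Fin k → SL2) : (Idx k → ℂ) →ₗ[ℂ] (Idx k → ℂ) :=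
  Matrix.vecMulLinear
    (Matrix.of fun b a => ∏ m, ∏ j, (g m : Matrix (Fin 2) (Fin 2) ℂ) (b m j) (a m j))

lemma pull_apply (g : Fin k → SL2) (f : Idx k → ℂ) (a : Idx k) :
    pull g f a = ∑ b, f b * ∏ m, ∏ j, (g m : Matrix (Fin 2) (Fin 2) ℂ) (b m j) (a m j) := rfl

/-- `permIdx σ` as a bijection of indices. -/
def permEquiv (σ : Equiv.Perm (Fin 4)) : Idx k ≃ Idx k where
  toFun := permIdx σ
  invFun := permIdx σ⁻¹
  left_inv a := by ext; simp [permIdx]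
  right_inv a := by ext; simp [permIdx]

lemma pull_permIdx (g : Fin k → SL2) (f : Idx k → ℂ) (σ : Equiv.Perm (Fin 4)) (a : Idx k) :
    pull g f (permIdx σ a) = pull g (fun b => f (permIdx σ b)) a := by
  rw [pull_apply, pull_apply, ← (permEquiv σ).sum_comp]
  refine Finset.sum_congr rfl fun b _ => ?_
  congr 1
  refine Finset.prod_congr rfl fun m _ => ?_
  exact Equiv.prod_comp σ fun j => (g m : Matrix (Fin 2) (Fin 2) ℂ) (b m j) (a m j)

lemma IsSymm.pull {f : Idx k → ℂ} (hf : IsSymm f) (g : Fin k → SL2) : IsSymm (pull g f) := by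
  intro σ a
  rw [pull_permIdx, funext fun b => hf σ b]

/-- The symmetric 4-linear forms on tensor states that are invariant under `SL(2,ℂ)^k`. -/
def invTensors (k : ℕ) : Submodule ℂ (Idx k → ℂ) where
  carrier := {f | IsSymm f ∧ ∀ g, pull g f = f}
  add_mem' := by
    rintro f f' ⟨h1, h2⟩ ⟨h1', h2'⟩
    refine ⟨fun σ a => by simp [h1 σ a, h1' σ a], fun g => by rw [map_add, h2, h2']⟩
  zero_mem' := ⟨fun σ a => by simp, fun g => map_zero _⟩
  smul_mem' := by
    rintro c f ⟨h1, h2⟩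
    refine ⟨fun σ a => by simp [h1 σ a], fun g => by rw [map_smul, h2]⟩

/-- The `k`-th tensor power of `proj`, applied to `f`. -/
noncomputable def slotProj (f : Idx k → ℂ) (a : Idx k) : ℂ :=
  ∑ b, (∏ m, (proj (a m) (b m) : ℂ)) * f b

lemma pull_slotProj (g : Fin k → SL2) (f : Idx k → ℂ) : pull g (slotProj f) = slotProj f := by
  ext a
  simp only [pull_apply, slotProj, Finset.sum_mul]
  rw [Finset.sum_comm]
  refine Finset.sum_congr rfl fun c _ => ?_
  calc ∑ b : Idx k, (∏ m, (proj (b m) (c m) : ℂ)) * f c *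
        ∏ m, ∏ j, (g m : Matrix (Fin 2) (Fin 2) ℂ) (b m j) (a m j)
      = (∑ b : Idx k, ∏ m, ((proj (b m) (c m) : ℂ) *
        ∏ j, (g m : Matrix (Fin 2) (Fin 2) ℂ) (b m j) (a m j))) * f c := by
        rw [Finset.sum_mul]
        refine Finset.sum_congr rfl fun b _ => ?_
        rw [Finset.prod_mul_distrib]
        ring
    _ = _ := by
        rw [← Fintype.prod_sum (fun m x => (proj x (c m) : ℂ) *
          ∏ j, (g m : Matrix (Fin 2) (Fin 2) ℂ) (x j) (a m j))]
        simp only [proj_invariant]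

lemma slotProj_ref (f : Idx k → ℂ) (c : Fin k → Fin 2) :
    slotProj f (fun m => ref (c m)) = f fun m => ref (c m) := by
  unfold slotProj
  rw [Finset.sum_eq_single fun m => ref (c m)]
  · simp [proj_ref]
  · intro b _ hb
    obtain ⟨m, hm⟩ := Function.ne_iff.1 hb
    rw [Finset.prod_eq_zero (Finset.mem_univ m), zero_mul]
    simp [proj_ref, hm.symm]
  · simp

/-- Invariance under the `m`-th factor alone lets one apply `proj` in slot `m`. -/
lemma slot_determined {f : Idx k → ℂ} (hf : ∀ g, pull g f = f) (m : Fin k) (a : Idx k) :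
    f a = ∑ y, (proj (a m) y : ℂ) * f (Function.update a m y) := by
  have := wt_invariant_determined (φ := fun x => f (Function.update a m x)) ?_ (a m)
  · simpa using this
  intro h z
  refine Eq.trans ?_ (congrFun (hf (Function.update 1 m h)) (Function.update a m z))
  rw [pull_apply]
  symm
  -- Only the `b` that agree with `a` off slot `m` contribute, all other factors being identities.
  have hinj : Function.Injective fun x => Function.update a m x := Function.update_injective a m
  rw [← Finset.sum_subset (Finset.subset_univ (Finset.univ.image fun x => Function.update a m x)),
    Finset.sum_image fun x _ y _ h => hinj h]
  · refine Finset.sum_congr rfl fun x _ => ?_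
    congr 1
    rw [Finset.prod_eq_single m]
    · simp
    · intro m' _ hm'
      simp [hm']
    · simp
  · intro b _ hb
    have : ∃ m', m' ≠ m ∧ b m' ≠ a m' := by
      by_contra! H
      refine hb (Finset.mem_image.2 ⟨b m, Finset.mem_univ _, ?_⟩)
      ext1 m'
      by_cases h : m' = m
      · subst h; simp
      · simp [h, H m' h]
    obtain ⟨m', h1, h2⟩ := this
    obtain ⟨j, hj⟩ := Function.ne_iff.1 h2
    rw [Finset.prod_eq_zero (Finset.mem_univ m'), mul_zero]
    rw [Finset.prod_eq_zero (Finset.mem_univ j)]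
    simp [h1, hj]

/-- An invariant tensor is determined by its entries at reference indices. The induction is on the
set `S` of slots in which the index is arbitrary. -/
lemma eq_zero_of_ref {f : Idx k → ℂ} (hf : ∀ g, pull g f = f)
    (h0 : ∀ c : Fin k → Fin 2, f (fun m => ref (c m)) = 0) : f = 0 := by
  have key : ∀ S : Finset (Fin k), ∀ a : Idx k, (∀ m ∉ S, ∃ i, a m = ref i) → f a = 0 := by
    intro S
    induction S using Finset.induction_on with
    | empty =>
      intro a ha
      choose c hc using fun m => ha m (by simp)
      rw [show a = fun m => ref (c m) from funext hc]
      exact h0 c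
    | insert m S _ ih =>
      intro a ha
      rw [slot_determined hf m a]
      refine Finset.sum_eq_zero fun y _ => ?_
      by_cases hy : ∃ i, y = ref i
      · rw [ih, mul_zero]
        intro m' hm'
        by_cases h : m' = m
        · subst h; simpa using hy
        · simpa [h] using ha m' (by simp [h, hm'])
      · push Not at hy
        simp [proj_eq_zero hy]
  exact funext fun a => key Finset.univ a (by simp)

lemma slotProj_eq_self {f : Idx k → ℂ} (hf : ∀ g, pull g f = f) : slotProj f = f := by
  refine sub_eq_zero.1 (eq_zero_of_ref (fun g => ?_) fun c => ?_)
  · rw [map_sub, pull_slotProj, hf]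
  · simp [slotProj_ref]

/-- The matrix of `slotProj` followed by averaging over the permutations of the four arguments. -/
noncomputable def invMatrix (k : ℕ) : Matrix (Idx k) (Idx k) ℂ :=
  fun a b => (1 / 24) * ∑ σ : Equiv.Perm (Fin 4), ∏ m, (proj (a m ∘ σ) (b m) : ℂ)

lemma invMatrix_apply (f : Idx k → ℂ) (a : Idx k) :
    Matrix.toLin' (invMatrix k) f a =
      (1 / 24) * ∑ σ : Equiv.Perm (Fin 4), slotProj f (permIdx σ a) := by
  simp only [Matrix.toLin'_apply, Matrix.mulVec, dotProduct, invMatrix, slotProj, Finset.mul_sum,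
    Finset.sum_mul, permIdx]
  rw [Finset.sum_comm]
  simp only [mul_assoc]

lemma permIdx_permIdx (σ τ : Equiv.Perm (Fin 4)) (a : Idx k) :
    permIdx σ (permIdx τ a) = permIdx (τ * σ) a := rfl

lemma isProj_invMatrix : LinearMap.IsProj (invTensors k) (Matrix.toLin' (invMatrix k)) where
  map_mem f := by
    refine ⟨fun τ a => ?_, fun g => ?_⟩
    · have h := Equiv.sum_comp (Equiv.mulLeft τ) fun σ => slotProj f (permIdx σ a)
      rw [invMatrix_apply, invMatrix_apply, ← h]
      simp only [permIdx_permIdx, Equiv.coe_mulLeft]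
    · have h : Matrix.toLin' (invMatrix k) f = (1 / 24 : ℂ) •
          ∑ σ : Equiv.Perm (Fin 4), fun a => slotProj f (permIdx σ a) := by
        ext a
        rw [invMatrix_apply]
        simp
      rw [h, map_smul, map_sum]
      congr 1
      refine Finset.sum_congr rfl fun σ _ => funext fun a => ?_
      rw [← pull_permIdx, pull_slotProj]
  map_id f hf := by
    ext a
    rw [invMatrix_apply, slotProj_eq_self hf.2]
    simp [hf.1 _ a, Fintype.card_perm, Nat.factorial]

/-- The trace of the projection `invMatrix k` is the dimension of its image. -/
lemma finrank_invTensors (hk : 1 ≤ k) :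
    (Module.finrank ℂ (invTensors k) : ℤ) * 3 = 2 ^ (k - 1) + (-1) ^ k := by
  have h := (isProj_invMatrix (k := k)).trace
  rw [Matrix.trace_toLin'_eq] at h
  have h2 : (invMatrix k).trace =
      (1 / 24) * ((∑ σ : Equiv.Perm (Fin 4), (∑ x, proj (x ∘ σ) x) ^ k : ℤ) : ℂ) := by
    simp only [Matrix.trace, Matrix.diag, invMatrix]
    rw [← Finset.mul_sum, Finset.sum_comm]
    push_cast
    congr 1
    refine Finset.sum_congr rfl fun σ _ => ?_
    rw [← Fintype.prod_sum (fun (_ : Fin k) x => (proj (x ∘ σ) x : ℂ))]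
    simp
  rw [h2, sum_trace_pow hk] at h
  obtain ⟨n, rfl⟩ : ∃ n, k = n + 1 := ⟨k - 1, by omega⟩
  have h3 : ((Module.finrank ℂ (invTensors (n + 1)) : ℤ) : ℂ) * 3 =
      ((2 ^ n + (-1) ^ (n + 1) : ℤ) : ℂ) := by
    rw [Int.cast_natCast, ← h]
    push_cast
    ring
  simpa using (by exact_mod_cast h3 : (Module.finrank ℂ (invTensors (n + 1)) : ℤ) * 3 =
      2 ^ n + (-1) ^ (n + 1))

/-! ### Quartic forms as symmetric tensors -/

/-- The index of the `j`-th argument, as a coordinate of a tensor state. -/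
abbrev row (a : Idx k) (j : Fin 4) : Fin k → Fin 2 := fun m => a m j

/-- The exponent of the monomial `∏ j, X (row a j)`. -/
noncomputable def expo (a : Idx k) : (Fin k → Fin 2) →₀ ℕ :=
  ∑ j, Finsupp.single (row a j) 1

lemma expo_permIdx (σ : Equiv.Perm (Fin 4)) (a : Idx k) : expo (permIdx σ a) = expo a :=
  Equiv.sum_comp σ fun j => Finsupp.single (row a j) 1

/-- Two families of four coordinates with the same multiplicities differ by a permutation. -/
lemma exists_permIdx_of_expo_eq {a b : Idx k} (h : expo a = expo b) : ∃ σ, permIdx σ a = b := by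
  have hc : ∀ p, Fintype.card {j // row b j = p} = Fintype.card {j // row a j = p} := by
    intro p
    have := DFunLike.congr_fun h p
    simpa [expo, Finsupp.finsetSum_apply, Finsupp.single_apply, Fintype.card_subtype] using this.symm
  refine ⟨Equiv.ofFiberEquiv fun p => Fintype.equivOfCardEq (hc p), ?_⟩
  ext m j
  have := Equiv.ofFiberEquiv_map (fun p => Fintype.equivOfCardEq (hc p)) j
  exact congrArg Fin.val (congrFun this m)

lemma exists_sum_single {α : Type*} (n : ℕ) :
    ∀ d : α →₀ ℕ, d.degree = n → ∃ p : Fin n → α, d = ∑ j, Finsupp.single (p j) 1 := by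
  induction n with
  | zero =>
    intro d hd
    refine ⟨Fin.elim0, ?_⟩
    simpa using (Finsupp.degree_eq_zero_iff d).1 hd
  | succ n ih =>
    intro d hd
    have hne : d ≠ 0 := by rintro rfl; simp at hd
    obtain ⟨x, hx⟩ := Finsupp.ne_iff.1 hne
    have hle : Finsupp.single x 1 ≤ d := by
      rw [Finsupp.single_le_iff]
      exact Nat.one_le_iff_ne_zero.2 hx
    have hd' : d = Finsupp.single x 1 + (d - Finsupp.single x 1) :=
      (add_tsub_cancel_of_le hle).symm
    obtain ⟨p, hp⟩ := ih (d - Finsupp.single x 1) (by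
      rw [hd', map_add, Finsupp.degree_single] at hd
      omega)
    refine ⟨Fin.cons x p, ?_⟩
    rw [Fin.sum_univ_succ]
    simp only [Fin.cons_zero, Fin.cons_succ]
    rw [← hp]
    exact hd'

lemma exists_expo_eq {d : (Fin k → Fin 2) →₀ ℕ} (hd : d.degree = 4) : ∃ a : Idx k, expo a = d := by
  obtain ⟨p, hp⟩ := exists_sum_single 4 d hd
  exact ⟨fun m j => p j m, hp.symm⟩

/-- The quartic form `∑ a, f a • ∏ j, X (row a j)` obtained by restricting `f` to the diagonal. -/
noncomputable def toPoly : (Idx k → ℂ) →ₗ[ℂ] MvPolynomial (Fin k → Fin 2) ℂ :=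
  ∑ a, (MvPolynomial.monomial (expo a)).comp (LinearMap.proj a)

lemma toPoly_apply (f : Idx k → ℂ) : toPoly f = ∑ a, MvPolynomial.monomial (expo a) (f a) := by
  simp [toPoly]

lemma coeff_toPoly (f : Idx k → ℂ) (d : (Fin k → Fin 2) →₀ ℕ) :
    (toPoly f).coeff d = ∑ a with expo a = d, f a := by
  rw [toPoly_apply, MvPolynomial.coeff_sum]
  simp [MvPolynomial.coeff_monomial, Finset.sum_filter]

lemma eval_toPoly (f : Idx k → ℂ) (u : (Fin k → Fin 2) → ℂ) :
    MvPolynomial.eval u (toPoly f) = ∑ a, f a * ∏ j, u (row a j) := by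
  rw [toPoly_apply, map_sum]
  refine Finset.sum_congr rfl fun a _ => ?_
  rw [MvPolynomial.eval_monomial, expo, ← Finsupp.prod_finsetSum_index (by simp) (by simp [pow_add])]
  simp

lemma toPoly_mem (f : Idx k → ℂ) : (toPoly f).IsHomogeneous 4 := by
  rw [toPoly_apply]
  refine MvPolynomial.IsHomogeneous.sum _ _ _ fun a _ => MvPolynomial.isHomogeneous_monomial _ ?_
  simp [expo]

/-- Acting on the state amounts to precomposing the 4-linear form. -/
lemma eval_act_toPoly (g : Fin k → SL2) (f : Idx k → ℂ) (u : (Fin k → Fin 2) → ℂ) :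
    MvPolynomial.eval (actTensor g u) (toPoly f) = MvPolynomial.eval u (toPoly (pull g f)) := by
  simp only [eval_toPoly, pull_apply, Finset.sum_mul]
  rw [Finset.sum_comm]
  refine Finset.sum_congr rfl fun b _ => ?_
  unfold actTensor
  rw [Fintype.prod_sum, Finset.mul_sum]
  refine Fintype.sum_equiv (Equiv.piComm _) _ _ fun q => ?_
  rw [Finset.prod_mul_distrib, Finset.prod_comm, mul_assoc]
  rfl

lemma card_fiber_ne_zero (a : Idx k) :
    ((Finset.univ.filter fun b : Idx k => expo b = expo a).card : ℂ) ≠ 0 := by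
  rw [Nat.cast_ne_zero, Finset.card_ne_zero]
  exact ⟨a, by simp⟩

lemma toPoly_inj {f f' : Idx k → ℂ} (hf : IsSymm f) (hf' : IsSymm f')
    (h : toPoly f = toPoly f') : f = f' := by
  have key : ∀ f : Idx k → ℂ, IsSymm f → ∀ a, (toPoly f).coeff (expo a) =
      ((Finset.univ.filter fun b : Idx k => expo b = expo a).card : ℂ) * f a := by
    intro f hf a
    rw [coeff_toPoly, ← nsmul_eq_mul, ← Finset.sum_const]
    refine Finset.sum_congr rfl fun b hb => ?_
    obtain ⟨σ, rfl⟩ := exists_permIdx_of_expo_eq (Finset.mem_filter.1 hb).2.symm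
    exact hf σ a
  ext a
  have := key f hf a
  rw [h, key f' hf' a] at this
  exact (mul_left_cancel₀ (card_fiber_ne_zero a) this).symm

/-- Polarization: each coefficient of `Q` is spread evenly over the indices of its monomial. -/
lemma exists_toPoly_eq {Q : MvPolynomial (Fin k → Fin 2) ℂ} (hQ : Q.IsHomogeneous 4) :
    ∃ f : Idx k → ℂ, IsSymm f ∧ toPoly f = Q := by
  refine ⟨fun a => Q.coeff (expo a) / (Finset.univ.filter fun b : Idx k => expo b = expo a).card,
    fun σ a => by simp only [expo_permIdx], ?_⟩
  ext d
  rw [coeff_toPoly]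
  by_cases hd : d.degree = 4
  · obtain ⟨a, rfl⟩ := exists_expo_eq hd
    rw [Finset.sum_congr rfl fun b hb => by rw [(Finset.mem_filter.1 hb).2], Finset.sum_const,
      nsmul_eq_mul, mul_div_cancel₀ _ (card_fiber_ne_zero a)]
  · rw [hQ.coeff_eq_zero hd]
    refine Finset.sum_eq_zero fun b hb => absurd ?_ hd
    rw [← (Finset.mem_filter.1 hb).2]
    simp [expo]

lemma map_toPoly_invTensors : (invTensors k).map toPoly = invPolySpace 2 k 4 := by
  ext Q
  constructor
  · rintro ⟨f, hf, rfl⟩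
    exact ⟨toPoly_mem f, fun g u => by rw [eval_act_toPoly, hf.2]⟩
  · rintro ⟨hQ, hinv⟩
    obtain ⟨f, hf, rfl⟩ := exists_toPoly_eq hQ
    refine ⟨f, ⟨hf, fun g => toPoly_inj (hf.pull g) hf ?_⟩, rfl⟩
    exact MvPolynomial.funext fun u => by rw [← eval_act_toPoly, hinv]

lemma finrank_invPolySpace :
    Module.finrank ℂ (invPolySpace 2 k 4) = Module.finrank ℂ (invTensors k) := by
  rw [← map_toPoly_invTensors, ← LinearMap.range_domRestrict]
  refine LinearMap.finrank_range_of_inj fun f f' h => ?_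
  exact Subtype.ext (toPoly_inj f.2.1 f'.2.1 h)

end QuarticInv

/-- For `k ≥ 1`, the dimension of the space of `G`-invariant homogeneous degree-4
polynomial functions on tensor states in `(ℂ^2)^{⊗k}` equals `(2^{k-1} + (-1)^k)/3`. -/
theorem stmt12 (k : ℕ) (hk : 1 ≤ k) :
    (Module.finrank ℂ (invPolySpace 2 k 4) : ℤ) * 3 = 2 ^ (k - 1) + (-1) ^ k := by
  rw [QuarticInv.finrank_invPolySpace]
  exact QuarticInv.finrank_invTensors hk
end

section
/- For every integer k ≥ 1, the complex dimension of the space of homogeneous degree-4 polynomial functions on tensor states in (ℂ^2)^{⊗k} which are invariant both under G = SL(2,ℂ)^k and under the permutation action of S_k equals M_k = ⌊k/6⌋ + r_k, where r_k = 0 if k ≡ 1 (mod 6) and r_k = 1 otherwise. -/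
/-!
A homogeneous polynomial of degree 4 on `(ℂ^2)^{⊗k}` is the same thing as an array `τ` with one
index in `Fin 4 → Fin 2` for each of the `k` slots, symmetric under the simultaneous action of
`S_4` on these indices (`exists_toPoly`, `toPoly_inj`). Invariance of the polynomial under
`SL(2,ℂ)^k` says that, in each slot, `τ` lies in the space `W` of `SL(2,ℂ)`-invariants of
`(ℂ^2)^{⊗4}`. This space is two-dimensional, and has a basis `w_0, w_1` (`wv`) which every
transposition of `S_4` exchanges up to cube roots of unity; `S_4` acts on `W` through its quotient
`S_3`. Hence the invariant space is `(Sym^k W)^{S_3}`.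

In terms of the coordinates `c : (Fin k → Fin 2) → ℂ` of `τ` in the basis `⨂ w_{s m}`
(`tens_coord`, `coord_tens`), symmetry under `S_k` says that `c s` depends only on the number `n` of
slots with `s m = 1`; symmetry under the transposition `(2 3)` of `S_4` says that it is unchanged
by `n ↦ k - n`; and symmetry under the 3-cycles says that it vanishes unless `n ≡ 2 k (mod 3)`
(`Good`, `good_coord`, `tens_sym`). So a free parameter is attached to each `n ≤ k / 2` with
`n ≡ 2 k (mod 3)`, and there are `⌊k/6⌋ + r_k` such `n` (`num_spec`). The composite
`toPoly ∘ tens ∘ cOf` is the resulting linear isomorphism from `ℂ^{⌊k/6⌋ + r_k}` onto the space of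
invariants (`range_eq`).
-/

open MvPolynomial

/-- The space of homogeneous degree-4 polynomial functions on tensor states in
`(ℂ^2)^{⊗k}` invariant under both `G = SL(2,ℂ)^k` and the permutation action of `S_k`. -/
noncomputable def skInvPolySpace (k : ℕ) : Submodule ℂ (MvPolynomial (Fin k → Fin 2) ℂ) where
  carrier := {Q | Q ∈ MvPolynomial.homogeneousSubmodule (Fin k → Fin 2) ℂ 4 ∧
    (∀ (g : Fin k → Matrix.SpecialLinearGroup (Fin 2) ℂ) (u : (Fin k → Fin 2) → ℂ),
      MvPolynomial.eval (actTensor g u) Q = MvPolynomial.eval u Q) ∧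
    (∀ (σ : Equiv.Perm (Fin k)) (u : (Fin k → Fin 2) → ℂ),
      MvPolynomial.eval (fun p => u (fun i => p (σ i))) Q = MvPolynomial.eval u Q)}
  add_mem' := by
    intro a b ha hb
    exact ⟨Submodule.add_mem _ ha.1 hb.1,
      fun g u => by simp [ha.2.1 g u, hb.2.1 g u],
      fun σ u => by simp [ha.2.2 σ u, hb.2.2 σ u]⟩
  zero_mem' := ⟨Submodule.zero_mem _, fun g u => by simp, fun σ u => by simp⟩
  smul_mem' := by
    intro c a ha
    exact ⟨Submodule.smul_mem _ c ha.1,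
      fun g u => by simp [MvPolynomial.smul_eval, ha.2.1 g u],
      fun σ u => by simp [MvPolynomial.smul_eval, ha.2.2 σ u]⟩

/-! ### Invariants of four vectors in the plane -/

/-- The primitive cube root of unity `exp (2πi/3)`. -/
noncomputable def om : ℂ := Complex.exp (2 * Real.pi * Complex.I / (3 : ℕ))
theorem om_prim : IsPrimitiveRoot om 3 := Complex.isPrimitiveRoot_exp 3 (by norm_num)
theorem om_sum : 1 + om + om ^ 2 = 0 := by
  have := om_prim.geom_sum_eq_zero (by norm_num)
  simpa [Finset.sum_range_succ] using this

/-- The alternating form on `ℂ^2` in the standard basis: `eps 0 1 = 1`, `eps 1 0 = -1`, and `0` on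
the diagonal. -/
def eps (a b : Fin 2) : ℂ := (b : ℕ) - (a : ℕ)

/-- The two basis vectors `w_0, w_1` of the `SL(2,ℂ)`-invariants in `(ℂ^2)^{⊗4}`, as functions of the
four indices. They are the eigenvectors of the 3-cycles of `S_4`. -/
noncomputable def wv (j : Fin 2) (p : Fin 4 → Fin 2) : ℂ :=
  eps (p 0) (p 2) * eps (p 1) (p 3) + om ^ (j.val + 1) * (eps (p 0) (p 1) * eps (p 2) (p 3))

theorem sum_four {M : Type*} [AddCommMonoid M] (f : (Fin 4 → Fin 2) → M) :
    ∑ r, f r = ∑ a, ∑ b, ∑ c, ∑ d, f ![a, b, c, d] := by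
  simp only [← (Fin.consEquiv (fun _ => Fin 2)).sum_comp, Fintype.sum_prod_type, Fintype.sum_unique]
  rfl

/-- `w_j` is `SL(2,ℂ)`-invariant. -/
theorem wv_inv (j : Fin 2) (g : Matrix (Fin 2) (Fin 2) ℂ) (hg : g.det = 1) (q : Fin 4 → Fin 2) :
    ∑ r, wv j r * ∏ i, g (r i) (q i) = wv j q := by
  rw [Matrix.det_fin_two] at hg
  have h : ∀ c d, ∑ a, ∑ b, eps a b * (g a c * g b d) = eps c d := by
    intro c d
    fin_cases c <;> fin_cases d <;> simp [eps, Fin.sum_univ_two]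
    · ring
    · linear_combination hg
    · linear_combination -hg
    · ring
  rw [sum_four]
  simp only [wv, ← h (q 0), ← h (q 1), ← h (q 2)]
  simp [eps, Fin.sum_univ_two, Fin.prod_univ_four]
  ring

/-- Up to the factor `6`, the basis dual to `w_0, w_1` for the bilinear pairing is `w_1, w_0`. -/
theorem wv_pair (i j : Fin 2) : ∑ r, wv i r * wv j r = if j = i.rev then 6 else 0 := by
  have h := om_sum
  have h3 := om_prim.pow_eq_one
  rw [sum_four]
  fin_cases i <;> fin_cases j <;> simp [wv, eps, Fin.sum_univ_two, Fin.rev]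
  · linear_combination 4 * h
  · linear_combination 4 * h3 + 2 * h
  · linear_combination 4 * h3 + 2 * h
  · linear_combination 4 * h + 4 * om * h3

/-- A transposition exchanges `w_0` and `w_1` up to cube roots of unity. The exponent `e` depends only
on the transposition, through its image in the quotient `S_3` of `S_4`. -/
theorem wv_swap (a b : Fin 4) (hab : a ≠ b) : ∃ e : ℕ, ∀ j p,
    wv j (p ∘ Equiv.swap a b) = (om ^ (j.val + 1)) ^ e * wv j.rev p := by
  suffices H : ∃ e : ℕ, ∀ p, wv 0 (p ∘ Equiv.swap a b) = om ^ e * wv 1 p ∧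
      wv 1 (p ∘ Equiv.swap a b) = (om ^ 2) ^ e * wv 0 p by
    obtain ⟨e, he⟩ := H
    refine ⟨e, fun j p => ?_⟩
    fin_cases j
    · simpa using (he p).1
    · simpa using (he p).2
  have h := om_sum
  have h3 := om_prim.pow_eq_one
  -- `(0 1)` and `(2 3)` have the same image in `S_3`, and so do `(0 2)` and `(1 3)`, and so do
  -- `(0 3)` and `(1 2)`.
  refine ⟨(if (a = 0 ∧ b = 1) ∨ (a = 1 ∧ b = 0) ∨ (a = 2 ∧ b = 3) ∨ (a = 3 ∧ b = 2) then 0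
    else if (a = 0 ∧ b = 2) ∨ (a = 2 ∧ b = 0) ∨ (a = 1 ∧ b = 3) ∨ (a = 3 ∧ b = 1) then 2 else 1), fun p => ?_⟩
  simp only [wv, Function.comp]
  generalize hp0 : p 0 = p0
  generalize hp1 : p 1 = p1
  generalize hp2 : p 2 = p2
  generalize hp3 : p 3 = p3
  fin_cases a <;> fin_cases b <;> simp [Equiv.swap_apply_def, hp0, hp1, hp2, hp3] at hab ⊢ <;> clear hp0 hp1 hp2 hp3 <;>
  fin_cases p0 <;> fin_cases p1 <;> fin_cases p2 <;> fin_cases p3 <;> simp [eps] <;> constructor <;> grind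

/-- The invariants `w_0, w_1` span: every `SL(2,ℂ)`-invariant `f` in `(ℂ^2)^{⊗4}` equals its image under
the projection `∑ j, w_{rev j} / 6 ⊗ w_j`. -/
theorem proj_of_inv (f : (Fin 4 → Fin 2) → ℂ)
    (hf : ∀ (h : Matrix.SpecialLinearGroup (Fin 2) ℂ) a,
      f a = ∑ r, f r * ∏ i, (h : Matrix (Fin 2) (Fin 2) ℂ) (r i) (a i)) (a : Fin 4 → Fin 2) :
    f a = ∑ r, f r * ∑ j, wv j.rev r / 6 * wv j a := by
  have h := om_sum
  have h3 := om_prim.pow_eq_one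
  obtain ⟨F, hF⟩ : ∃ F : Fin 2 → Fin 2 → Fin 2 → Fin 2 → ℂ, ∀ a b c d, f ![a, b, c, d] = F a b c d :=
    ⟨_, fun _ _ _ _ => rfl⟩
  have hf' : ∀ (h : Matrix.SpecialLinearGroup (Fin 2) ℂ) (a b c d : Fin 2), F a b c d =
      ∑ a', ∑ b', ∑ c', ∑ d', F a' b' c' d' * (h a' a * h b' b * h c' c * h d' d) := by
    intro h a b c d
    rw [← hF, hf h, sum_four]
    simp [hF, Fin.prod_univ_four]
  obtain ⟨a0, a1, a2, a3, rfl⟩ : ∃ a0 a1 a2 a3, a = ![a0, a1, a2, a3] :=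
    ⟨a 0, a 1, a 2, a 3, by ext i; fin_cases i <;> rfl⟩
  -- A diagonal matrix kills all components outside weight zero, the Weyl element relates the
  -- remaining six in pairs, and a unipotent matrix gives one more linear relation.
  have hd := hf' ⟨!![2, 0; 0, 1/2], by simp [Matrix.det_fin_two]⟩
  have hs := hf' ⟨!![0, 1; -1, 0], by simp [Matrix.det_fin_two]⟩
  have hu := hf' ⟨!![1, 1; 0, 1], by simp [Matrix.det_fin_two]⟩
  have d1 := hd 0 0 0 0
  have d2 := hd 0 0 0 1
  have d3 := hd 0 0 1 0
  have d4 := hd 0 1 0 0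
  have d5 := hd 1 0 0 0
  have d6 := hd 1 1 1 1
  have d7 := hd 1 1 1 0
  have d8 := hd 1 1 0 1
  have d9 := hd 1 0 1 1
  have d10 := hd 0 1 1 1
  have s1 := hs 0 0 1 1
  have s2 := hs 0 1 0 1
  have s3 := hs 0 1 1 0
  have u1 := hu 0 1 1 1
  clear hd hs hu
  simp [Fin.sum_univ_two] at d1 d2 d3 d4 d5 d6 d7 d8 d9 d10 s1 s2 s3 u1
  ring_nf at d1 d2 d3 d4 d5 d6 d7 d8 d9 d10
  simp only [sum_four, hF]
  clear hf hf' hF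
  replace d1 : F 0 0 0 0 = 0 := by linear_combination (-1/15) * d1
  replace d2 : F 0 0 0 1 = 0 := by linear_combination (-1/3) * d2
  replace d3 : F 0 0 1 0 = 0 := by linear_combination (-1/3) * d3
  replace d4 : F 0 1 0 0 = 0 := by linear_combination (-1/3) * d4
  replace d5 : F 1 0 0 0 = 0 := by linear_combination (-1/3) * d5
  replace d6 : F 1 1 1 1 = 0 := by linear_combination (16/15) * d6
  replace d7 : F 1 1 1 0 = 0 := by linear_combination (4/3) * d7
  replace d8 : F 1 1 0 1 = 0 := by linear_combination (4/3) * d8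
  replace d9 : F 1 0 1 1 = 0 := by linear_combination (4/3) * d9
  replace d10 : F 0 1 1 1 = 0 := by linear_combination (4/3) * d10
  have u2 : F 0 0 1 1 = - F 0 1 0 1 - F 0 1 1 0 := by
    simp only [d1, d2, d3, d4, d10] at u1
    linear_combination -u1
  rw [u2] at s1
  fin_cases a0 <;> fin_cases a1 <;> fin_cases a2 <;> fin_cases a3 <;>
    simp [Fin.sum_univ_two, wv, eps, Fin.rev, d1, d2, d3, d4, d5, d6, d7, d8, d9, d10,
      ← s1, ← s2, ← s3, u2] <;> clear d1 d2 d3 d4 d5 d6 d7 d8 d9 d10 s1 s2 s3 u1 u2 <;> grind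

/-- If a one-slot operator `P` fixes `τ` in every slot, then so does `P^{⊗k}`. -/
theorem proj_all {A : Type*} [Fintype A] [DecidableEq A] (P : A → A → ℂ) (k : ℕ) (τ : (Fin k → A) → ℂ)
   (h : ∀ m y, τ y = ∑ r, τ (Function.update y m r) * P r (y m)) (y : Fin k → A) :
   τ y = ∑ x, τ x * ∏ m, P (x m) (y m) := by
  induction k with
  | zero => 
    simp [Subsingleton.elim y default]
  | succ k ih =>
    rw [← (Fin.consEquiv (fun _ => A)).sum_comp, Fintype.sum_prod_type, h 0]
    refine Finset.sum_congr rfl fun r _ => ?_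
    have := ih (fun z => τ (Fin.cons r z)) (fun m z => by
      have := h m.succ (Fin.cons r z)
      simpa [← Fin.cons_update] using this) (Fin.tail y)
    have e : Function.update y 0 r = Fin.cons r (Fin.tail y) := by
      conv_lhs => rw [← Fin.cons_self_tail y]
      rw [Fin.update_cons_zero]
    rw [e, this, Finset.sum_mul]
    refine Finset.sum_congr rfl fun x _ => ?_
    simp [Fin.prod_univ_succ, Fin.consEquiv, Fin.tail]
    ring

/-- The case `e = 0` of `wv_swap`; it yields the symmetry `n ↦ k - n`. -/
theorem wv_swap23 (j p) : wv j (p ∘ Equiv.swap 2 3) = wv j.rev p := by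
  have h := om_sum
  have h3 := om_prim.pow_eq_one
  simp only [wv, Function.comp]
  generalize hp0 : p 0 = p0
  generalize hp1 : p 1 = p1
  generalize hp2 : p 2 = p2
  generalize hp3 : p 3 = p3
  simp [Equiv.swap_apply_def, hp0, hp1, hp2, hp3]
  clear hp0 hp1 hp2 hp3
  fin_cases j <;> fin_cases p0 <;> fin_cases p1 <;> fin_cases p2 <;> fin_cases p3 <;> simp [eps] <;> grind

/-- The case `e = 1` of `wv_swap`; combined with `wv_swap23` it yields the congruence modulo 3. -/
theorem wv_swap12 (j p) : wv j (p ∘ Equiv.swap 1 2) = om ^ (j.val + 1) * wv j.rev p := by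
  have h := om_sum
  have h3 := om_prim.pow_eq_one
  simp only [wv, Function.comp]
  generalize hp0 : p 0 = p0
  generalize hp1 : p 1 = p1
  generalize hp2 : p 2 = p2
  generalize hp3 : p 3 = p3
  simp [Equiv.swap_apply_def, hp0, hp1, hp2, hp3]
  clear hp0 hp1 hp2 hp3
  fin_cases j <;> fin_cases p0 <;> fin_cases p1 <;> fin_cases p2 <;> fin_cases p3 <;> simp [eps] <;> grind

/-! ### Quartic polynomials as symmetric arrays -/

/-- Two functions whose fibres have equal sizes differ by a permutation of the source. -/
theorem exists_perm_of_card {ι α : Type*} [Fintype ι] [DecidableEq α] (f g : ι → α)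
    (h : ∀ a, Fintype.card {i // f i = a} = Fintype.card {i // g i = a}) :
    ∃ σ : Equiv.Perm ι, g = f ∘ σ := by
  refine ⟨(Equiv.ofFiberEquiv fun a => Fintype.equivOfCardEq (h a)).symm, ?_⟩
  funext i
  have := Equiv.ofFiberEquiv_map (fun a => Fintype.equivOfCardEq (h a))
    ((Equiv.ofFiberEquiv fun a => Fintype.equivOfCardEq (h a)).symm i)
  rw [Equiv.apply_symm_apply] at this
  exact this

theorem sum_prod_pi {ι A : Type*} [Fintype ι] [DecidableEq ι] [Fintype A] (F : ι → A → ℂ) :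
    ∑ x : ι → A, ∏ m, F m (x m) = ∏ m, ∑ r, F m r := by
  rw [Finset.prod_univ_sum, Fintype.piFinset_univ]

section

variable {k : ℕ}

/-- The monomial `∏ i, u (x · i)` of degree 4, as an exponent vector. The four tensor indices are stored
slot by slot: `x m i` is the `m`-th index of the `i`-th factor. -/
noncomputable def mon (x : Fin k → Fin 4 → Fin 2) : (Fin k → Fin 2) →₀ ℕ :=
  ∑ i, Finsupp.single (fun m => x m i) 1

theorem mon_perm (x : Fin k → Fin 4 → Fin 2) (σ : Equiv.Perm (Fin 4)) :
    mon (fun m => x m ∘ σ) = mon x := by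
  unfold mon
  exact Equiv.sum_comp σ (fun i => Finsupp.single (fun m => x m i) 1)

theorem exists_perm_of_mon {x y : Fin k → Fin 4 → Fin 2} (h : mon x = mon y) :
    ∃ σ : Equiv.Perm (Fin 4), y = fun m => x m ∘ σ := by
  obtain ⟨σ, hσ⟩ := exists_perm_of_card (fun i m => x m i) (fun i m => y m i) (fun a => by
    have := DFunLike.congr_fun h a
    simpa [mon, Finsupp.single_apply, Finset.sum_boole, Fintype.card_subtype] using this)
  refine ⟨σ, ?_⟩
  funext m i
  exact congrFun (congrFun hσ i) m

/-- Every exponent vector of degree 4 comes from a choice of four tensor indices. -/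
theorem exists_mon (d : (Fin k → Fin 2) →₀ ℕ) (hd : d.degree = 4) :
    ∃ x : Fin k → Fin 4 → Fin 2, mon x = d := by
  obtain ⟨l, hl⟩ : ∃ l : List (Fin k → Fin 2), (l : Multiset _) = Finsupp.toMultiset d :=
    Quot.exists_rep _
  have hlen : l.length = 4 := by
    rw [← Multiset.coe_card, hl, Finsupp.card_toMultiset, ← hd]; rfl
  obtain ⟨v, hv⟩ : ∃ v : Fin 4 → Fin k → Fin 2, l = List.ofFn v := by
    exact ⟨fun i => l.get (i.cast hlen.symm), by
      apply List.ext_getElem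
      · simp [hlen]
      · intro n h1 h2
        rw [List.getElem_ofFn]
        rfl⟩
  refine ⟨fun m i => v i m, ?_⟩
  have key : Finsupp.toMultiset (mon fun m i => v i m) = Finsupp.toMultiset d := by
    rw [← hl, hv]
    simp [mon, Fin.sum_univ_four, Finsupp.toMultiset_single]
    rfl
  ext a
  rw [← Finsupp.count_toMultiset, key, Finsupp.count_toMultiset]

/-- Symmetry of an array under simultaneous permutation of the four factors in all slots. -/
def IsSym4 (τ : (Fin k → Fin 4 → Fin 2) → ℂ) : Prop :=
  ∀ (σ : Equiv.Perm (Fin 4)) x, τ (fun m => x m ∘ σ) = τ x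

/-- The quartic polynomial `u ↦ ∑ x, τ x * ∏ i, u (x · i)` attached to an array `τ`. -/
noncomputable def toPoly : ((Fin k → Fin 4 → Fin 2) → ℂ) →ₗ[ℂ] MvPolynomial (Fin k → Fin 2) ℂ where
  toFun τ := ∑ x, monomial (mon x) (τ x)
  map_add' a b := by simp [Finset.sum_add_distrib]
  map_smul' c a := by simp [Finset.smul_sum, smul_monomial]

theorem toPoly_apply (τ : (Fin k → Fin 4 → Fin 2) → ℂ) : toPoly τ = ∑ x, monomial (mon x) (τ x) := rfl

theorem eval_toPoly (τ : (Fin k → Fin 4 → Fin 2) → ℂ) (u) :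
    eval u (toPoly τ) = ∑ x, τ x * ∏ i, u (fun m => x m i) := by
  rw [toPoly_apply, map_sum]
  refine Finset.sum_congr rfl fun x _ => ?_
  rw [eval_monomial, mon, ← Finsupp.prod_finsetSum_index (by simp) (by simp [pow_add])]
  simp

theorem degree_mon (x : Fin k → Fin 4 → Fin 2) : (mon x).degree = 4 := by
  simp [mon, map_sum]

theorem toPoly_homog (τ : (Fin k → Fin 4 → Fin 2) → ℂ) : toPoly τ ∈ homogeneousSubmodule (Fin k → Fin 2) ℂ 4 := by
  rw [toPoly_apply]
  refine Submodule.sum_mem _ fun x _ => ?_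
  exact isHomogeneous_monomial _ (degree_mon x)

theorem coeff_toPoly (τ : (Fin k → Fin 4 → Fin 2) → ℂ) (d) :
    coeff d (toPoly τ) = ∑ x, if mon x = d then τ x else 0 := by
  rw [toPoly_apply, coeff_sum]
  simp [coeff_monomial]

theorem coeff_toPoly_mon {τ : (Fin k → Fin 4 → Fin 2) → ℂ} (h : IsSym4 τ) (y) :
    coeff (mon y) (toPoly τ) = (Finset.univ.filter fun x : Fin k → Fin 4 → Fin 2 => mon x = mon y).card * τ y := by
  rw [coeff_toPoly, ← Finset.sum_filter, ← nsmul_eq_mul]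
  refine Finset.sum_eq_card_nsmul fun x hx => ?_
  obtain ⟨σ, rfl⟩ := exists_perm_of_mon (Finset.mem_filter.1 hx).2
  exact (h σ x).symm

/-- The multinomial multiplicity of a monomial is nonzero in `ℂ`; this is where characteristic zero
enters the polarization of a quartic. -/
theorem card_fiber_ne (y : Fin k → Fin 4 → Fin 2) :
    ((Finset.univ.filter fun x : Fin k → Fin 4 → Fin 2 => mon x = mon y).card : ℂ) ≠ 0 := by
  rw [Nat.cast_ne_zero]
  exact Finset.card_ne_zero_of_mem (a := y) (by simp)

/-- A quartic polynomial has at most one symmetric array. -/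
theorem toPoly_inj {τ τ' : (Fin k → Fin 4 → Fin 2) → ℂ} (h : IsSym4 τ) (h' : IsSym4 τ')
    (e : toPoly τ = toPoly τ') : τ = τ' := by
  funext y
  have := congrArg (coeff (mon y)) e
  rw [coeff_toPoly_mon h, coeff_toPoly_mon h'] at this
  exact mul_left_cancel₀ (card_fiber_ne y) this

/-- Polarization: a quartic polynomial comes from a symmetric array. -/
theorem exists_toPoly (Q : MvPolynomial (Fin k → Fin 2) ℂ) (hQ : Q.IsHomogeneous 4) :
    ∃ τ : (Fin k → Fin 4 → Fin 2) → ℂ, IsSym4 τ ∧ toPoly τ = Q := by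
  let τ : (Fin k → Fin 4 → Fin 2) → ℂ := fun y =>
    coeff (mon y) Q / (Finset.univ.filter fun x : Fin k → Fin 4 → Fin 2 => mon x = mon y).card
  have hτ : IsSym4 τ := fun σ x => by simp only [τ, mon_perm]
  refine ⟨τ, hτ, ?_⟩
  ext d
  by_cases hd : d.degree = 4
  · obtain ⟨y, rfl⟩ := exists_mon d hd
    rw [coeff_toPoly_mon hτ]
    exact mul_div_cancel₀ _ (card_fiber_ne y)
  · rw [hQ.coeff_eq_zero hd, IsHomogeneous.coeff_eq_zero (toPoly_homog τ) hd]

/-- The action of `SL(2,ℂ)^k` on arrays dual to substituting `actTensor g u` for `u`. -/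
noncomputable def gact (g : Fin k → Matrix.SpecialLinearGroup (Fin 2) ℂ)
    (τ : (Fin k → Fin 4 → Fin 2) → ℂ) : (Fin k → Fin 4 → Fin 2) → ℂ :=
  fun y => ∑ x, τ x * ∏ m, ∏ i, (g m : Matrix (Fin 2) (Fin 2) ℂ) (x m i) (y m i)

theorem eval_actTensor (g : Fin k → Matrix.SpecialLinearGroup (Fin 2) ℂ)
    (τ : (Fin k → Fin 4 → Fin 2) → ℂ) (u) :
    eval (actTensor g u) (toPoly τ) = eval u (toPoly (gact g τ)) := by
  rw [eval_toPoly, eval_toPoly]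
  simp only [gact, actTensor, Finset.sum_mul]
  rw [Finset.sum_comm]
  refine Finset.sum_congr rfl fun x _ => ?_
  rw [← sum_prod_pi, Finset.mul_sum, ← (Equiv.piComm (fun (_ : Fin 4) (_ : Fin k) => Fin 2)).sum_comp]
  refine Finset.sum_congr rfl fun y _ => ?_
  rw [Finset.prod_mul_distrib, Finset.prod_comm, mul_assoc]
  rfl

theorem gact_sym (g : Fin k → Matrix.SpecialLinearGroup (Fin 2) ℂ)
    {τ : (Fin k → Fin 4 → Fin 2) → ℂ} (h : IsSym4 τ) : IsSym4 (gact g τ) := by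
  intro σ y
  unfold gact
  rw [← (Equiv.piCongrRight (fun _ : Fin k => Equiv.arrowCongr σ.symm (Equiv.refl (Fin 2)))).sum_comp]
  refine Finset.sum_congr rfl fun x _ => ?_
  have := h σ x
  congr 1
  refine Finset.prod_congr rfl fun m _ => ?_
  exact Equiv.prod_comp σ (fun i => (g m : Matrix (Fin 2) (Fin 2) ℂ) (x m i) (y m i))

theorem eval_perm (σ : Equiv.Perm (Fin k)) (τ : (Fin k → Fin 4 → Fin 2) → ℂ) (u : (Fin k → Fin 2) → ℂ) :
    eval (fun p => u (fun i => p (σ i))) (toPoly τ) = eval u (toPoly (fun x => τ (x ∘ σ.symm))) := by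
  rw [eval_toPoly, eval_toPoly, ← (Equiv.arrowCongr σ (Equiv.refl (Fin 4 → Fin 2))).sum_comp]
  refine Finset.sum_congr rfl fun x _ => ?_
  have e : (Equiv.arrowCongr σ (Equiv.refl (Fin 4 → Fin 2))) x = x ∘ σ.symm := rfl
  simp [Function.comp_def, e]


/-! ### Coordinates in the basis of invariants -/

/-- The conditions on coordinates `c` equivalent to the symmetry of `∑ s, c s • ⨂ w_{s m}` under `S_k`
(`perm`), under a transposition of `S_4` (`flip`) and under a 3-cycle of `S_4` (`rot`). -/
structure Good (c : (Fin k → Fin 2) → ℂ) : Prop where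
  perm : ∀ (σ : Equiv.Perm (Fin k)) s, c (s ∘ σ) = c s
  flip : ∀ s, c (fun m => (s m).rev) = c s
  rot : ∀ s, (∏ m, om ^ ((s m).val + 1)) * c s = c s

/-- The array `∑ s, c s • ⨂ m, w_{s m}` with coordinates `c`. -/
noncomputable def tens : ((Fin k → Fin 2) → ℂ) →ₗ[ℂ] ((Fin k → Fin 4 → Fin 2) → ℂ) where
  toFun c x := ∑ s, c s * ∏ m, wv (s m) (x m)
  map_add' a b := by funext x; simp [add_mul, Finset.sum_add_distrib]
  map_smul' r a := by funext x; simp [mul_assoc, Finset.mul_sum]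

theorem tens_apply (c : (Fin k → Fin 2) → ℂ) (x) :
    tens c x = ∑ s, c s * ∏ m, wv (s m) (x m) := rfl

/-- The coordinates of an array in the basis `⨂ m, w_{s m}`, computed with the dual basis of
`wv_pair`. -/
noncomputable def coord (τ : (Fin k → Fin 4 → Fin 2) → ℂ) (s : Fin k → Fin 2) : ℂ :=
  ∑ x, τ x * ∏ m, wv (s m).rev (x m) / 6

theorem coord_tens (c : (Fin k → Fin 2) → ℂ) : coord (tens c) = c := by
  funext s
  simp only [coord, tens_apply, Finset.sum_mul]
  rw [Finset.sum_comm, Finset.sum_eq_single s]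
  · simp_rw [mul_assoc, ← Finset.mul_sum, ← Finset.prod_mul_distrib]
    rw [sum_prod_pi (fun m r => wv (s m) r * (wv (s m).rev r / 6))]
    simp [← mul_div_assoc, ← Finset.sum_div, wv_pair]
  · intro t _ hts
    obtain ⟨m, hm⟩ := Function.ne_iff.1 hts
    simp_rw [mul_assoc, ← Finset.mul_sum, ← Finset.prod_mul_distrib]
    rw [sum_prod_pi (fun m r => wv (t m) r * (wv (s m).rev r / 6)),
      Finset.prod_eq_zero (Finset.mem_univ m), mul_zero]
    simp only [← mul_div_assoc, ← Finset.sum_div, wv_pair]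
    rw [if_neg (fun h => hm (Fin.rev_injective h).symm), zero_div]
  · simp

/-- An array fixed by `SL(2,ℂ)^k` lies in the span of the tensors `⨂ m, w_{s m}`. -/
theorem tens_coord (τ : (Fin k → Fin 4 → Fin 2) → ℂ) (hg : ∀ g, gact g τ = τ) : tens (coord τ) = τ := by
  funext y
  rw [proj_all (fun r a => ∑ j, wv j.rev r / 6 * wv j a) k τ _ y]
  · simp only [tens_apply, coord, Finset.sum_mul]
    rw [Finset.sum_comm]
    refine Finset.sum_congr rfl fun x _ => ?_
    simp_rw [mul_assoc, ← Finset.mul_sum, ← Finset.prod_mul_distrib]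
    rw [sum_prod_pi (fun m j => wv j.rev (x m) / 6 * wv j (y m))]
  · intro m y
    -- Acting by `h` in slot `m` alone, `τ` is invariant in that slot with the others frozen at `y`.
    have := proj_of_inv (fun r => τ (Function.update y m r)) (fun h a => by
      have e := congrFun (hg (Function.update 1 m h)) (Function.update y m a)
      rw [← e]
      unfold gact
      symm
      refine Fintype.sum_of_injective (fun r => Function.update y m r) (Function.update_injective y m) _ _ ?_ ?_
      · intro x hx
        obtain ⟨m', hm', hne⟩ : ∃ m', m' ≠ m ∧ x m' ≠ y m' := by
          by_contra! hcon
          refine hx ⟨x m, ?_⟩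
          funext m'
          by_cases hmm : m' = m
          · subst hmm; simp
          · simp [hmm, hcon m' hmm]
        obtain ⟨i, hi⟩ := Function.ne_iff.1 hne
        rw [Finset.prod_eq_zero (Finset.mem_univ m'), mul_zero]
        rw [Finset.prod_eq_zero (Finset.mem_univ i)]
        simp [hm', hi]
      · intro r
        congr 1
        rw [Finset.prod_eq_single m]
        · simp
        · intro m' _ hm'
          simp [hm']
        · simp) (y m)
    simpa using this

theorem gact_tens (g) (c : (Fin k → Fin 2) → ℂ) : gact g (tens c) = tens c := by
  funext y
  simp only [gact, tens_apply, Finset.sum_mul]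
  rw [Finset.sum_comm]
  refine Finset.sum_congr rfl fun s _ => ?_
  simp_rw [mul_assoc, ← Finset.mul_sum, ← Finset.prod_mul_distrib]
  rw [sum_prod_pi (fun m r => wv (s m) r * ∏ i, (g m : Matrix (Fin 2) (Fin 2) ℂ) (r i) (y m i))]
  simp_rw [wv_inv _ _ (g _).det_coe]

theorem tens_perm {c : (Fin k → Fin 2) → ℂ} (hc : Good c) (σ : Equiv.Perm (Fin k)) (x) :
    tens c (x ∘ σ) = tens c x := by
  rw [tens_apply, tens_apply, ← (Equiv.arrowCongr σ.symm (Equiv.refl (Fin 2))).sum_comp]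
  refine Finset.sum_congr rfl fun s _ => ?_
  have e : (Equiv.arrowCongr σ.symm (Equiv.refl (Fin 2))) s = s ∘ σ := rfl
  rw [e, hc.perm]
  congr 1
  exact Equiv.prod_comp σ (fun m => wv (s m) (x m))

/-- Since transpositions generate `S_4`, the conditions `flip` and `rot` make
`tens c` symmetric under all of `S_4`. -/
theorem tens_sym {c : (Fin k → Fin 2) → ℂ} (hc : Good c) : IsSym4 (tens c) := by
  intro σ
  induction σ using Equiv.Perm.swap_induction_on with
  | one => intro x; rfl
  | swap_mul f a b hab ih =>
    obtain ⟨e, he⟩ := wv_swap a b hab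
    have h1 : ∀ x, tens c (fun m => x m ∘ Equiv.swap a b) = tens c x := by
      intro x
      have hrot : ∀ s, (∏ m, (om ^ ((s m).val + 1)) ^ e) * c s = c s := by
        intro s
        rw [Finset.prod_pow]
        clear he
        induction e with
        | zero => simp
        | succ e ih => rw [pow_succ, mul_assoc, hc.rot, ih]
      rw [tens_apply, tens_apply, ← (Equiv.piCongrRight (fun _ : Fin k => Fin.revPerm (n := 2))).sum_comp (fun s => c s * ∏ m, wv (s m) (x m))]
      refine Finset.sum_congr rfl fun s _ => ?_
      simp only [he, Finset.prod_mul_distrib]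
      rw [← mul_assoc, mul_comm (c s), hrot]
      congr 1
      exact (hc.flip s).symm
    intro x
    exact (ih fun m => x m ∘ Equiv.swap a b).trans (h1 x)

theorem good_coord {τ : (Fin k → Fin 4 → Fin 2) → ℂ} (h4 : IsSym4 τ)
    (hk : ∀ (σ : Equiv.Perm (Fin k)) x, τ (x ∘ σ) = τ x) : Good (coord τ) := by
  have hflip : ∀ s, coord τ (fun m => (s m).rev) = coord τ s := by
    intro s
    unfold coord
    rw [← (Equiv.piCongrRight (fun _ : Fin k => Equiv.arrowCongr (Equiv.swap (2 : Fin 4) 3).symm (Equiv.refl (Fin 2)))).sum_comp]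
    refine Finset.sum_congr rfl fun x _ => ?_
    have e : (Equiv.piCongrRight (fun _ : Fin k => Equiv.arrowCongr (Equiv.swap (2 : Fin 4) 3).symm (Equiv.refl (Fin 2)))) x
      = fun m => x m ∘ (Equiv.swap (2 : Fin 4) 3) := rfl
    rw [e, h4]
    simp only [wv_swap23, Fin.rev_rev]
  have hrot : ∀ s, coord τ s = (∏ m, om ^ ((s m).rev.val + 1)) * coord τ (fun m => (s m).rev) := by
    intro s
    unfold coord
    rw [← (Equiv.piCongrRight (fun _ : Fin k => Equiv.arrowCongr (Equiv.swap (1 : Fin 4) 2).symm (Equiv.refl (Fin 2)))).sum_comp, Finset.mul_sum]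
    refine Finset.sum_congr rfl fun x _ => ?_
    have e : (Equiv.piCongrRight (fun _ : Fin k => Equiv.arrowCongr (Equiv.swap (1 : Fin 4) 2).symm (Equiv.refl (Fin 2)))) x
      = fun m => x m ∘ (Equiv.swap (1 : Fin 4) 2) := rfl
    rw [e, h4]
    simp only [wv_swap12, mul_div_assoc, Finset.prod_mul_distrib]
    ring
  refine ⟨?_, hflip, ?_⟩
  · intro σ s
    unfold coord
    rw [← (Equiv.arrowCongr σ.symm (Equiv.refl (Fin 4 → Fin 2))).sum_comp]
    refine Finset.sum_congr rfl fun x _ => ?_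
    have e : (Equiv.arrowCongr σ.symm (Equiv.refl (Fin 4 → Fin 2))) x = x ∘ σ := rfl
    rw [e, hk]
    congr 1
    exact Equiv.prod_comp σ (fun m => wv (s m).rev (x m) / 6)
  · intro s
    have := hrot (fun m => (s m).rev)
    simp only [Fin.rev_rev, hflip] at this
    exact this.symm

/-! ### Counting the free parameters -/

/-- The number of slots with `s m = 1`. -/
def wt (s : Fin k → Fin 2) : ℕ := ∑ m, (s m).val

/-- The claimed dimension `⌊k/6⌋ + r_k`. -/
def num (k : ℕ) : ℕ := k / 6 + (if k % 6 = 1 then 0 else 1)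

/-- The coordinates with prescribed values on the orbits of admissible weights: `wt s ≡ 2 k (mod 3)`, and
the orbit `{n, k - n}` with smaller element `n = (2 k mod 3) + 3 i` receives the value `d i`. -/
noncomputable def cOf (k : ℕ) : (Fin (num k) → ℂ) →ₗ[ℂ] ((Fin k → Fin 2) → ℂ) where
  toFun d s := if wt s % 3 = 2 * k % 3 then
    ∑ i : Fin (num k), if min (wt s) (k - wt s) / 3 = i then d i else 0 else 0
  map_add' a b := by
    funext s
    simp only [Pi.add_apply]
    split_ifs
    · rw [← Finset.sum_add_distrib]
      exact Finset.sum_congr rfl fun i _ => by split_ifs <;> simp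
    · simp
  map_smul' r a := by
    funext s
    simp only [Pi.smul_apply, smul_eq_mul, RingHom.id_apply, mul_ite, mul_zero, Finset.mul_sum]

theorem cOf_apply (d : Fin (num k) → ℂ) (s) : cOf k d s = if wt s % 3 = 2 * k % 3 then
    ∑ i : Fin (num k), if min (wt s) (k - wt s) / 3 = i then d i else 0 else 0 := rfl

theorem wt_rev_add (s : Fin k → Fin 2) : wt (fun m => (s m).rev) + wt s = k := by
  unfold wt
  rw [← Finset.sum_add_distrib, Finset.sum_congr rfl (g := fun _ => 1)]
  · simp
  · intro m _
    simp only
    match s m with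
    | 0 => rfl
    | 1 => rfl

theorem rot_prod (s : Fin k → Fin 2) : ∏ m, om ^ ((s m).val + 1) = om ^ (wt s + k) := by
  rw [Finset.prod_pow_eq_pow_sum, Finset.sum_add_distrib]
  simp [wt]

/-- The orbits of `S_k` on `Fin k → Fin 2` are the level sets of `wt`. -/
theorem exists_perm_of_wt {s t : Fin k → Fin 2} (h : wt s = wt t) :
    ∃ σ : Equiv.Perm (Fin k), t = s ∘ σ := by
  have h1 : ∀ s : Fin k → Fin 2, Fintype.card {i // s i = 1} = wt s := by
    intro s
    rw [Fintype.card_subtype, Finset.card_filter]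
    refine Finset.sum_congr rfl fun m _ => ?_
    match s m with
    | 0 => rfl
    | 1 => rfl
  have h0 : ∀ s : Fin k → Fin 2, Fintype.card {i // s i = 0} = wt (fun m => (s m).rev) := by
    intro s
    rw [Fintype.card_subtype, Finset.card_filter]
    refine Finset.sum_congr rfl fun m _ => ?_
    simp only
    match s m with
    | 0 => rfl
    | 1 => rfl
  refine exists_perm_of_card s t fun a => ?_
  have e1 := wt_rev_add s
  have e2 := wt_rev_add t
  fin_cases a
  · change Fintype.card {i // s i = 0} = Fintype.card {i // t i = 0}
    rw [h0, h0]; omega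
  · change Fintype.card {i // s i = 1} = Fintype.card {i // t i = 1}
    rw [h1, h1, h]

theorem good_cOf (d : Fin (num k) → ℂ) : Good (cOf k d) := by
  refine ⟨?_, ?_, ?_⟩
  · intro σ s
    have : wt (s ∘ σ) = wt s := Equiv.sum_comp σ (fun m => (s m).val)
    simp only [cOf_apply, this]
  · intro s
    have e := wt_rev_add s
    have e1 : k - wt s = wt (fun m => (s m).rev) := by omega
    have e2 : k - wt (fun m => (s m).rev) = wt s := by omega
    have e3 : wt (fun m => (s m).rev) % 3 = 2 * k % 3 ↔ wt s % 3 = 2 * k % 3 := by omega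
    simp only [cOf_apply, e1, e2, e3, min_comm]
  · intro s
    rw [cOf_apply]
    split_ifs with h
    · rw [rot_prod, (om_prim.pow_eq_one_iff_dvd _).2 (by omega), one_mul]
    · simp

/-- The representative of weight `a` (for `a ≤ k`) whose first `a` entries are `1`. -/
def stdv (k a : ℕ) : Fin k → Fin 2 := fun m => if m.val < a then 1 else 0

theorem wt_stdv {a : ℕ} (h : a ≤ k) : wt (stdv k a) = a := by
  have : wt (stdv k a) = ∑ m : Fin k, if m.val < a then 1 else 0 := by
    refine Finset.sum_congr rfl fun m _ => ?_
    unfold stdv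
    split_ifs <;> rfl
  rw [this, Finset.sum_boole]
  simp [Fin.card_filter_val_lt, h]

/-- The index `i` runs over the `n = (2 k mod 3) + 3 i` with `n ≤ k / 2`, so `num k` is their number. -/
theorem num_spec (i : ℕ) : i < num k ↔ 2 * (2 * k % 3 + 3 * i) ≤ k := by
  unfold num
  split_ifs <;> omega

theorem cOf_stdv (d : Fin (num k) → ℂ) (i : Fin (num k)) :
    cOf k d (stdv k (2 * k % 3 + 3 * i)) = d i := by
  have h := (num_spec (k := k) i).1 i.2
  rw [cOf_apply, wt_stdv (by omega), if_pos (by omega), min_eq_left (by omega)]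
  have : (2 * k % 3 + 3 * i.val) / 3 = i.val := by omega
  simp [this, Fin.val_inj]

theorem cOf_inj : Function.Injective (cOf k) := by
  intro d d' h
  funext i
  rw [← cOf_stdv d i, h, cOf_stdv]

/-- All coordinates satisfying `Good` arise from `cOf`. -/
theorem exists_cOf {c : (Fin k → Fin 2) → ℂ} (hc : Good c) : ∃ d, cOf k d = c := by
  have hwt : ∀ s t, wt s = wt t → c s = c t := by
    intro s t h
    obtain ⟨σ, rfl⟩ := exists_perm_of_wt h
    exact (hc.perm σ s).symm
  refine ⟨fun i => c (stdv k (2 * k % 3 + 3 * i)), ?_⟩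
  funext s
  rw [cOf_apply]
  have e := wt_rev_add s
  split_ifs with h
  · have hlt : min (wt s) (k - wt s) / 3 < num k := by
      rw [num_spec]
      rcases le_total (wt s) (k - wt s) with hl | hl
      · rw [min_eq_left hl]; omega
      · have : (k - wt s) % 3 = 2 * k % 3 := by omega
        rw [min_eq_right hl]; omega
    rw [Finset.sum_eq_single ⟨_, hlt⟩]
    · rw [if_pos rfl]
      have e1 : 2 * k % 3 + 3 * (min (wt s) (k - wt s) / 3) = min (wt s) (k - wt s) := by omega
      simp only [e1]
      rcases le_total (wt s) (k - wt s) with hl | hl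
      · rw [min_eq_left hl]
        exact hwt _ _ (wt_stdv (by omega))
      · rw [min_eq_right hl, ← hc.flip s]
        exact hwt _ _ (by rw [wt_stdv (by omega)]; omega)
    · intro i _ hi
      rw [if_neg]
      intro h'
      exact hi (Fin.ext h'.symm)
    · simp
  -- Outside the residue class `2 k`, `rot` multiplies `c s` by a nontrivial cube root of unity.
  · have hr := hc.rot s
    rw [rot_prod] at hr
    by_contra h0
    have := mul_right_cancel₀ (b := c s) (fun h => h0 h.symm) (hr.trans (one_mul _).symm)
    rw [om_prim.pow_eq_one_iff_dvd] at this
    omega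

/-! ### The isomorphism onto the invariant polynomials -/

theorem range_eq : LinearMap.range (toPoly ∘ₗ tens ∘ₗ cOf k) = skInvPolySpace k := by
  ext Q
  constructor
  · rintro ⟨d, rfl⟩
    have hc := good_cOf d
    refine ⟨toPoly_homog _, ?_, ?_⟩
    · intro g u
      change eval _ (toPoly (tens (cOf k d))) = eval _ (toPoly (tens (cOf k d)))
      rw [eval_actTensor, gact_tens]
    · intro σ u
      change eval _ (toPoly (tens (cOf k d))) = eval _ (toPoly (tens (cOf k d)))
      rw [eval_perm]
      simp only [tens_perm hc]
  · rintro ⟨hQ, hg, hσ⟩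
    obtain ⟨τ, h4, rfl⟩ := exists_toPoly Q hQ
    have hg' : ∀ g, gact g τ = τ := by
      intro g
      refine toPoly_inj (gact_sym g h4) h4 (MvPolynomial.funext fun u => ?_)
      rw [← eval_actTensor, hg]
    have hσ' : ∀ (σ : Equiv.Perm (Fin k)) x, τ (x ∘ σ) = τ x := by
      intro σ
      refine congrFun (toPoly_inj (τ := fun x => τ (x ∘ σ)) (fun π x => ?_) h4 (MvPolynomial.funext fun u => ?_))
      · exact h4 π (x ∘ σ)
      · rw [← hσ σ.symm u, eval_perm]
        rfl
    obtain ⟨d, hd⟩ := exists_cOf (good_coord h4 hσ')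
    exact ⟨d, by simp [hd, tens_coord τ hg']⟩

end

/-- For `k ≥ 1`, the dimension of the space of `(S_k ⋉ G)`-invariant homogeneous degree-4
polynomial functions on tensor states in `(ℂ^2)^{⊗k}` equals `⌊k/6⌋ + r_k`, where
`r_k = 0` if `k ≡ 1 (mod 6)` and `r_k = 1` otherwise. -/
theorem stmt13 (k : ℕ) (hk : 1 ≤ k) :
    Module.finrank ℂ (skInvPolySpace k) = k / 6 + (if k % 6 = 1 then 0 else 1) := by
  have inj : Function.Injective (toPoly ∘ₗ tens ∘ₗ cOf k) := by
    intro d d' h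
    have h1 := toPoly_inj (tens_sym (good_cOf d)) (tens_sym (good_cOf d')) h
    have h2 := congrArg coord h1
    rw [coord_tens, coord_tens] at h2
    exact cOf_inj h2
  rw [← range_eq, LinearMap.finrank_range_of_inj inj, Module.finrank_fin_fun, num]
end

section
/- For every integer k ≥ 1, the complex dimension of the space of homogeneous degree-4 polynomial functions on tensor states in (ℂ^2)^{⊗k} which are invariant both under G = SL(2,ℂ)^k and under the permutation action of S_k equals the number of pairs (a,b) of nonnegative integers with 2a + 3b = k. -/
/-! A quartic form on `V^{⊗k}`, `V = ℂ²`, is the same as a symmetric 4-linear tensor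
(`exists_sym4`, `Sym4.toPoly_injOn`), that is, an `S_4`-invariant element of `(V^{⊗4})^{⊗k}`.
Invariance under `SL(2)^k` says that every slot lies in the space `W` of `SL(2)`-invariants of
`V^{⊗4}`, which is two-dimensional (`slKer_w`, `slot_reconstruct`). With `ω` a primitive cube root
of unity, `W` has a basis `w_+, w_-` on which `S_4` acts through `S_3`: 3-cycles act by `ω^{±1}`,
transpositions exchange `w_+` and `w_-` up to such factors.

Hence an invariant form is a combination of words of length `k` in `w_±` whose coefficients depend
only on the numbers `i, j` of the two letters (invariance under `S_k`), are unchanged when `i` and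
`j` are exchanged (transpositions), and vanish unless `i ≡ j` mod 3 (3-cycles); see
`mem_iff_exists_good`. The unordered pairs `{i, j}` with `i + j = k` and `i ≡ j` mod 3 are exactly
the `{a, a + 3 b}` with `2 a + 3 b = k`, so these coefficients are the same as arbitrary functions
of the pairs `(a, b)` (`expand_injective`, `Good.exists_expand`). -/

open MvPolynomial

namespace TensorInv

/-! ### Quartic forms and symmetric tensors -/

/-- Component indices `M` of a tensor in `(V^{⊗4})^{⊗k}` with `V = ℂ²`: `M m j` is the index of
the `j`-th copy of `V` in the `m`-th slot. Reading `M` by rows instead, it lists the four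
coordinates `row M j` of a degree-4 monomial. -/
abbrev Idx (k : ℕ) := Fin k → Fin 4 → Fin 2

/-- The `j`-th of the four coordinate labels of tensor states encoded by `M`. -/
def row {k : ℕ} (M : Idx k) (j : Fin 4) : Fin k → Fin 2 := fun m => M m j

/-- The quartic form `u ↦ ∑ T_M ∏_j u^{row M j}` attached to a 4-linear tensor `T`. -/
noncomputable def toPoly {k : ℕ} : (Idx k → ℂ) →ₗ[ℂ] MvPolynomial (Fin k → Fin 2) ℂ where
  toFun T := ∑ M, T M • ∏ j, X (row M j)
  map_add' T T' := by simp [add_smul, Finset.sum_add_distrib]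
  map_smul' c T := by simp [mul_smul, Finset.smul_sum]

/-- Symmetry of `T` under permutation of its four tensor arguments. -/
def Sym4 {k : ℕ} (T : Idx k → ℂ) : Prop :=
  ∀ (σ : Equiv.Perm (Fin 4)) (M : Idx k), T (fun m => M m ∘ σ) = T M

theorem eval_toPoly {k : ℕ} (T : Idx k → ℂ) (u : (Fin k → Fin 2) → ℂ) :
    eval u (toPoly T) = ∑ M, T M * ∏ j, u (row M j) := by
  simp [toPoly, smul_eval]

/-- The exponent vector of the monomial `∏_j X (row M j)`. -/
noncomputable def mon {k : ℕ} (M : Idx k) : (Fin k → Fin 2) →₀ ℕ :=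
  ∑ j, Finsupp.single (row M j) 1

theorem coeff_toPoly {k : ℕ} (T : Idx k → ℂ) (n : (Fin k → Fin 2) →₀ ℕ) :
    coeff n (toPoly T) = ∑ M with mon M = n, T M := by
  have h : ∀ M : Idx k, (∏ j, X (row M j) : MvPolynomial (Fin k → Fin 2) ℂ)
      = monomial (mon M) 1 := by
    intro M
    simp [mon, monomial_sum_one, X]
  simp only [toPoly, LinearMap.coe_mk, AddHom.coe_mk, h, coeff_sum, coeff_smul, coeff_monomial,
    Finset.sum_filter, smul_eq_mul, mul_ite, mul_one, mul_zero]

theorem exists_perm_of_card_fiber {n : ℕ} {α : Type*} [DecidableEq α] (P P' : Fin n → α)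
    (h : ∀ a, Finset.card {j | P j = a} = Finset.card {j | P' j = a}) :
    ∃ σ : Equiv.Perm (Fin n), P' = P ∘ σ := by
  have e : ∀ a, Nonempty ({j // P' j = a} ≃ {j // P j = a}) := by
    intro a
    refine ⟨Fintype.equivOfCardEq ?_⟩
    rw [Fintype.card_subtype, Fintype.card_subtype, h a]
  replace e := fun a => (e a).some
  refine ⟨(Equiv.sigmaFiberEquiv P').symm.trans
    ((Equiv.sigmaCongrRight e).trans (Equiv.sigmaFiberEquiv P)), ?_⟩
  funext j
  exact ((e (P' j)) ⟨j, rfl⟩).2.symm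

theorem mon_apply {k : ℕ} (M : Idx k) (p : Fin k → Fin 2) :
    mon M p = Finset.card {j | row M j = p} := by
  simp [mon, Finsupp.finsetSum_apply, Finsupp.single_apply]

theorem Sym4.eq_of_mon_eq {k : ℕ} {T : Idx k → ℂ} (hT : Sym4 T) {M N : Idx k}
    (h : mon M = mon N) : T M = T N := by
  obtain ⟨σ, hσ⟩ := exists_perm_of_card_fiber (row N) (row M) (fun p => by
    rw [← mon_apply, ← mon_apply, h])
  have : M = fun m => N m ∘ σ := by
    funext m j
    exact congrFun (congrFun hσ j) m
  rw [this, hT]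

/-- A symmetric tensor is determined by its quartic form: the coefficient at the monomial of `M` is
`T M` times the (nonzero) number of indices giving that monomial. -/
theorem Sym4.toPoly_injOn {k : ℕ} {T T' : Idx k → ℂ} (hT : Sym4 T) (hT' : Sym4 T')
    (h : toPoly T = toPoly T') : T = T' := by
  funext M
  have key : ∀ S : Idx k → ℂ, Sym4 S → coeff (mon M) (toPoly S)
      = (Finset.card {N : Idx k | mon N = mon M} : ℂ) * S M := by
    intro S hS
    rw [coeff_toPoly, Finset.sum_congr rfl (g := fun _ => S M), Finset.sum_const, nsmul_eq_mul]
    intro N hN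
    exact hS.eq_of_mon_eq (by simpa using hN)
  have h1 := key T hT
  rw [h, key T' hT'] at h1
  have h2 : (Finset.card {N : Idx k | mon N = mon M} : ℂ) ≠ 0 := by
    exact_mod_cast (Finset.card_pos.2 ⟨M, by simp⟩).ne'
  exact (mul_left_cancel₀ h2 h1).symm

theorem exists_mon_eq {k : ℕ} (n : (Fin k → Fin 2) →₀ ℕ) (hn : n.degree = 4) :
    ∃ M : Idx k, mon M = n := by
  have hl : n.toMultiset.toList.length = 4 := by
    rw [Multiset.length_toList, Finsupp.card_toMultiset, ← hn]; rfl
  refine ⟨fun m j => n.toMultiset.toList.get (j.cast hl.symm) m, ?_⟩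
  apply Function.LeftInverse.injective Finsupp.toMultiset_toFinsupp
  rw [mon, map_sum]
  simp only [Finsupp.toMultiset_single, one_smul]
  have : ∀ l : List (Fin k → Fin 2), ∀ h : l.length = 4,
      ∑ j : Fin 4, ({l.get (j.cast h.symm)} : Multiset _) = (l : Multiset _) := by
    intro l h
    match l, h with
    | [a, b, c, d], _ => simp [Fin.sum_univ_four]; rfl
  exact (this _ hl).trans (Multiset.coe_toList _)

/-- Every quartic form comes from a symmetric tensor (polarization). -/
theorem exists_sym4 {k : ℕ} (Q : MvPolynomial (Fin k → Fin 2) ℂ) (hQ : Q.IsHomogeneous 4) :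
    ∃ T : Idx k → ℂ, Sym4 T ∧ toPoly T = Q := by
  refine ⟨fun M => coeff (mon M) Q / (Finset.card {N : Idx k | mon N = mon M} : ℂ), ?_, ?_⟩
  · intro σ M
    have : mon (fun m => M m ∘ σ) = mon M := by
      exact Equiv.sum_comp σ (fun j => Finsupp.single (row M j) 1)
    simp only [this]
  · ext n
    rw [coeff_toPoly]
    by_cases h : ∃ M : Idx k, mon M = n
    · rw [Finset.sum_congr rfl (g := fun _ =>
        coeff n Q / (Finset.card {N : Idx k | mon N = n} : ℂ)), Finset.sum_const, nsmul_eq_mul]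
      · obtain ⟨M, hM⟩ := h
        have h2 : (Finset.card {N : Idx k | mon N = n} : ℂ) ≠ 0 := by
          exact_mod_cast (Finset.card_pos.2 ⟨M, by simpa using hM⟩).ne'
        field_simp
      · intro M hM
        rw [Finset.mem_filter] at hM
        simp only [hM.2]
    · rw [hQ.coeff_eq_zero (fun hn => h (exists_mon_eq n hn)), Finset.sum_eq_zero]
      intro M hM
      exact absurd ⟨M, by simpa using hM⟩ h

theorem isHomogeneous_toPoly {k : ℕ} (T : Idx k → ℂ) : (toPoly T).IsHomogeneous 4 := by
  refine (homogeneousSubmodule _ ℂ 4).sum_mem fun M _ => Submodule.smul_mem _ _ ?_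
  have := IsHomogeneous.prod Finset.univ (fun j => X (R := ℂ) (row M j)) (fun _ => 1)
    (fun j _ => isHomogeneous_X _ _)
  simpa using this

/-- The operator `⨂_m K_m` on `(V^{⊗4})^{⊗k}`, in components. -/
noncomputable def kerAct {k : ℕ} (K : Fin k → (Fin 4 → Fin 2) → (Fin 4 → Fin 2) → ℂ)
    (T : Idx k → ℂ) : Idx k → ℂ := fun M => ∑ N : Idx k, (∏ m, K m (M m) (N m)) * T N

/-- Matrix entries of `gᵀ ⊗ gᵀ ⊗ gᵀ ⊗ gᵀ` on `V^{⊗4}`; the transpose appears because `g` acts on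
the argument of the quartic form. -/
def slKer (g : Matrix.SpecialLinearGroup (Fin 2) ℂ) (q q' : Fin 4 → Fin 2) : ℂ :=
  ∏ j, (g : Matrix (Fin 2) (Fin 2) ℂ) (q' j) (q j)

theorem eval_actTensor {k : ℕ} (g : Fin k → Matrix.SpecialLinearGroup (Fin 2) ℂ) (T : Idx k → ℂ)
    (u : (Fin k → Fin 2) → ℂ) :
    eval (actTensor g u) (toPoly T) = eval u (toPoly (kerAct (fun m => slKer (g m)) T)) := by
  simp only [eval_toPoly, kerAct, actTensor, Finset.prod_univ_sum, Fintype.piFinset_univ,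
    Finset.sum_mul, Finset.mul_sum]
  rw [Finset.sum_comm]
  rw [← (Equiv.piComm (fun (_ : Fin k) (_ : Fin 4) => Fin 2)).sum_comp]
  refine Finset.sum_congr rfl fun M _ => Finset.sum_congr rfl fun N _ => ?_
  rw [Finset.prod_mul_distrib, Finset.prod_comm]
  simp only [slKer, row, Equiv.piComm_apply, Function.swap]
  ring!

theorem Sym4.kerAct_slKer {k : ℕ} (g : Fin k → Matrix.SpecialLinearGroup (Fin 2) ℂ)
    {T : Idx k → ℂ} (hT : Sym4 T) : Sym4 (kerAct (fun m => slKer (g m)) T) := by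
  intro σ M
  unfold kerAct
  rw [← (Equiv.arrowCongr (Equiv.refl (Fin k)) (Equiv.arrowCongr σ.symm (Equiv.refl (Fin 2)))).sum_comp]
  refine Finset.sum_congr rfl fun N _ => ?_
  congr 1
  · refine Finset.prod_congr rfl fun m _ => ?_
    simp only [slKer]
    exact Equiv.prod_comp σ (fun j => (g m : Matrix (Fin 2) (Fin 2) ℂ) (N m j) (M m j))
  · exact hT σ N

theorem eval_perm {k : ℕ} (σ : Equiv.Perm (Fin k)) (T : Idx k → ℂ)
    (u : (Fin k → Fin 2) → ℂ) :
    eval (fun p => u (fun i => p (σ i))) (toPoly T)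
      = eval u (toPoly (fun M => T (M ∘ σ.symm))) := by
  simp only [eval_toPoly]
  rw [← (Equiv.arrowCongr σ.symm (Equiv.refl (Fin 4 → Fin 2))).sum_comp
    (fun M => T (M ∘ σ.symm) * ∏ j, u (row M j))]
  refine Finset.sum_congr rfl fun M _ => ?_
  congr 2
  funext i
  simp

/-- Invariance of a quartic form, as a condition on its symmetric tensor; uniqueness of that tensor
turns equalities of polynomial functions into equalities of tensors. -/
theorem mem_iff {k : ℕ} {T : Idx k → ℂ} (hT : Sym4 T) :
    toPoly T ∈ skInvPolySpace k ↔
      (∀ g : Fin k → Matrix.SpecialLinearGroup (Fin 2) ℂ, kerAct (fun m => slKer (g m)) T = T) ∧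
      ∀ (σ : Equiv.Perm (Fin k)) (M : Idx k), T (M ∘ σ) = T M := by
  constructor
  · rintro ⟨-, h1, h2⟩
    refine ⟨fun g => ?_, fun σ M => ?_⟩
    · refine (hT.kerAct_slKer g).toPoly_injOn hT (MvPolynomial.funext fun u => ?_)
      rw [← eval_actTensor, h1]
    · have : (fun M : Idx k => T (M ∘ σ)) = T := by
        refine Sym4.toPoly_injOn (fun τ M => hT τ (M ∘ σ)) hT (MvPolynomial.funext fun u => ?_)
        have := eval_perm σ.symm T u
        rw [Equiv.symm_symm] at this
        rw [← this, h2]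
      exact congrFun this M
  · rintro ⟨h1, h2⟩
    refine ⟨isHomogeneous_toPoly T, fun g u => ?_, fun σ u => ?_⟩
    · rw [eval_actTensor, h1]
    · rw [eval_perm]
      simp only [h2]

/-! ### The SL(2)-invariants of four qubits -/

theorem sum_fun_fin4 (F : (Fin 4 → Fin 2) → ℂ) :
    ∑ q, F q = ∑ a, ∑ b, ∑ c, ∑ d, F ![a, b, c, d] := by
  have h : ∀ (n : ℕ) (G : (Fin (n + 1) → Fin 2) → ℂ),
      ∑ q, G q = ∑ a, ∑ q : Fin n → Fin 2, G (Matrix.vecCons a q) := by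
    intro n G
    rw [← (Fin.consEquiv (fun _ : Fin (n + 1) => Fin 2)).sum_comp, Fintype.sum_prod_type]
    rfl
  simp only [h, Fintype.sum_unique]
  refine Finset.sum_congr rfl fun a _ => Finset.sum_congr rfl fun b _ =>
    Finset.sum_congr rfl fun c _ => Finset.sum_congr rfl fun d _ => ?_
  congr 5

theorem forall_fun_fin4 {P : (Fin 4 → Fin 2) → Prop} (h : ∀ a b c d, P ![a, b, c, d])
    (q : Fin 4 → Fin 2) : P q := by
  have : q = ![q 0, q 1, q 2, q 3] := by
    funext i; fin_cases i <;> rfl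
  rw [this]; exact h _ _ _ _

/-- The two primitive cube roots of unity, `ω` and its conjugate `ω ^ 2`. -/
def z (ω : ℂ) (s : Bool) : ℂ := if s then ω else ω ^ 2

/-- The basis `w_±` of the `SL(2)`-invariants in `V^{⊗4}`: on an index with two zeros and two ones
the value is `1`, `ω^{±1}` or `ω^{∓1}` according to the pairing of the four positions, and
elsewhere it is `0`. The 3-cycles of `S_4` act on `w_±` by cube roots of unity. -/
def w (ω : ℂ) (s : Bool) (q : Fin 4 → Fin 2) : ℂ :=
  if q 0 = q 1 ∧ q 2 = q 3 ∧ q 0 ≠ q 2 then 1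
  else if q 0 = q 2 ∧ q 1 = q 3 ∧ q 0 ≠ q 1 then z ω s
  else if q 0 = q 3 ∧ q 1 = q 2 ∧ q 0 ≠ q 1 then z ω (!s)
  else 0

variable {ω : ℂ}

theorem w_swap_zero (s : Bool) (q : Fin 4 → Fin 2) :
    w ω s (q ∘ Equiv.swap 0 1) = w ω (!s) q := by
  revert q
  refine forall_fun_fin4 fun a b c d => ?_
  have h0 : (Equiv.swap 0 1 : Equiv.Perm (Fin 4)) 0 = 1 := by decide
  have h1 : (Equiv.swap 0 1 : Equiv.Perm (Fin 4)) 1 = 0 := by decide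
  have h2 : (Equiv.swap 0 1 : Equiv.Perm (Fin 4)) 2 = 2 := by decide
  have h3 : (Equiv.swap 0 1 : Equiv.Perm (Fin 4)) 3 = 3 := by decide
  simp only [w, Function.comp_apply, h0, h1, h2, h3]
  fin_cases a <;> fin_cases b <;> fin_cases c <;> fin_cases d <;> simp

theorem w_swap_two (s : Bool) (q : Fin 4 → Fin 2) :
    w ω s (q ∘ Equiv.swap 2 3) = w ω (!s) q := by
  revert q
  refine forall_fun_fin4 fun a b c d => ?_
  have h0 : (Equiv.swap 2 3 : Equiv.Perm (Fin 4)) 0 = 0 := by decide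
  have h1 : (Equiv.swap 2 3 : Equiv.Perm (Fin 4)) 1 = 1 := by decide
  have h2 : (Equiv.swap 2 3 : Equiv.Perm (Fin 4)) 2 = 3 := by decide
  have h3 : (Equiv.swap 2 3 : Equiv.Perm (Fin 4)) 3 = 2 := by decide
  simp only [w, Function.comp_apply, h0, h1, h2, h3]
  fin_cases a <;> fin_cases b <;> fin_cases c <;> fin_cases d <;> simp

theorem cube_eq_one (hω : ω ^ 2 + ω + 1 = 0) : ω ^ 3 = 1 := by
  linear_combination (ω - 1) * hω

theorem w_swap_one (hω : ω ^ 2 + ω + 1 = 0) (s : Bool) (q : Fin 4 → Fin 2) :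
    w ω s (q ∘ Equiv.swap 1 2) = z ω s * w ω (!s) q := by
  revert q
  refine forall_fun_fin4 fun a b c d => ?_
  have h0 : (Equiv.swap 1 2 : Equiv.Perm (Fin 4)) 0 = 0 := by decide
  have h1 : (Equiv.swap 1 2 : Equiv.Perm (Fin 4)) 1 = 2 := by decide
  have h2 : (Equiv.swap 1 2 : Equiv.Perm (Fin 4)) 2 = 1 := by decide
  have h3 : (Equiv.swap 1 2 : Equiv.Perm (Fin 4)) 3 = 3 := by decide
  have hz1 : z ω s * z ω (!s) = 1 := by
    cases s <;> simp [z] <;> linear_combination cube_eq_one hω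
  have hz2 : z ω s * z ω s = z ω (!s) := by
    cases s
    · simp only [z]; simp; linear_combination ω * cube_eq_one hω
    · simp only [z]; simp; ring
  simp only [w, Function.comp_apply, h0, h1, h2, h3]
  fin_cases a <;> fin_cases b <;> fin_cases c <;> fin_cases d <;> simp [hz1, hz2]

/-- The basis dual to `w_±` is `w_∓ / 6`. -/
theorem sum_w_mul_w (hω : ω ^ 2 + ω + 1 = 0) (s s' : Bool) :
    ∑ q, w ω (!s) q * w ω s' q = if s = s' then 6 else 0 := by
  rw [sum_fun_fin4]
  cases s <;> cases s' <;> simp [w, z, Fin.sum_univ_two]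
  · linear_combination 4 * cube_eq_one hω
  · linear_combination 2 * (ω ^ 2 - ω + 1) * hω
  · linear_combination 2 * (ω ^ 2 - ω + 1) * hω
  · linear_combination 4 * cube_eq_one hω

/-- The vectors `w_±` are `SL(2)`-invariant. -/
theorem slKer_w (hω : ω ^ 2 + ω + 1 = 0) (g : Matrix.SpecialLinearGroup (Fin 2) ℂ) (s : Bool)
    (q : Fin 4 → Fin 2) : ∑ q', slKer g q q' * w ω s q' = w ω s q := by
  have hg : (g : Matrix (Fin 2) (Fin 2) ℂ) 0 0 * (g : Matrix (Fin 2) (Fin 2) ℂ) 1 1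
    - (g : Matrix (Fin 2) (Fin 2) ℂ) 0 1 * (g : Matrix (Fin 2) (Fin 2) ℂ) 1 0 = 1 := by
    rw [← Matrix.det_fin_two]; exact g.2
  have hz : z ω (!s) = - 1 - z ω s := by
    cases s <;> simp [z] <;> linear_combination hω
  revert q
  refine forall_fun_fin4 fun a b c d => ?_
  rw [sum_fun_fin4]
  simp only [slKer, w, Fin.sum_univ_two, Fin.prod_univ_four, hz]
  generalize z ω s = y
  have key : ∀ t : ℂ,
      ((g : Matrix (Fin 2) (Fin 2) ℂ) 0 0 * (g : Matrix (Fin 2) (Fin 2) ℂ) 1 1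
        - (g : Matrix (Fin 2) (Fin 2) ℂ) 0 1 * (g : Matrix (Fin 2) (Fin 2) ℂ) 1 0) ^ 2 * t = t := by
    intro t; rw [hg]; ring
  refine Eq.trans ?_ (key _)
  clear key hg
  fin_cases a <;> fin_cases b <;> fin_cases c <;> fin_cases d <;> simp <;> ring

/-- An `SL(2)`-invariant `f` in `V^{⊗4}` lies in the span of `w_±`. Invariance under the diagonal
torus kills all components with unequal numbers of zeros and ones; invariance under the unipotent
matrix says that, for each position, the three components having their zero there and one other
zero sum to zero. -/
theorem slot_reconstruct (hω : ω ^ 2 + ω + 1 = 0) (f : (Fin 4 → Fin 2) → ℂ)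
    (hf : ∀ (g : Matrix.SpecialLinearGroup (Fin 2) ℂ) q, ∑ q', slKer g q q' * f q' = f q)
    (q : Fin 4 → Fin 2) :
    ∑ q', (∑ s, w ω s q * w ω (!s) q' / 6) * f q' = f q := by
  have htor := hf ⟨!![2, 0; 0, 2⁻¹], by simp [Matrix.det_fin_two]⟩
  have huni := hf ⟨!![1, 1; 0, 1], by simp [Matrix.det_fin_two]⟩
  simp only [sum_fun_fin4, slKer, Fin.sum_univ_two, Fin.prod_univ_four] at htor huni
  have t0 := htor ![0, 0, 0, 0]
  have t1 := htor ![0, 0, 0, 1]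
  have t2 := htor ![0, 0, 1, 0]
  have t3 := htor ![0, 1, 0, 0]
  have t4 := htor ![1, 0, 0, 0]
  have t5 := htor ![0, 1, 1, 1]
  have t6 := htor ![1, 0, 1, 1]
  have t7 := htor ![1, 1, 0, 1]
  have t8 := htor ![1, 1, 1, 0]
  have t9 := htor ![1, 1, 1, 1]
  have u5 := huni ![0, 1, 1, 1]
  have u6 := huni ![1, 0, 1, 1]
  have u7 := huni ![1, 1, 0, 1]
  have u8 := huni ![1, 1, 1, 0]
  clear htor huni hf
  simp at t0 t1 t2 t3 t4 t5 t6 t7 t8 t9 u5 u6 u7 u8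
  replace t0 : f ![0, 0, 0, 0] = 0 := by linear_combination t0 / 15
  replace t1 : f ![0, 0, 0, 1] = 0 := by linear_combination t1 / 3
  replace t2 : f ![0, 0, 1, 0] = 0 := by linear_combination t2 / 3
  replace t3 : f ![0, 1, 0, 0] = 0 := by linear_combination t3 / 3
  replace t4 : f ![1, 0, 0, 0] = 0 := by linear_combination t4 / 3
  replace t5 : f ![0, 1, 1, 1] = 0 := by linear_combination -4 / 3 * t5
  replace t6 : f ![1, 0, 1, 1] = 0 := by linear_combination -4 / 3 * t6
  replace t7 : f ![1, 1, 0, 1] = 0 := by linear_combination -4 / 3 * t7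
  replace t8 : f ![1, 1, 1, 0] = 0 := by linear_combination -4 / 3 * t8
  replace t9 : f ![1, 1, 1, 1] = 0 := by linear_combination -16 / 15 * t9
  simp only [t0, t1, t2, t3, t4, t5, t6, t7, t8, zero_add, add_zero] at u5 u6 u7 u8
  -- The four star relations give equality of complementary components and one linear relation.
  have v0 : f ![1, 1, 0, 0] = f ![0, 0, 1, 1] := by
    linear_combination (u7 + u8 - u5 - u6) / 2
  have v1 : f ![1, 0, 1, 0] = f ![0, 1, 0, 1] := by
    linear_combination (u6 + u8 - u5 - u7) / 2
  have v2 : f ![1, 0, 0, 1] = f ![0, 1, 1, 0] := by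
    linear_combination (u6 + u7 - u5 - u8) / 2
  have v3 : f ![0, 1, 1, 0] = - f ![0, 0, 1, 1] - f ![0, 1, 0, 1] := by
    linear_combination u5
  clear u5 u6 u7 u8
  have hz : z ω false = - 1 - z ω true := by
    simp [z]; linear_combination hω
  have hz2 : z ω true ^ 2 = - 1 - z ω true := by
    simp [z]; linear_combination hω
  revert q
  refine forall_fun_fin4 fun a b c d => ?_
  rw [sum_fun_fin4]
  simp only [w, Fin.sum_univ_two, Fintype.sum_bool, Bool.not_true, Bool.not_false, hz]
  generalize z ω true = y at *
  fin_cases a <;> fin_cases b <;> fin_cases c <;> fin_cases d <;>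
    simp [t0, t1, t2, t3, t4, t5, t6, t7, t8, t9, v0, v1, v2, v3] <;> grind

/-- If `K` is the identity in every slot but `m`, then `⨂ K_i` acts in the slot `m` only. -/
theorem kerAct_single {k : ℕ} (m : Fin k)
    (K : Fin k → (Fin 4 → Fin 2) → (Fin 4 → Fin 2) → ℂ)
    (hK : ∀ i, i ≠ m → ∀ q q', K i q q' = if q' = q then 1 else 0) (T : Idx k → ℂ) (M : Idx k) :
    kerAct K T M = ∑ q, K m (M m) q * T (Function.update M m q) := by
  symm
  refine Finset.sum_of_injOn (fun q => Function.update M m q)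
    ((Function.update_injective M m).injOn) (by simp) ?_ ?_
  · intro N _ hN
    have : ∃ i, i ≠ m ∧ N i ≠ M i := by
      by_contra! h
      refine hN ⟨N m, by simp, ?_⟩
      funext i
      by_cases hi : i = m
      · subst hi; simp
      · simp [hi, h i hi]
    obtain ⟨i, hi, hNi⟩ := this
    rw [Finset.prod_eq_zero (Finset.mem_univ i), zero_mul]
    simp [hK i hi, hNi]
  · intro q _
    rw [Finset.prod_eq_single m]
    · simp
    · intro i _ hi
      simp [hK i hi, hi]
    · simp

theorem slKer_one (q q' : Fin 4 → Fin 2) : slKer 1 q q' = if q' = q then 1 else 0 := by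
  simp only [slKer, Matrix.SpecialLinearGroup.coe_one, Matrix.one_apply, Finset.prod_ite_zero]
  simp [funext_iff]

theorem slot_invariant {k : ℕ} {T : Idx k → ℂ}
    (hT : ∀ g : Fin k → Matrix.SpecialLinearGroup (Fin 2) ℂ, kerAct (fun m => slKer (g m)) T = T)
    (m : Fin k) (M : Idx k) (g : Matrix.SpecialLinearGroup (Fin 2) ℂ) (q : Fin 4 → Fin 2) :
    ∑ q', slKer g q q' * T (Function.update M m q') = T (Function.update M m q) := by
  have := congrFun (hT (Function.update 1 m g)) (Function.update M m q)
  rw [kerAct_single m] at this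
  · simpa using this
  · intro i hi q q'
    simp [hi, slKer_one]

/-- A tensor fixed by `K` in each slot separately is fixed by `K^{⊗k}`. -/
theorem kerAct_of_slot {k : ℕ} (K : (Fin 4 → Fin 2) → (Fin 4 → Fin 2) → ℂ) (T : Idx k → ℂ)
    (h : ∀ m M, ∑ q, K (M m) q * T (Function.update M m q) = T M) :
    kerAct (fun _ => K) T = T := by
  induction k with
  | zero =>
    funext M
    simp only [kerAct, Finset.univ_eq_empty, Finset.prod_empty, one_mul, Fintype.sum_unique]
    exact congrArg T (Subsingleton.elim _ _)
  | succ k ih =>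
    funext M
    unfold kerAct
    rw [← (Fin.consEquiv (fun _ : Fin (k + 1) => Fin 4 → Fin 2)).sum_comp,
      Fintype.sum_prod_type]
    have h1 : ∀ q, ∑ N : Idx k, (∏ m : Fin k, K (M m.succ) (N m)) * T (Fin.cons q N)
        = T (Fin.cons q (Fin.tail M)) := by
      intro q
      refine congrFun (ih (fun N => T (Fin.cons q N)) ?_) (Fin.tail M)
      intro m N
      have := h m.succ (Fin.cons q N)
      simpa [Fin.cons_update] using this
    have h0 := h 0 M
    rw [← h0]
    refine Finset.sum_congr rfl fun q _ => ?_
    rw [← Fin.cons_self_tail M, Fin.update_cons_zero, Fin.cons_self_tail, ← h1 q, Finset.mul_sum]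
    refine Finset.sum_congr rfl fun N _ => ?_
    simp [Fin.prod_univ_succ, Fin.consEquiv, mul_assoc]

/-! ### Coefficients with respect to words in the two invariants -/

/-- The tensor `∑_s c_s ⨂_m w_{s m}`, summed over sign words `s`. -/
noncomputable def ofCoeff (ω : ℂ) {k : ℕ} : ((Fin k → Bool) → ℂ) →ₗ[ℂ] (Idx k → ℂ) where
  toFun c M := ∑ s, c s * ∏ m, w ω (s m) (M m)
  map_add' c c' := by funext M; simp [add_mul, Finset.sum_add_distrib]
  map_smul' a c := by funext M; simp [mul_assoc, Finset.mul_sum]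

/-- The coordinates of `T` along the products `⨂_m w_{s m}`, computed by the dual basis. -/
noncomputable def toCoeff (ω : ℂ) {k : ℕ} (T : Idx k → ℂ) (s : Fin k → Bool) : ℂ :=
  ∑ M : Idx k, (∏ m, w ω (!s m) (M m) / 6) * T M

theorem toCoeff_ofCoeff (hω : ω ^ 2 + ω + 1 = 0) {k : ℕ} (c : (Fin k → Bool) → ℂ) :
    toCoeff ω (ofCoeff ω c) = c := by
  funext s
  have h : ∀ s' : Fin k → Bool, ∑ M : Idx k, ∏ m, (w ω (!s m) (M m) / 6 * w ω (s' m) (M m))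
      = if s = s' then 1 else 0 := by
    intro s'
    have := Finset.prod_univ_sum (fun _ : Fin k => (Finset.univ : Finset (Fin 4 → Fin 2)))
      (fun m q => w ω (!s m) q / 6 * w ω (s' m) q)
    rw [Fintype.piFinset_univ] at this
    rw [← this]
    have h2 : ∀ m, ∑ q, w ω (!s m) q / 6 * w ω (s' m) q = if s m = s' m then 1 else 0 := by
      intro m
      have := sum_w_mul_w hω (s m) (s' m)
      simp only [div_mul_eq_mul_div, ← Finset.sum_div, this]
      split_ifs <;> simp
    simp only [h2, Finset.prod_ite_zero]
    simp [funext_iff]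
  calc toCoeff ω (ofCoeff ω c) s
      = ∑ s', c s' * ∑ M : Idx k, ∏ m, (w ω (!s m) (M m) / 6 * w ω (s' m) (M m)) := by
        simp only [toCoeff, ofCoeff, LinearMap.coe_mk, AddHom.coe_mk, Finset.mul_sum]
        rw [Finset.sum_comm]
        refine Finset.sum_congr rfl fun s' _ => Finset.sum_congr rfl fun M _ => ?_
        rw [Finset.prod_mul_distrib]; ring
    _ = c s := by simp [h]

theorem ofCoeff_toCoeff (hω : ω ^ 2 + ω + 1 = 0) {k : ℕ} {T : Idx k → ℂ}
    (hT : ∀ g : Fin k → Matrix.SpecialLinearGroup (Fin 2) ℂ,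
      kerAct (fun m => slKer (g m)) T = T) :
    ofCoeff ω (toCoeff ω T) = T := by
  have h := kerAct_of_slot (fun q q' => ∑ s, w ω s q * w ω (!s) q' / 6) T (fun m M => by
    have := slot_reconstruct hω (fun q => T (Function.update M m q))
      (slot_invariant hT m M) (M m)
    simpa using this)
  funext M
  conv_rhs => rw [← h]
  simp only [kerAct, ofCoeff, toCoeff, LinearMap.coe_mk, AddHom.coe_mk, Finset.prod_univ_sum,
    Fintype.piFinset_univ, Finset.sum_mul]
  rw [Finset.sum_comm]
  refine Finset.sum_congr rfl fun s _ => Finset.sum_congr rfl fun N _ => ?_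
  simp only [mul_div_assoc, Finset.prod_mul_distrib]
  ring

theorem kerAct_ofCoeff (hω : ω ^ 2 + ω + 1 = 0) {k : ℕ} (c : (Fin k → Bool) → ℂ)
    (g : Fin k → Matrix.SpecialLinearGroup (Fin 2) ℂ) :
    kerAct (fun m => slKer (g m)) (ofCoeff ω c) = ofCoeff ω c := by
  funext M
  simp only [kerAct, ofCoeff, LinearMap.coe_mk, AddHom.coe_mk, Finset.mul_sum]
  rw [Finset.sum_comm]
  refine Finset.sum_congr rfl fun s _ => ?_
  rw [Finset.prod_congr rfl fun m _ => (slKer_w hω (g m) (s m) (M m)).symm,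
    Finset.prod_univ_sum, Fintype.piFinset_univ, Finset.mul_sum]
  refine Finset.sum_congr rfl fun N _ => ?_
  rw [Finset.prod_mul_distrib]
  ring

/-! ### The symmetric group actions on coefficients -/

theorem ofCoeff_swap_adj {k : ℕ} (c : (Fin k → Bool) → ℂ) (τ : Equiv.Perm (Fin 4))
    (hτ : ∀ s q, w ω s (q ∘ τ) = w ω (!s) q) (M : Idx k) :
    ofCoeff ω c (fun m => M m ∘ τ) = ofCoeff ω (fun s => c (fun m => !s m)) M := by
  simp only [ofCoeff, LinearMap.coe_mk, AddHom.coe_mk, hτ]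
  rw [← (Equiv.arrowCongr (Equiv.refl (Fin k)) Equiv.boolNot).sum_comp]
  simp [Equiv.arrowCongr, Function.comp_def]

theorem ofCoeff_swap_one (hω : ω ^ 2 + ω + 1 = 0) {k : ℕ} (c : (Fin k → Bool) → ℂ) (M : Idx k) :
    ofCoeff ω c (fun m => M m ∘ Equiv.swap 1 2)
      = ofCoeff ω (fun s => c (fun m => !s m) * ∏ m, z ω (!s m)) M := by
  simp only [ofCoeff, LinearMap.coe_mk, AddHom.coe_mk, w_swap_one hω, Finset.prod_mul_distrib]
  rw [← (Equiv.arrowCongr (Equiv.refl (Fin k)) Equiv.boolNot).sum_comp]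
  simp [Equiv.arrowCongr, Function.comp_def, mul_assoc]

theorem ofCoeff_comp_perm {k : ℕ} (c : (Fin k → Bool) → ℂ) (σ : Equiv.Perm (Fin k)) (M : Idx k) :
    ofCoeff ω c (M ∘ σ) = ofCoeff ω (fun s => c (s ∘ σ)) M := by
  simp only [ofCoeff, LinearMap.coe_mk, AddHom.coe_mk]
  rw [← (Equiv.arrowCongr σ.symm (Equiv.refl Bool)).sum_comp]
  refine Finset.sum_congr rfl fun s _ => ?_
  congr 1
  exact Equiv.prod_comp σ (fun m => w ω (s m) (M m))

/-- The conditions on coefficients `c` equivalent to invariance of `∑_s c_s ⨂_m w_{s m}` under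
`S_4` (`flip` and `phase`) and `S_k` (`perm`). -/
structure Good (ω : ℂ) {k : ℕ} (c : (Fin k → Bool) → ℂ) : Prop where
  flip : ∀ s, c (fun m => !s m) = c s
  phase : ∀ s, c s * ∏ m, z ω (s m) = c s
  perm : ∀ (σ : Equiv.Perm (Fin k)) s, c (s ∘ σ) = c s

/-- Invariance under the three adjacent transpositions suffices, as they generate `S_4`. -/
theorem Good.sym4 (hω : ω ^ 2 + ω + 1 = 0) {k : ℕ} {c : (Fin k → Bool) → ℂ} (hc : Good ω c) :
    Sym4 (ofCoeff ω c) := by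
  let S : Submonoid (Equiv.Perm (Fin 4)) :=
    { carrier := {σ | ∀ M : Idx k, ofCoeff ω c (fun m => M m ∘ σ) = ofCoeff ω c M}
      one_mem' := fun M => rfl
      mul_mem' := fun {σ τ} hσ hτ M => (hτ (fun m => M m ∘ σ)).trans (hσ M) }
  have hph : ∀ s, c s * ∏ m, z ω (!s m) = c s := fun s => by
    simpa only [hc.flip] using hc.phase (fun m => !s m)
  have hS : S = ⊤ := by
    rw [eq_top_iff, ← Equiv.Perm.mclosure_swap_castSucc_succ 3, Submonoid.closure_le]
    rintro _ ⟨i, rfl⟩ M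
    fin_cases i
    · exact (ofCoeff_swap_adj c _ w_swap_zero M).trans (by simp only [hc.flip])
    · exact (ofCoeff_swap_one hω c M).trans (by simp only [hc.flip, hph])
    · exact (ofCoeff_swap_adj c _ w_swap_two M).trans (by simp only [hc.flip])
  intro σ
  have : σ ∈ S := hS ▸ Submonoid.mem_top σ
  exact this

theorem good_of_sym (hω : ω ^ 2 + ω + 1 = 0) {k : ℕ} {c : (Fin k → Bool) → ℂ}
    (h4 : Sym4 (ofCoeff ω c))
    (hk : ∀ (σ : Equiv.Perm (Fin k)) (M : Idx k), ofCoeff ω c (M ∘ σ) = ofCoeff ω c M) :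
    Good ω c := by
  have inj : ∀ c' : (Fin k → Bool) → ℂ, ofCoeff ω c' = ofCoeff ω c → c' = c := fun c' h => by
    rw [← toCoeff_ofCoeff hω c', h, toCoeff_ofCoeff hω]
  have hflip : ∀ s, c (fun m => !s m) = c s := congrFun (inj _ (by
    funext M
    rw [← ofCoeff_swap_adj c _ w_swap_zero, h4]))
  refine ⟨hflip, fun s => ?_, fun σ s => ?_⟩
  · have h := congrFun (inj _ (by
      funext M
      rw [← ofCoeff_swap_one hω, h4])) (fun m => !s m)
    simpa [hflip] using h
  · exact congrFun (inj (fun s => c (s ∘ σ)) (by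
      funext M
      rw [← ofCoeff_comp_perm, hk])) s

theorem mem_iff_exists_good (hω : ω ^ 2 + ω + 1 = 0) {k : ℕ}
    (Q : MvPolynomial (Fin k → Fin 2) ℂ) :
    Q ∈ skInvPolySpace k ↔ ∃ c, Good ω c ∧ toPoly (ofCoeff ω c) = Q := by
  constructor
  · intro hQ
    obtain ⟨T, hT, rfl⟩ := exists_sym4 Q hQ.1
    obtain ⟨h1, h2⟩ := (mem_iff hT).1 hQ
    have h3 := ofCoeff_toCoeff hω h1
    exact ⟨toCoeff ω T, good_of_sym hω (by rwa [h3]) (by rwa [h3]), by rw [h3]⟩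
  · rintro ⟨c, hc, rfl⟩
    refine (mem_iff (hc.sym4 hω)).2 ⟨kerAct_ofCoeff hω c, fun σ M => ?_⟩
    rw [ofCoeff_comp_perm]
    simp only [hc.perm]

/-! ### Counting orbits of words -/

/-- The number of letters `w_+` in a word. -/
def cnt {k : ℕ} (s : Fin k → Bool) : ℕ := Finset.card {m | s m = true}

theorem card_false {k : ℕ} (s : Fin k → Bool) :
    Finset.card {m | s m = false} + cnt s = k := by
  have := Finset.card_filter_add_card_filter_not (s := (Finset.univ : Finset (Fin k)))
    (fun m => s m = false)
  simpa [cnt] using this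

theorem cnt_not {k : ℕ} (s : Fin k → Bool) : cnt (fun m => !s m) + cnt s = k := by
  simpa [cnt] using card_false s

theorem cnt_comp {k : ℕ} (σ : Equiv.Perm (Fin k)) (s : Fin k → Bool) : cnt (s ∘ σ) = cnt s := by
  simp only [cnt, Finset.card_filter]
  exact Equiv.sum_comp σ (fun m => if s m = true then 1 else 0)

theorem exists_perm_of_cnt_eq {k : ℕ} {s s' : Fin k → Bool} (h : cnt s = cnt s') :
    ∃ σ : Equiv.Perm (Fin k), s' = s ∘ σ := by
  refine exists_perm_of_card_fiber s s' fun a => ?_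
  cases a
  · have := card_false s
    have := card_false s'
    omega
  · exact h

theorem prod_z {k : ℕ} (s : Fin k → Bool) : ∏ m, z ω (s m) = ω ^ (cnt s + 2 * (k - cnt s)) := by
  have h := card_false s
  simp only [z]
  rw [Finset.prod_ite, Finset.prod_const, Finset.prod_const, ← pow_mul, ← pow_add]
  simp only [Bool.not_eq_true]
  congr 2
  omega

theorem pow_eq_one_iff_dvd (hω : ω ^ 2 + ω + 1 = 0) (n : ℕ) : ω ^ n = 1 ↔ 3 ∣ n := by
  have h3 := cube_eq_one hω
  have h1 : ω ≠ 1 := by rintro rfl; norm_num at hω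
  have h2 : IsPrimitiveRoot ω 3 := by
    rw [← orderOf_eq_prime h3 h1]; exact IsPrimitiveRoot.orderOf ω
  exact h2.pow_eq_one_iff_dvd n

/-- Spreads a function of the pairs `(a, b)` to words: a word with `a` letters of one sign and
`a + 3 b` of the other gets the value at `(a, b)`, and a word whose letter counts are not congruent
mod 3 gets `0`. The test for the latter is that the floor quotient by `3` is exact. -/
noncomputable def expand {k : ℕ} :
    ({ab : ℕ × ℕ // 2 * ab.1 + 3 * ab.2 = k} → ℂ) →ₗ[ℂ] ((Fin k → Bool) → ℂ) where
  toFun d s :=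
    if h : 2 * min (cnt s) (k - cnt s) + 3 * ((k - 2 * min (cnt s) (k - cnt s)) / 3) = k then
      d ⟨(min (cnt s) (k - cnt s), (k - 2 * min (cnt s) (k - cnt s)) / 3), h⟩
    else 0
  map_add' d d' := by funext s; simp only [Pi.add_apply]; split_ifs <;> simp
  map_smul' a d := by funext s; simp only [Pi.smul_apply]; split_ifs <;> simp

theorem expand_eq {k : ℕ} (d : {ab : ℕ × ℕ // 2 * ab.1 + 3 * ab.2 = k} → ℂ) (s : Fin k → Bool)
    (ab : {ab : ℕ × ℕ // 2 * ab.1 + 3 * ab.2 = k})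
    (h : cnt s = ab.1.1 ∨ cnt s = ab.1.1 + 3 * ab.1.2) : expand d s = d ab := by
  obtain ⟨⟨a, b⟩, hab⟩ := ab
  simp only at h hab
  have h1 : min (cnt s) (k - cnt s) = a := by omega
  have h2 : (k - 2 * a) / 3 = b := by omega
  simp [expand, h1, h2, hab]

theorem expand_eq_zero {k : ℕ} (d : {ab : ℕ × ℕ // 2 * ab.1 + 3 * ab.2 = k} → ℂ)
    (s : Fin k → Bool) (h : ¬ 3 ∣ cnt s + 2 * (k - cnt s)) : expand d s = 0 := by
  have := cnt_not s
  simp only [expand, LinearMap.coe_mk, AddHom.coe_mk]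
  rw [dif_neg]
  omega

theorem exists_pair {k : ℕ} (s : Fin k → Bool) (h : 3 ∣ cnt s + 2 * (k - cnt s)) :
    ∃ ab : {ab : ℕ × ℕ // 2 * ab.1 + 3 * ab.2 = k},
      cnt s = ab.1.1 ∨ cnt s = ab.1.1 + 3 * ab.1.2 := by
  have := cnt_not s
  refine ⟨⟨(min (cnt s) (k - cnt s), (k - 2 * min (cnt s) (k - cnt s)) / 3), ?_⟩, ?_⟩
  · simp only; omega
  · simp only; omega

theorem good_expand (hω : ω ^ 2 + ω + 1 = 0) {k : ℕ}
    (d : {ab : ℕ × ℕ // 2 * ab.1 + 3 * ab.2 = k} → ℂ) : Good ω (expand d) := by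
  refine ⟨fun s => ?_, fun s => ?_, fun σ s => ?_⟩
  · have h := cnt_not s
    by_cases h3 : 3 ∣ cnt s + 2 * (k - cnt s)
    · obtain ⟨ab, hab⟩ := exists_pair s h3
      have := ab.2
      rw [expand_eq d s ab hab, expand_eq d _ ab (by omega)]
    · rw [expand_eq_zero d s h3, expand_eq_zero d _ (by omega)]
  · by_cases h3 : 3 ∣ cnt s + 2 * (k - cnt s)
    · rw [prod_z, (pow_eq_one_iff_dvd hω _).2 h3, mul_one]
    · rw [expand_eq_zero d s h3, zero_mul]
  · simp only [expand, LinearMap.coe_mk, AddHom.coe_mk, cnt_comp]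

/-- The word whose first `a` letters are `w_+`, the others being `w_-`. -/
def firstTrue {k : ℕ} (a : ℕ) : Fin k → Bool := fun m => decide (m.val < a)

theorem cnt_std {k a : ℕ} (h : a ≤ k) : cnt (firstTrue a : Fin k → Bool) = a := by
  simp only [cnt, firstTrue, decide_eq_true_eq, Fin.card_filter_val_lt]
  exact min_eq_right h

theorem cnt_std_pair {k : ℕ} (ab : {ab : ℕ × ℕ // 2 * ab.1 + 3 * ab.2 = k}) :
    cnt (firstTrue ab.1.1 : Fin k → Bool) = ab.1.1 :=
  cnt_std (by have := ab.2; omega)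

theorem expand_injective {k : ℕ} : Function.Injective (expand (k := k)) := by
  intro d d' h
  funext ab
  rw [← expand_eq d (firstTrue ab.1.1) ab (Or.inl (cnt_std_pair ab)), h,
    expand_eq d' (firstTrue ab.1.1) ab (Or.inl (cnt_std_pair ab))]

theorem Good.exists_expand (hω : ω ^ 2 + ω + 1 = 0) {k : ℕ} {c : (Fin k → Bool) → ℂ}
    (hc : Good ω c) : ∃ d, expand d = c := by
  refine ⟨fun ab => c (firstTrue ab.1.1), ?_⟩
  funext s
  have hcnt : ∀ s s', cnt s = cnt s' → c s' = c s := by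
    intro s s' h
    obtain ⟨σ, rfl⟩ := exists_perm_of_cnt_eq h
    exact hc.perm σ s
  by_cases h3 : 3 ∣ cnt s + 2 * (k - cnt s)
  · obtain ⟨ab, hab⟩ := exists_pair s h3
    rw [expand_eq _ s ab hab]
    have h1 := cnt_std_pair ab
    have h2 := ab.2
    have h4 := cnt_not s
    rcases hab with hab | hab
    · exact hcnt _ _ (by omega)
    · rw [← hc.flip s]
      exact hcnt _ _ (by omega)
  · rw [expand_eq_zero _ s h3]
    have h := hc.phase s
    rw [prod_z] at h
    by_contra h0
    exact h3 ((pow_eq_one_iff_dvd hω _).1 (mul_left_cancel₀ (Ne.symm h0) (h.trans (mul_one _).symm)))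

theorem exists_omega : ∃ ω : ℂ, ω ^ 2 + ω + 1 = 0 := by
  have h := (Complex.isPrimitiveRoot_exp 3 (by norm_num)).geom_sum_eq_zero (by norm_num)
  refine ⟨Complex.exp (2 * Real.pi * Complex.I / (3 : ℕ)), ?_⟩
  simp only [Finset.sum_range_succ, Finset.sum_range_zero] at h
  linear_combination h

end TensorInv

/-- For `k ≥ 1`, the dimension of the space of `(S_k ⋉ G)`-invariant homogeneous degree-4
polynomial functions on tensor states in `(ℂ^2)^{⊗k}` equals the number of pairs `(a,b)`
of nonnegative integers with `2a + 3b = k`. -/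
theorem stmt14 (k : ℕ) (hk : 1 ≤ k) :
    Module.finrank ℂ (skInvPolySpace k)
      = Nat.card {ab : ℕ × ℕ // 2 * ab.1 + 3 * ab.2 = k} := by
  obtain ⟨ω, hω⟩ := TensorInv.exists_omega
  have hfin : Finite {ab : ℕ × ℕ // 2 * ab.1 + 3 * ab.2 = k} :=
    Set.Finite.subset (Set.finite_Iic (k, k)) fun ab (h : 2 * ab.1 + 3 * ab.2 = k) =>
      Prod.mk_le_mk.2 ⟨by omega, by omega⟩
  have := Fintype.ofFinite {ab : ℕ × ℕ // 2 * ab.1 + 3 * ab.2 = k}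
  let Ψ := TensorInv.toPoly ∘ₗ TensorInv.ofCoeff ω ∘ₗ TensorInv.expand (k := k)
  have hrange : skInvPolySpace k = LinearMap.range Ψ := by
    ext Q
    rw [TensorInv.mem_iff_exists_good hω, LinearMap.mem_range]
    constructor
    · rintro ⟨c, hc, rfl⟩
      obtain ⟨d, rfl⟩ := hc.exists_expand hω
      exact ⟨d, rfl⟩
    · rintro ⟨d, rfl⟩
      exact ⟨_, TensorInv.good_expand hω d, rfl⟩
  have hinj : Function.Injective Ψ := by
    intro d d' h
    have h1 := ((TensorInv.good_expand hω d).sym4 hω).toPoly_injOn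
      ((TensorInv.good_expand hω d').sym4 hω) h
    apply TensorInv.expand_injective
    rw [← TensorInv.toCoeff_ofCoeff hω (TensorInv.expand d), h1, TensorInv.toCoeff_ofCoeff hω]
  rw [hrange, LinearMap.finrank_range_of_inj hinj, Module.finrank_fintype_fun_eq_card,
    Nat.card_eq_fintype_card]
end

section
/- Let k ≥ 2. If Q is a G-invariant homogeneous degree-4 polynomial function on tensor states in (ℂ^2)^{⊗k} which transforms by the sign character under the permutation action of S_k, i.e. Q(σ·u) = sign(σ)·Q(u) for all σ ∈ S_k and all tensor states u, then Q = 0. -/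
/-!
A quartic `Q` is determined by its polarization, a symmetric 4-linear form whose values on basis
vectors are indexed by maps `P : Fin k → (Fin 4 → Fin 2)`: slot `m` carries the string `P m` of its
four indices. Invariance under the `m`-th copy of `SL(2,ℂ)` makes the form, as a function of `P m`
alone, an invariant of `(ℂ²)^{⊗4}`. The space `W` of such invariants is two-dimensional, with the
components at `A = 0011` and `B = 0101` as coordinates (`slot_invariant_eq_zero`), so the
polarization is an element of `W^{⊗k}` and is determined by its values at `P : Fin k → {A, B}`.

The sign condition puts this element in the exterior power `Λ^k W`, which vanishes for `k ≥ 3`.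
For `k = 2` the line `Λ² W` is the sign representation of the group permuting the four arguments,
whereas the form is symmetric in them: exchanging the two middle arguments interchanges `A` and
`B`, so the value at `(A, B)` is both symmetric and antisymmetric.

Only infinitesimal invariance is used. Each unipotent subgroup `1 + t E_{ab}` in slot `m` gives a
derivation `lieD m a b` killing `Q` (`lieD_eq_zero_of_invariant`), and commuting it past four
partial derivatives gives linear relations on the polarized form (`quarticCoeff_slot`).
-/

open MvPolynomial

/-! ### Invariants of four spin-1/2 indices -/

/-- An `sl₂`-invariant of `(ℂ²)^{⊗4}`, in coordinates, vanishes once its `0011` and `0101`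
components do. The hypothesis `H` says that `h` is killed by the raising and lowering operators.
It forces `h` to be supported on the six balanced index strings, to agree on complementary ones,
and `h 0011 + h 0101 + h 0110 = 0`. -/
theorem slot_invariant_eq_zero (h : Fin 2 → Fin 2 → Fin 2 → Fin 2 → ℂ)
    (H : ∀ a b : Fin 2, a ≠ b → ∀ s₀ s₁ s₂ s₃ : Fin 2,
      (if s₀ = b then h a s₁ s₂ s₃ else 0) + (if s₁ = b then h s₀ a s₂ s₃ else 0)
        + (if s₂ = b then h s₀ s₁ a s₃ else 0) + (if s₃ = b then h s₀ s₁ s₂ a else 0) = 0)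
    (hA : h 0 0 1 1 = 0) (hB : h 0 1 0 1 = 0) (s₀ s₁ s₂ s₃ : Fin 2) : h s₀ s₁ s₂ s₃ = 0 := by
  have H0 := H 0 1 (by decide)
  have H1 := H 1 0 (by decide)
  clear H
  simp only [Fin.forall_fin_two] at H0 H1
  norm_num at H0 H1
  revert s₀ s₁ s₂ s₃
  simp only [Fin.forall_fin_two]
  grind

/-! ### Infinitesimal invariance -/

/-- The chain rule for substituting one-variable polynomials into a multivariate one. -/
theorem derivative_aeval {σ : Type*} [Fintype σ] (f : σ → Polynomial ℂ) (Q : MvPolynomial σ ℂ) :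
    Polynomial.derivative (aeval f Q)
      = ∑ p, aeval f (pderiv p Q) * Polynomial.derivative (f p) := by
  classical
  induction Q using MvPolynomial.induction_on with
  | C a => simp
  | add p q hp hq => simp [hp, hq, add_mul, Finset.sum_add_distrib]
  | mul_X p n hp =>
    have h1 : ∀ a : σ, pderiv a (X n : MvPolynomial σ ℂ) = C (if n = a then 1 else 0) := by
      intro a
      rw [pderiv_X, Pi.single_apply]
      split_ifs <;> simp_all
    have h2 : ∀ a : σ, aeval f (pderiv a (p * X n)) * Polynomial.derivative (f a)
        = aeval f (pderiv a p) * Polynomial.derivative (f a) * f n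
          + (if n = a then aeval f p * Polynomial.derivative (f a) else 0) := by
      intro a
      rw [Derivation.leibniz, h1]
      split_ifs <;> simp <;> ring
    rw [Finset.sum_congr rfl fun a _ => h2 a, Finset.sum_add_distrib, ← Finset.sum_mul, ← hp,
      Finset.sum_ite_eq, if_pos (Finset.mem_univ n), map_mul, aeval_X, Polynomial.derivative_mul]

/-- The group element equal to `1 + t E_{ab}` in slot `m` and to `1` in the other slots acts by
`u_p ↦ u_p + t u_{p[m → b]}` when `p m = a`, and fixes the other components. -/
theorem actTensor_transvection {k : ℕ} (m : Fin k) (a b : Fin 2) (t : ℂ)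
    (g : Fin k → Matrix.SpecialLinearGroup (Fin 2) ℂ)
    (hgm : (g m : Matrix (Fin 2) (Fin 2) ℂ) = Matrix.transvection a b t)
    (hg : ∀ i, i ≠ m → (g i : Matrix (Fin 2) (Fin 2) ℂ) = 1)
    (u : (Fin k → Fin 2) → ℂ) (p : Fin k → Fin 2) :
    actTensor g u p
      = u p + t * (if p m = a then u (Function.update p m b) else 0) := by
  classical
  have key : ∀ q : Fin k → Fin 2,
      (∏ m', (g m' : Matrix (Fin 2) (Fin 2) ℂ) (p m') (q m'))
      = (if q = p then 1 else 0)
        + (if q = Function.update p m b then (if p m = a then t else 0) else 0) := by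
    intro q
    by_cases hq : ∃ m', m' ≠ m ∧ p m' ≠ q m'
    · obtain ⟨m', hm, hne⟩ := hq
      rw [Finset.prod_eq_zero (Finset.mem_univ m')]
      · rw [if_neg, if_neg, add_zero]
        · rintro rfl; simp [hm] at hne
        · rintro rfl; exact hne rfl
      · simp [hg m' hm, hne]
    · push Not at hq
      rw [Finset.prod_eq_single m]
      · obtain ⟨c, rfl⟩ : ∃ c, q = Function.update p m c := ⟨q m, by
          ext1 i
          by_cases hi : i = m
          · subst hi; simp
          · simp [hi, hq i hi]⟩
        have h1 : Function.update p m c = p ↔ p m = c := by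
          rw [Function.update_eq_self_iff]; exact eq_comm
        have h2 : Function.update p m c = Function.update p m b ↔ b = c := by
          rw [(Function.update_injective p m).eq_iff]; exact eq_comm
        simp only [h1, h2, hgm, Function.update_self, Matrix.transvection, Matrix.add_apply,
          Matrix.one_apply, Matrix.single_apply]
        grind
      · intro i _ hi
        simp [hg i hi, hq i hi]
      · simp
  unfold actTensor
  simp only [key, add_mul, Finset.sum_add_distrib]
  simp

/-- The derivation of the polynomial ring given by the `sl₂` matrix unit `E_{ab}` acting in slot
`m`: the infinitesimal action of the one-parameter group `1 + t E_{ab}` when `a ≠ b`. -/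
noncomputable def lieD {k : ℕ} (m : Fin k) (a b : Fin 2)
    (Q : MvPolynomial (Fin k → Fin 2) ℂ) : MvPolynomial (Fin k → Fin 2) ℂ :=
  ∑ p, pderiv p Q * (if p m = a then X (Function.update p m b) else 0)

theorem lieD_eq_zero_of_invariant {k : ℕ} (Q : MvPolynomial (Fin k → Fin 2) ℂ)
    (hinv : ∀ (g : Fin k → Matrix.SpecialLinearGroup (Fin 2) ℂ) (u : (Fin k → Fin 2) → ℂ),
      MvPolynomial.eval (actTensor g u) Q = MvPolynomial.eval u Q)
    (m : Fin k) {a b : Fin 2} (hab : a ≠ b) :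
    lieD m a b Q = 0 := by
  apply MvPolynomial.funext
  intro u
  -- `f` is the line `t ↦ u + t E_{ab} u`, on which the invariant `Q` is constant in `t`.
  set f : (Fin k → Fin 2) → Polynomial ℂ := fun p =>
    Polynomial.C (u p) + Polynomial.X *
      Polynomial.C (if p m = a then u (Function.update p m b) else 0)
    with hf
  have hev : ∀ (t : ℂ) (R : MvPolynomial (Fin k → Fin 2) ℂ), (aeval f R).eval t =
      eval (fun p => u p + t * (if p m = a then u (Function.update p m b) else 0)) R := by
    intro t R
    rw [← Polynomial.coe_evalRingHom, MvPolynomial.aeval_def, MvPolynomial.hom_eval₂]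
    rw [MvPolynomial.eval, MvPolynomial.coe_eval₂Hom]
    congr 1
    · ext x; simp
    · funext p
      simp only [hf, Polynomial.coe_evalRingHom, Polynomial.eval_add, Polynomial.eval_mul,
        Polynomial.eval_C, Polynomial.eval_X]
  have hconst : aeval f Q = Polynomial.C (eval u Q) := by
    apply Polynomial.funext
    intro t
    obtain ⟨γ, hγ⟩ : ∃ γ : Matrix.SpecialLinearGroup (Fin 2) ℂ,
        (γ : Matrix (Fin 2) (Fin 2) ℂ) = Matrix.transvection a b t :=
      ⟨⟨_, Matrix.det_transvection_of_ne a b hab t⟩, rfl⟩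
    rw [hev, Polynomial.eval_C, ← hinv (Function.update 1 m γ) u]
    refine congrArg (fun v => eval v Q) (funext fun p => ?_)
    rw [actTensor_transvection m a b t _ (by rw [Function.update_self, hγ])
      (fun i hi => by
        rw [Function.update_of_ne hi, Pi.one_apply, Matrix.SpecialLinearGroup.coe_one])]
  have hd := congrArg (Polynomial.eval 0) (derivative_aeval f Q)
  rw [hconst, Polynomial.derivative_C, Polynomial.eval_finsetSum] at hd
  rw [lieD, map_sum, map_zero]
  rw [Polynomial.eval_zero] at hd
  rw [hd]
  refine Finset.sum_congr rfl fun p _ => ?_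
  rw [Polynomial.eval_mul, hev, map_mul]
  congr 1
  · simp
  · simp only [hf]; split_ifs <;> simp

/-! ### Polarization of a quartic -/

theorem pderiv_comm_apply {σ : Type*} (i j : σ) (Q : MvPolynomial σ ℂ) :
    pderiv i (pderiv j Q) = pderiv j (pderiv i Q) := by
  classical
  induction Q using MvPolynomial.induction_on with
  | C a => simp
  | add p q hp hq => simp [hp, hq]
  | mul_X p n hp =>
    have h1 : ∀ a : σ, pderiv a (X n : MvPolynomial σ ℂ) = C (if a = n then 1 else 0) := by
      intro a
      rw [pderiv_X, Pi.single_apply]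
      split_ifs <;> simp_all
    simp only [Derivation.leibniz, smul_eq_mul, map_add, h1, hp, pderiv_C]
    ring

/-- Euler's identity: in positive degree a homogeneous polynomial with vanishing partial
derivatives is zero (characteristic zero). -/
theorem homog_eq_zero {σ : Type*} [Fintype σ] {n : ℕ} {Q : MvPolynomial σ ℂ}
    (hQ : Q.IsHomogeneous (n + 1)) (h : ∀ i, pderiv i Q = 0) : Q = 0 := by
  have := hQ.sum_X_mul_pderiv
  simp only [h, mul_zero, Finset.sum_const_zero] at this
  have h2 := this.symm
  rw [smul_eq_zero] at h2
  exact h2.resolve_left (by omega)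

/-- The values on basis vectors of the symmetric 4-linear form obtained by polarizing a quartic
`Q`, without normalization: the constant term of `∂_p ∂_q ∂_r ∂_s Q`. -/
noncomputable def quarticCoeff {σ : Type*} (Q : MvPolynomial σ ℂ) (p q r s : σ) : ℂ :=
  constantCoeff (pderiv p (pderiv q (pderiv r (pderiv s Q))))

theorem eq_zero_of_quarticCoeff {σ : Type*} [Fintype σ] {Q : MvPolynomial σ ℂ}
    (hQ : Q.IsHomogeneous 4) (h : ∀ p q r s, quarticCoeff Q p q r s = 0) : Q = 0 := by
  refine homog_eq_zero hQ fun s => ?_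
  have h3 := hQ.pderiv (i := s)
  refine homog_eq_zero h3 fun r => ?_
  have h2 := h3.pderiv (i := r)
  refine homog_eq_zero h2 fun q => ?_
  have h1 := h2.pderiv (i := q)
  refine homog_eq_zero h1 fun p => ?_
  have h0 := h1.pderiv (i := p)
  have h00 : (pderiv p (pderiv q (pderiv r (pderiv s Q)))).totalDegree = 0 :=
    Nat.le_zero.mp h0.totalDegree_le
  rw [totalDegree_eq_zero_iff_eq_C] at h00
  rw [h00]
  have := h p q r s
  rw [quarticCoeff, constantCoeff_eq] at this
  rw [this, C_0]

/-! ### Invariance and sign conditions on the polarized form -/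

/-- The commutator of `∂_r` with `lieD m a b` is `∂_{r[m → a]}` if `r m = b`, and zero otherwise. -/
theorem pderiv_lieD {k : ℕ} (m : Fin k) (a b : Fin 2)
    (Q : MvPolynomial (Fin k → Fin 2) ℂ) (r : Fin k → Fin 2) :
    pderiv r (lieD m a b Q) = lieD m a b (pderiv r Q)
      + (if r m = b then pderiv (Function.update r m a) Q else 0) := by
  classical
  have h1 : ∀ p : Fin k → Fin 2,
      pderiv r (if p m = a then X (Function.update p m b) else 0 : MvPolynomial (Fin k → Fin 2) ℂ)
      = if p = Function.update r m a then (if r m = b then 1 else 0) else 0 := by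
    intro p
    have h2 : (p m = a ∧ Function.update p m b = r) ↔ (p = Function.update r m a ∧ r m = b) := by
      constructor
      · rintro ⟨rfl, rfl⟩; simp
      · rintro ⟨rfl, rfl⟩; simp
    by_cases hp : p m = a
    · simp only [hp, if_true, pderiv_X, Pi.single_apply]
      grind
    · simp only [hp, if_false, map_zero]
      grind
  simp only [lieD, map_sum, Derivation.leibniz, smul_eq_mul, h1, Finset.sum_add_distrib]
  rw [add_comm]
  congr 1
  · exact Finset.sum_congr rfl fun p _ => by rw [pderiv_comm_apply r p, mul_comm]
  · simp

theorem constantCoeff_lieD {k : ℕ} (m : Fin k) (a b : Fin 2)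
    (Q : MvPolynomial (Fin k → Fin 2) ℂ) : constantCoeff (lieD m a b Q) = 0 := by
  simp only [lieD, map_sum, map_mul]
  refine Finset.sum_eq_zero fun p _ => ?_
  split_ifs <;> simp

/-- Infinitesimal invariance in slot `m`, read off on the polarized form: the constant term of
`∂_p ∂_q ∂_r ∂_s (lieD m a b Q)` with the derivatives commuted past `lieD`. -/
theorem quarticCoeff_slot {k : ℕ} {Q : MvPolynomial (Fin k → Fin 2) ℂ} {m : Fin k} {a b : Fin 2}
    (hD : lieD m a b Q = 0) (p q r s : Fin k → Fin 2) :
    (if p m = b then quarticCoeff Q (Function.update p m a) q r s else 0)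
      + (if q m = b then quarticCoeff Q p (Function.update q m a) r s else 0)
      + (if r m = b then quarticCoeff Q p q (Function.update r m a) s else 0)
      + (if s m = b then quarticCoeff Q p q r (Function.update s m a) else 0) = 0 := by
  have h : constantCoeff (pderiv p (pderiv q (pderiv r (pderiv s (lieD m a b Q))))) = 0 := by
    simp [hD]
  simp only [pderiv_lieD, map_add, constantCoeff_lieD, zero_add] at h
  simp only [apply_ite (pderiv _), apply_ite constantCoeff, map_zero] at h
  exact h

theorem quarticCoeff_perm {k : ℕ} {Q : MvPolynomial (Fin k → Fin 2) ℂ}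
    (hsgn : ∀ (σ : Equiv.Perm (Fin k)) (u : (Fin k → Fin 2) → ℂ),
      MvPolynomial.eval (fun p => u (fun i => p (σ i))) Q
        = ((Equiv.Perm.sign σ : ℤ) : ℂ) * MvPolynomial.eval u Q)
    (τ : Equiv.Perm (Fin k)) (p q r s : Fin k → Fin 2) :
    quarticCoeff Q p q r s
      = ((Equiv.Perm.sign τ : ℤ) : ℂ) * quarticCoeff Q (p ∘ τ) (q ∘ τ) (r ∘ τ) (s ∘ τ) := by
  set e : (Fin k → Fin 2) → (Fin k → Fin 2) := fun p => p ∘ τ with he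
  have hinj : Function.Injective e := fun x y hxy => by
    funext i
    simpa [he] using congrFun hxy (τ.symm i)
  have hren : rename e Q = C ((Equiv.Perm.sign τ : ℤ) : ℂ) * Q := by
    apply MvPolynomial.funext
    intro u
    rw [eval_rename, map_mul, eval_C, ← hsgn]
    rfl
  have h : constantCoeff (pderiv (e p) (pderiv (e q) (pderiv (e r) (pderiv (e s) (rename e Q)))))
      = quarticCoeff Q p q r s := by
    simp only [pderiv_rename hinj, constantCoeff_rename, quarticCoeff]
  rw [← h, hren]
  simp only [pderiv_C_mul, map_mul, constantCoeff_C]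
  rfl

/-! ### Vanishing of sign-equivariant quartic invariants -/

/-- For `k ≥ 2`, a `G`-invariant homogeneous degree-4 polynomial function on tensor
states in `(ℂ^2)^{⊗k}` which transforms by the sign character under the permutation
action of `S_k` is zero. -/
theorem stmt15 (k : ℕ) (hk : 2 ≤ k)
    (Q : MvPolynomial (Fin k → Fin 2) ℂ) (hhom : Q.IsHomogeneous 4)
    (hinv : ∀ (g : Fin k → Matrix.SpecialLinearGroup (Fin 2) ℂ) (u : (Fin k → Fin 2) → ℂ),
      MvPolynomial.eval (actTensor g u) Q = MvPolynomial.eval u Q)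
    (hsgn : ∀ (σ : Equiv.Perm (Fin k)) (u : (Fin k → Fin 2) → ℂ),
      MvPolynomial.eval (fun p => u (fun i => p (σ i))) Q
        = ((Equiv.Perm.sign σ : ℤ) : ℂ) * MvPolynomial.eval u Q) :
    Q = 0 := by
  classical
  -- The polarized form, indexed by assigning to each slot the string of its four indices.
  set G : (Fin k → Fin 4 → Fin 2) → ℂ := fun P =>
    quarticCoeff Q (fun m => P m 0) (fun m => P m 1) (fun m => P m 2) (fun m => P m 3) with hG
  set A : Fin 4 → Fin 2 := ![0, 0, 1, 1] with hA
  set B : Fin 4 → Fin 2 := ![0, 1, 0, 1] with hB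
  have hperm : ∀ (τ : Equiv.Perm (Fin k)) P,
      G P = ((Equiv.Perm.sign τ : ℤ) : ℂ) * G (P ∘ τ) := fun τ P =>
    quarticCoeff_perm hsgn τ _ _ _ _
  -- Exchanging the two middle arguments of the symmetric form interchanges the strings `A` and `B`.
  have hmid : ∀ P, G (fun m => P m ∘ Equiv.swap 1 2) = G P := by
    intro P
    simp only [hG, quarticCoeff, Function.comp, Equiv.swap_apply_left, Equiv.swap_apply_right]
    rw [pderiv_comm_apply (fun m => P m 2)]
    rfl
  have hAB : A ∘ Equiv.swap 1 2 = B := by decide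
  have hBA : B ∘ Equiv.swap 1 2 = A := by decide
  -- Two equal slots give zero by antisymmetry. Distinct slots occur only for `k = 2`, where the
  -- slot exchange, of sign `-1`, acts on `P` as the exchange of the two middle arguments does.
  have hbase : ∀ P, (∀ m, P m = A ∨ P m = B) → G P = 0 := by
    intro P hP
    by_cases hinj : Function.Injective P
    · have hcard : k ≤ 2 := by
        have h1 : (Finset.univ.image P) ⊆ {A, B} := by
          intro x hx
          obtain ⟨m, -, rfl⟩ := Finset.mem_image.mp hx
          simpa using hP m
        have h2 := (Finset.card_le_card h1).trans Finset.card_le_two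
        rwa [Finset.card_image_of_injective _ hinj, Finset.card_univ, Fintype.card_fin] at h2
      obtain rfl : k = 2 := le_antisymm hcard hk
      have hne : P 0 ≠ P 1 := fun h => by simpa using hinj h
      have hsw : (fun m => P m ∘ Equiv.swap 1 2) = P ∘ Equiv.swap 0 1 := by
        funext m
        fin_cases m
        · rcases hP 0 with h0 | h0 <;> rcases hP 1 with h1 | h1 <;> simp_all
        · rcases hP 0 with h0 | h0 <;> rcases hP 1 with h1 | h1 <;> simp_all
      have h1 := hperm (Equiv.swap 0 1) P
      rw [← hsw, hmid, Equiv.Perm.sign_swap (by decide)] at h1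
      push_cast at h1
      linear_combination h1 / 2
    · simp only [Function.Injective, not_forall] at hinj
      obtain ⟨i, j, hij, hne⟩ := hinj
      have hsw : P ∘ Equiv.swap i j = P := by
        funext m
        simp only [Function.comp, Equiv.swap_apply_def]
        split_ifs <;> simp_all
      have h1 := hperm (Equiv.swap i j) P
      rw [hsw, Equiv.Perm.sign_swap hne] at h1
      push_cast at h1
      linear_combination h1 / 2
  -- `S` is the set of slots still allowed to carry an arbitrary index string.
  have hall : ∀ (S : Finset (Fin k)) P, (∀ m ∉ S, P m = A ∨ P m = B) → G P = 0 := by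
    intro S
    induction S using Finset.induction_on with
    | empty => exact fun P hP => hbase P fun m => hP m (by simp)
    | insert m S hm ih =>
      intro P hP
      have hcoord : ∀ (s : Fin 4 → Fin 2) (i : Fin 4),
          (fun m' => Function.update P m s m' i) = Function.update (fun m' => P m' i) m (s i) := by
        intro s i
        funext m'
        by_cases h : m' = m
        · subst h; simp
        · simp [h]
      have key := slot_invariant_eq_zero
        (fun s₀ s₁ s₂ s₃ => G (Function.update P m ![s₀, s₁, s₂, s₃])) (by
          intro a b hab s₀ s₁ s₂ s₃
          have := quarticCoeff_slot (lieD_eq_zero_of_invariant Q hinv m hab)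
            (Function.update (fun m' => P m' 0) m s₀) (Function.update (fun m' => P m' 1) m s₁)
            (Function.update (fun m' => P m' 2) m s₂) (Function.update (fun m' => P m' 3) m s₃)
          simp only [Function.update_self, Function.update_idem] at this
          simp only [hG, hcoord]
          exact this)
      have hstep : ∀ s, s = A ∨ s = B → G (Function.update P m s) = 0 := by
        intro s hs
        refine ih _ fun m' hm' => ?_
        by_cases h : m' = m
        · subst h; simpa using hs
        · rw [Function.update_of_ne h]
          exact hP m' (by simp [h, hm'])
      have := key (hstep A (Or.inl rfl)) (hstep B (Or.inr rfl)) (P m 0) (P m 1) (P m 2) (P m 3)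
      have hPm : ![P m 0, P m 1, P m 2, P m 3] = P m := by
        funext i; fin_cases i <;> rfl
      simpa only [hPm, Function.update_eq_self] using this
  refine eq_zero_of_quarticCoeff hhom fun p q r s => ?_
  exact hall Finset.univ (fun m => ![p m, q m, r m, s m]) (by simp)
end

section
/- Consider tensor states in (ℂ^2)^{⊗4} and the group G = SL(2,ℂ)^4. For a permutation (i,j,k,l) of (1,2,3,4), let Δ(ijkl) be the homogeneous degree-4 polynomial function sending a tensor state u to the determinant of the 4×4 matrix obtained by viewing u as an element of (ℂ^2⊗ℂ^2) ⊗ (ℂ^2⊗ℂ^2), with rows indexed by the pair of indices in slots (i,j) and columns indexed by the pair of indices in slots (k,l). Then the space of G-invariant homogeneous degree-4 polynomial functions on tensor states in (ℂ^2)^{⊗4} is 3-dimensional, each Δ(ijkl) belongs to it, and it is spanned by P_{2,4}² together with Δ(1234), Δ(1324), and Δ(1423). -/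
/-!
The dimension bound comes from polarization. An invariant quartic form `f` is the diagonal of a
symmetric `SL(2)^4`-invariant 4-linear form on `(ℂ²)^{⊗4}`. Its values on four basis tensors form an
array indexed by four columns (one per slot) in `{0,1}^4`, and in each column separately it is an
`SL(2)`-invariant 4-linear form on `ℂ²`. Such a form is determined by its values on `0011`, `0101`,
`0110`, which sum to zero (`column_invariant`). So `f` is determined by a table on `(Fin 3)^4` with
zero line sums, and the symmetry of the polarization makes this table `S₃`-invariant. Those tables
are determined by the entries at `0011`, `0101`, `0110` (`table_eq_zero`), so the space of invariants
embeds into `ℂ³` (`coords_injective`).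

Conversely, each `Δ(ijkl)` is invariant because the flattening of `u` is multiplied on both sides by
Kronecker products of determinant 1 (`delta_act`), and `P_{2,4}` because `2 P_{2,4}` is the quadratic
form of `ε^{⊗4}` with `ε` the area form (`genDet_act`). The elements `P_{2,4}²`, `Δ(1234)`, `Δ(1324)`
are linearly independent, as evaluation at three tensors shows (`vec_linearIndependent`), so they
already span.
-/

open MvPolynomial

/-- The generalized determinant `P_{n,k}`:
`P_{n,k}(u) = Σ_{σ₂,…,σ_k ∈ S_n} ε(σ₂)⋯ε(σ_k) ∏_{h=1}^{n} u^{h σ₂(h) ⋯ σ_k(h)}`,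
encoded as a sum over tuples `σ : Fin k → Perm (Fin n)` with `σ 0 = 1`. -/
noncomputable def genDet (n k : ℕ) (u : (Fin k → Fin n) → ℂ) : ℂ :=
  ∑ σ ∈ Finset.univ.filter
      (fun σ : Fin k → Equiv.Perm (Fin n) => ∀ j : Fin k, (j : ℕ) = 0 → σ j = 1),
    ((∏ j, (Equiv.Perm.sign (σ j) : ℤ)) : ℂ) * ∏ h : Fin n, u (fun j => σ j h)

/-- The space of `G`-invariant homogeneous degree-4 polynomial functions on tensor states
in `(ℂ^2)^{⊗4}`, realized as a space of functions on tensor states. -/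
noncomputable def quarticInvFuns : Submodule ℂ (((Fin 4 → Fin 2) → ℂ) → ℂ) where
  carrier := {f | (∃ Q ∈ MvPolynomial.homogeneousSubmodule (Fin 4 → Fin 2) ℂ 4,
      ∀ u, f u = MvPolynomial.eval u Q) ∧
    ∀ (g : Fin 4 → Matrix.SpecialLinearGroup (Fin 2) ℂ) (u : (Fin 4 → Fin 2) → ℂ),
      f (actTensor g u) = f u}
  add_mem' := by
    rintro a b ⟨⟨Qa, hQa, ha⟩, hainv⟩ ⟨⟨Qb, hQb, hb⟩, hbinv⟩
    refine ⟨⟨Qa + Qb, Submodule.add_mem _ hQa hQb, fun u => by simp [ha u, hb u]⟩,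
      fun g u => by simp [hainv g u, hbinv g u]⟩
  zero_mem' := ⟨⟨0, Submodule.zero_mem _, fun u => by simp⟩, fun g u => by simp⟩
  smul_mem' := by
    rintro c a ⟨⟨Qa, hQa, ha⟩, hainv⟩
    refine ⟨⟨c • Qa, Submodule.smul_mem _ c hQa, fun u => by
        simp [MvPolynomial.smul_eval, ha u]⟩,
      fun g u => by simp [hainv g u]⟩

/-- The determinant `Δ(ijkl)`: for a permutation `τ` of the four slots (with
`(i,j,k,l) = (τ(0)+1, τ(1)+1, τ(2)+1, τ(3)+1)`), view a tensor state `u ∈ (ℂ^2)^{⊗4}` as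
a 4×4 matrix whose rows are indexed by the pair of indices in slots `i,j` and whose
columns are indexed by the pair of indices in slots `k,l`, and take its determinant. -/
noncomputable def delta (τ : Equiv.Perm (Fin 4)) (u : (Fin 4 → Fin 2) → ℂ) : ℂ :=
  Matrix.det (Matrix.of fun r c : Fin 2 × Fin 2 =>
    u (fun s => ![r.1, r.2, c.1, c.2] (τ.symm s)))

namespace Quartic

/-- The tensor states `(ℂ²)^{⊗4}`, as arrays of components. -/
abbrev Ten := (Fin 4 → Fin 2) → ℂ

lemma sum_pi_four {X : Type*} [Fintype X] (F : (Fin 4 → X) → ℂ) :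
    ∑ p, F p = ∑ a, ∑ b, ∑ c, ∑ d, F ![a, b, c, d] := by
  classical
  let φ : (X × X × X × X) ≃ (Fin 4 → X) :=
    { toFun := fun x => ![x.1, x.2.1, x.2.2.1, x.2.2.2]
      invFun := fun p => (p 0, p 1, p 2, p 3)
      left_inv := fun x => rfl
      right_inv := fun p => by ext i; fin_cases i <;> rfl }
  rw [← φ.sum_comp F]
  simp only [Fintype.sum_prod_type]
  rfl

/-! ### Polarization -/

/-- The polarization of `f`: the alternating sum of the values of `f` at partial sums of four
arguments (the empty partial sum is left out). For a quartic form it is the symmetric 4-linear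
form whose diagonal is `24 f`. -/
def pol (f : Ten → ℂ) (a b c d : Ten) : ℂ :=
  f (a + b + c + d) - f (a + b + c) - f (a + b + d) - f (a + c + d) - f (b + c + d)
    + f (a + b) + f (a + c) + f (a + d) + f (b + c) + f (b + d) + f (c + d)
    - f a - f b - f c - f d

lemma pol_swap₁ (f : Ten → ℂ) (a b c d : Ten) : pol f b a c d = pol f a b c d := by
  simp only [pol, add_comm b a]; ring

lemma pol_swap₂ (f : Ten → ℂ) (a b c d : Ten) : pol f a c b d = pol f a b c d := by
  simp only [pol, add_right_comm a c b, add_comm c b]; ring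

lemma pol_swap₃ (f : Ten → ℂ) (a b c d : Ten) : pol f a b d c = pol f a b c d := by
  simp only [pol, add_right_comm _ d c, add_comm d c]; ring

/-- `f` behaves like a quartic form: its polarization is linear in the first argument (hence, by
symmetry, in each one) and restricts to `24 f` on the diagonal. -/
def IsQuartic (f : Ten → ℂ) : Prop :=
  (∀ x y b c d, pol f (x + y) b c d = pol f x b c d + pol f y b c d) ∧
  (∀ (s : ℂ) x b c d, pol f (s • x) b c d = s * pol f x b c d) ∧
  ∀ u, pol f u u u u = 24 * f u

lemma isQuartic_monomial (i j k l : Fin 4 → Fin 2) :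
    IsQuartic (fun u => u i * u j * u k * u l) := by
  refine ⟨fun x y b c d => ?_, fun s x b c d => ?_, fun u => ?_⟩ <;>
    simp only [pol, Pi.add_apply, Pi.smul_apply, smul_eq_mul] <;> ring

lemma pol_add (f g : Ten → ℂ) (a b c d : Ten) :
    pol (f + g) a b c d = pol f a b c d + pol g a b c d := by
  simp only [pol, Pi.add_apply]; ring

lemma pol_smul (s : ℂ) (f : Ten → ℂ) (a b c d : Ten) :
    pol (s • f) a b c d = s * pol f a b c d := by
  simp only [pol, Pi.smul_apply, smul_eq_mul]; ring

lemma IsQuartic.add {f g : Ten → ℂ} (hf : IsQuartic f) (hg : IsQuartic g) :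
    IsQuartic (f + g) := by
  refine ⟨fun x y b c d => ?_, fun s x b c d => ?_, fun u => ?_⟩
  · simp only [pol_add, hf.1, hg.1]; ring
  · simp only [pol_add, hf.2.1, hg.2.1]; ring
  · simp only [pol_add, hf.2.2, hg.2.2, Pi.add_apply]; ring

lemma IsQuartic.smul {f : Ten → ℂ} (hf : IsQuartic f) (r : ℂ) : IsQuartic (r • f) := by
  refine ⟨fun x y b c d => ?_, fun s x b c d => ?_, fun u => ?_⟩
  · simp only [pol_smul, hf.1]; ring
  · simp only [pol_smul, hf.2.1]; ring
  · simp only [pol_smul, hf.2.2, Pi.smul_apply, smul_eq_mul]; ring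

lemma isQuartic_zero : IsQuartic 0 := by
  refine ⟨fun x y b c d => ?_, fun s x b c d => ?_, fun u => ?_⟩ <;> simp [pol]

lemma isQuartic_eval (Q : MvPolynomial (Fin 4 → Fin 2) ℂ) (hQ : Q.IsHomogeneous 4) :
    IsQuartic (fun u => eval u Q) := by
  have h : (fun u : Ten => eval u Q) =
      ∑ m ∈ Q.support, Q.coeff m • fun u : Ten => m.prod fun i k => u i ^ k := by
    funext u
    simp [eval_eq, Finset.sum_apply, Finsupp.prod]
  rw [h]
  refine Finset.sum_induction _ IsQuartic (fun _ _ => IsQuartic.add) isQuartic_zero ?_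
  intro m hm
  refine IsQuartic.smul ?_ _
  -- A monomial of total degree 4 is a product of four coordinates, listed by its multiset.
  have hd : Multiset.card (Finsupp.toMultiset m) = 4 := by
    rw [Finsupp.card_toMultiset]
    have := hQ (mem_support_iff.mp hm)
    rw [Finsupp.weight_apply] at this
    simpa [Finsupp.sum] using this
  obtain ⟨i, j, k, l, hs⟩ := Multiset.card_eq_four.mp hd
  have : (fun u : Ten => m.prod fun i k => u i ^ k) = fun u => u i * u j * u k * u l := by
    funext u
    have h2 := Finsupp.prod_toMultiset (m.mapDomain u)
    rw [← Finsupp.toMultiset_map, hs] at h2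
    rw [Finsupp.prod_mapDomain_index (by simp) (by intros; rw [pow_add])] at h2
    rw [← h2]
    simp [mul_assoc]
  rw [this]
  exact isQuartic_monomial i j k l

section Multilinear
variable {f : Ten → ℂ}

lemma IsQuartic.add₂ (hf : IsQuartic f) (x y a c d : Ten) :
    pol f a (x + y) c d = pol f a x c d + pol f a y c d := by
  rw [← pol_swap₁, hf.1, pol_swap₁, pol_swap₁ f a y]

lemma IsQuartic.smul₂ (hf : IsQuartic f) (s : ℂ) (x a c d : Ten) :
    pol f a (s • x) c d = s * pol f a x c d := by
  rw [← pol_swap₁, hf.2.1, pol_swap₁]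

lemma IsQuartic.add₃ (hf : IsQuartic f) (x y a b d : Ten) :
    pol f a b (x + y) d = pol f a b x d + pol f a b y d := by
  rw [← pol_swap₂, hf.add₂, pol_swap₂, pol_swap₂ f a b y]

lemma IsQuartic.smul₃ (hf : IsQuartic f) (s : ℂ) (x a b d : Ten) :
    pol f a b (s • x) d = s * pol f a b x d := by
  rw [← pol_swap₂, hf.smul₂, pol_swap₂]

lemma IsQuartic.add₄ (hf : IsQuartic f) (x y a b c : Ten) :
    pol f a b c (x + y) = pol f a b c x + pol f a b c y := by
  rw [← pol_swap₃, hf.add₃, pol_swap₃, pol_swap₃ f a b c y]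

lemma IsQuartic.smul₄ (hf : IsQuartic f) (s : ℂ) (x a b c : Ten) :
    pol f a b c (s • x) = s * pol f a b c x := by
  rw [← pol_swap₃, hf.smul₃, pol_swap₃]

lemma eq_zero_of_single (L : Ten → ℂ) (h1 : ∀ x y, L (x + y) = L x + L y)
    (h2 : ∀ (s : ℂ) x, L (s • x) = s * L x) (h3 : ∀ p, L (Pi.single p 1) = 0) (x : Ten) :
    L x = 0 := by
  let M : Ten →ₗ[ℂ] ℂ := { toFun := L, map_add' := h1, map_smul' := h2 }
  have : M = 0 := by
    refine LinearMap.pi_ext' fun p => LinearMap.ext_ring ?_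
    exact h3 p
  exact congrArg (fun N : Ten →ₗ[ℂ] ℂ => N x) this

/-- A quartic form vanishes once its polarization vanishes on all basis tensors. -/
lemma IsQuartic.eq_zero (hf : IsQuartic f)
    (h : ∀ a b c d, pol f (Pi.single a 1) (Pi.single b 1) (Pi.single c 1) (Pi.single d 1) = 0) :
    f = 0 := by
  have h1 : ∀ x b c d, pol f x (Pi.single b 1) (Pi.single c 1) (Pi.single d 1) = 0 :=
    fun x b c d => eq_zero_of_single (fun x => pol f x _ _ _) (fun x y => hf.1 x y _ _ _)
      (fun s x => hf.2.1 s x _ _ _) (fun p => h p b c d) x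
  have h2 : ∀ x y c d, pol f x y (Pi.single c 1) (Pi.single d 1) = 0 :=
    fun x y c d => eq_zero_of_single (fun y => pol f x y _ _) (fun y z => hf.add₂ y z _ _ _)
      (fun s y => hf.smul₂ s y _ _ _) (fun p => h1 x p c d) y
  have h3 : ∀ x y z d, pol f x y z (Pi.single d 1) = 0 :=
    fun x y z d => eq_zero_of_single (fun z => pol f x y z _) (fun y z => hf.add₃ y z _ _ _)
      (fun s y => hf.smul₃ s y _ _ _) (fun p => h2 x y p d) z
  have h4 : ∀ x y z w, pol f x y z w = 0 :=
    fun x y z w => eq_zero_of_single (fun w => pol f x y z w) (fun y z => hf.add₄ y z _ _ _)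
      (fun s y => hf.smul₄ s y _ _ _) (fun p => h3 x y z p) w
  funext u
  have := hf.2.2 u
  rw [h4] at this
  simpa using this.symm

end Multilinear

/-! ### Invariance of the polarization -/

lemma actTensor_add (g : Fin 4 → Matrix.SpecialLinearGroup (Fin 2) ℂ) (u v : Ten) :
    actTensor g (u + v) = actTensor g u + actTensor g v := by
  funext p
  simp [actTensor, mul_add, Finset.sum_add_distrib]

lemma pol_act {f : Ten → ℂ} {g : Fin 4 → Matrix.SpecialLinearGroup (Fin 2) ℂ}
    (h : ∀ u, f (actTensor g u) = f u) (a b c d : Ten) :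
    pol f (actTensor g a) (actTensor g b) (actTensor g c) (actTensor g d) = pol f a b c d := by
  simp only [pol, ← actTensor_add, h]

/-- A matrix acting on the single slot `m` sends the basis tensor `e_q` to a combination of the two
basis tensors that differ from it at most in slot `m`. -/
lemma act_single (m : Fin 4) (A : Matrix.SpecialLinearGroup (Fin 2) ℂ) (q : Fin 4 → Fin 2) :
    actTensor (Function.update 1 m A) (Pi.single q 1) =
      A 0 (q m) • Pi.single (Function.update q m 0) 1 +
      A 1 (q m) • Pi.single (Function.update q m 1) 1 := by
  classical
  funext p
  have h0 : ∀ a : Fin 2, (Pi.single (Function.update q m a) (1 : ℂ) : Ten) p =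
      if p m = a then ∏ i ∈ Finset.univ.erase m, (1 : Matrix (Fin 2) (Fin 2) ℂ) (p i) (q i)
      else 0 := by
    intro a
    rw [Pi.single_apply]
    simp only [Matrix.one_apply, Finset.prod_ite_zero, Function.eq_update_iff]
    simp only [Finset.mem_erase, Finset.mem_univ, and_true, Finset.prod_const_one]
    split_ifs <;> simp_all
  simp only [Pi.add_apply, Pi.smul_apply, smul_eq_mul, h0]
  simp only [actTensor, Pi.single_apply, mul_ite, mul_one, mul_zero, Finset.sum_ite_eq',
    Finset.mem_univ, if_true]
  rw [← Finset.mul_prod_erase _ _ (Finset.mem_univ m)]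
  have h1 : ∏ i ∈ Finset.univ.erase m, ((Function.update (1 : Fin 4 → Matrix.SpecialLinearGroup (Fin 2) ℂ) m A i :
      Matrix.SpecialLinearGroup (Fin 2) ℂ) : Matrix (Fin 2) (Fin 2) ℂ) (p i) (q i) =
      ∏ i ∈ Finset.univ.erase m, (1 : Matrix (Fin 2) (Fin 2) ℂ) (p i) (q i) := by
    refine Finset.prod_congr rfl fun i hi => ?_
    rw [Function.update_of_ne (Finset.ne_of_mem_erase hi)]
    simp
  rw [h1, Function.update_self]
  generalize ∏ i ∈ Finset.univ.erase m, (1 : Matrix (Fin 2) (Fin 2) ℂ) (p i) (q i) = r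
  rcases Fin.exists_fin_two.mp ⟨p m, rfl⟩ with h | h <;> simp [h]

/-- The value of the polarization of `f` on four basis tensors. The argument is indexed by slots:
`q m r` is the index that the `r`-th basis tensor has in slot `m`, so `q m` is the column of four
indices on which the `m`-th copy of `SL(2)` acts. -/
noncomputable def coef (f : Ten → ℂ) (q : Fin 4 → Fin 4 → Fin 2) : ℂ :=
  pol f (Pi.single (fun m => q m 0) 1) (Pi.single (fun m => q m 1) 1)
    (Pi.single (fun m => q m 2) 1) (Pi.single (fun m => q m 3) 1)

/-- As a function of the column in slot `m`, the coefficients of a form invariant under `A` in slot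
`m` form an `A`-invariant element of `((ℂ²)^{⊗4})*`. -/
lemma coef_act {f : Ten → ℂ} (hf : IsQuartic f) (m : Fin 4)
    (A : Matrix.SpecialLinearGroup (Fin 2) ℂ)
    (h : ∀ u, f (actTensor (Function.update 1 m A) u) = f u) (q : Fin 4 → Fin 4 → Fin 2)
    (i j k l : Fin 2) :
    coef f (Function.update q m ![i, j, k, l]) =
      ∑ a, ∑ b, ∑ c, ∑ d, A a i * A b j * A c k * A d l *
        coef f (Function.update q m ![a, b, c, d]) := by
  have hrow : ∀ (c : Fin 4 → Fin 2) (r : Fin 4), (fun n => Function.update q m c n r) =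
      Function.update (fun n => q n r) m (c r) := by
    intro c r
    funext n
    by_cases hn : n = m
    · subst hn; simp
    · simp [hn]
  simp only [coef, hrow]
  rw [← pol_act h]
  simp only [act_single, Function.update_self, Function.update_idem, hf.1, hf.2.1, hf.add₂,
    hf.smul₂, hf.add₃, hf.smul₃, hf.add₄, hf.smul₄, Fin.sum_univ_two]
  simp
  ring

/-- The `SL(2)`-invariant 4-linear forms on `ℂ²`: they satisfy one linear relation among the values
on the columns `0011`, `0101`, `0110`, and are determined by these three values. -/
lemma column_invariant (y : Fin 2 → Fin 2 → Fin 2 → Fin 2 → ℂ)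
    (h : ∀ (A : Matrix.SpecialLinearGroup (Fin 2) ℂ) i j k l, y i j k l =
      ∑ a, ∑ b, ∑ c, ∑ d, A a i * A b j * A c k * A d l * y a b c d) :
    y 0 0 1 1 + y 0 1 0 1 + y 0 1 1 0 = 0 ∧
    (y 0 0 1 1 = 0 → y 0 1 0 1 = 0 → y 0 1 1 0 = 0 → ∀ i j k l, y i j k l = 0) := by
  -- `hD` kills every column without two zeros and two ones (such a column is scaled by a power
  -- of 2 other than 1), `hU` expands the vanishing value on `0111` into the relation, and `hW`
  -- identifies each column with its complement.
  have hD := h ⟨!![2, 0; 0, 2⁻¹], by simp⟩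
  have hU := h ⟨!![1, 1; 0, 1], by simp⟩ 0 1 1 1
  have hW := h ⟨!![0, 1; -1, 0], by simp⟩
  simp [Fin.sum_univ_two, Fin.forall_fin_two] at hD hU hW ⊢
  obtain ⟨⟨⟨⟨a1, a2⟩, a3⟩, a4, a5⟩, ⟨b1, b2⟩, b3, b4, b5⟩ := hD
  obtain ⟨⟨⟨⟨-, -⟩, -, w1⟩, ⟨-, w2⟩, w3, -⟩, -⟩ := hW
  refine ⟨?_, fun e1 e2 e3 => ?_⟩
  · linear_combination -hU + 15⁻¹ * a1 + 3⁻¹ * a2 + 3⁻¹ * a3 + 3⁻¹ * a4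
  · rw [e1] at w1
    rw [e2] at w2
    rw [e3] at w3
    refine ⟨⟨⟨⟨?_, ?_⟩, ?_, ?_⟩, ⟨?_, ?_⟩, ?_, ?_⟩, ⟨⟨?_, ?_⟩, ?_, ?_⟩, ⟨?_, ?_⟩, ?_, ?_⟩ <;>
      grind

/-! ### Three coefficients determine an invariant -/

/-- The columns `0011`, `0101`, `0110`: the balanced columns up to complement. -/
def cols : Fin 3 → Fin 4 → Fin 2 := ![![0, 0, 1, 1], ![0, 1, 0, 1], ![0, 1, 1, 0]]

/-- Slot by slot, `coef f` sums to zero over the three balanced columns and is determined by its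
values on them. -/
lemma coef_column {f : Ten → ℂ} (hf : IsQuartic f)
    (h : ∀ g u, f (actTensor g u) = f u) (m : Fin 4) (q : Fin 4 → Fin 4 → Fin 2) :
    (∑ x, coef f (Function.update q m (cols x)) = 0) ∧
    ((∀ x, coef f (Function.update q m (cols x)) = 0) → coef f q = 0) := by
  obtain ⟨h1, h2⟩ := column_invariant (fun i j k l => coef f (Function.update q m ![i, j, k, l]))
    (fun A i j k l => coef_act hf m A (h _) q i j k l)
  refine ⟨by rw [Fin.sum_univ_three]; exact h1, fun hx => ?_⟩
  have h3 := h2 (hx 0) (hx 1) (hx 2) (q m 0) (q m 1) (q m 2) (q m 3)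
  have h4 : ![q m 0, q m 1, q m 2, q m 3] = q m := by
    ext i; fin_cases i <;> rfl
  rwa [h4, Function.update_eq_self] at h3

/-- The polarization is symmetric, so permuting the four basis tensors permutes the entries of all
columns simultaneously. -/
lemma coef_perm (f : Ten → ℂ) (q : Fin 4 → Fin 4 → Fin 2) :
    coef f (fun m => q m ∘ Equiv.swap 1 2) = coef f q ∧
    coef f (fun m => q m ∘ Equiv.swap 2 3) = coef f q := by
  constructor
  · exact pol_swap₂ _ _ _ _ _
  · exact pol_swap₃ _ _ _ _ _

/-- The coefficients of `f` on balanced columns, a table indexed by `(Fin 3)^4`. -/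
noncomputable def red (f : Ten → ℂ) (x : Fin 4 → Fin 3) : ℂ := coef f (fun m => cols (x m))

/-- The permutations of the last three basis tensors permute the three balanced columns, so the
table `red f` is invariant under `S₃` acting diagonally. -/
lemma red_perm (f : Ten → ℂ) (x : Fin 4 → Fin 3) :
    red f (Equiv.swap 0 1 ∘ x) = red f x ∧ red f (Equiv.swap 1 2 ∘ x) = red f x := by
  have h1 : ∀ i, cols (Equiv.swap 0 1 i) = cols i ∘ Equiv.swap 1 2 := by decide
  have h2 : ∀ i, cols (Equiv.swap 1 2 i) = cols i ∘ Equiv.swap 2 3 := by decide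
  constructor
  · simp only [red, Function.comp_apply, h1]
    exact (coef_perm f _).1
  · simp only [red, Function.comp_apply, h2]
    exact (coef_perm f _).2

lemma red_sum {f : Ten → ℂ} (hf : IsQuartic f)
    (h : ∀ g u, f (actTensor g u) = f u) (m : Fin 4) (x : Fin 4 → Fin 3) :
    ∑ i, red f (Function.update x m i) = 0 := by
  rw [← (coef_column hf h m (fun m => cols (x m))).1]
  refine Finset.sum_congr rfl fun i _ => ?_
  rw [red]
  congr 1
  funext n
  by_cases hn : n = m
  · subst hn; simp
  · simp [hn]

lemma eq_zero_of_red {f : Ten → ℂ} (hf : IsQuartic f)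
    (h : ∀ g u, f (actTensor g u) = f u) (h0 : ∀ x, red f x = 0) : f = 0 := by
  have h1 : ∀ q, coef f q = 0 := by
    intro q
    refine (coef_column hf h 0 _).2 fun x₀ => (coef_column hf h 1 _).2 fun x₁ =>
      (coef_column hf h 2 _).2 fun x₂ => (coef_column hf h 3 _).2 fun x₃ => ?_
    rw [← h0 ![x₀, x₁, x₂, x₃], red]
    congr 1
    funext m
    fin_cases m <;> simp [Function.update]
  refine hf.eq_zero fun a b c d => ?_
  exact h1 fun m => ![a m, b m, c m, d m]

/-- An `S₃`-invariant table on `(Fin 3)^4` all of whose line sums vanish is determined by three of its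
values: this is `dim (W^{⊗4})^{S₃} ≤ 3` for the 2-dimensional irreducible representation `W`. -/
lemma table_eq_zero (y : Fin 3 → Fin 3 → Fin 3 → Fin 3 → ℂ)
    (p₁ : ∀ i j k l, y (Equiv.swap 0 1 i) (Equiv.swap 0 1 j) (Equiv.swap 0 1 k)
      (Equiv.swap 0 1 l) = y i j k l)
    (p₂ : ∀ i j k l, y (Equiv.swap 1 2 i) (Equiv.swap 1 2 j) (Equiv.swap 1 2 k)
      (Equiv.swap 1 2 l) = y i j k l)
    (s₁ : ∀ j k l, ∑ i, y i j k l = 0) (s₂ : ∀ i k l, ∑ j, y i j k l = 0)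
    (s₃ : ∀ i j l, ∑ k, y i j k l = 0) (s₄ : ∀ i j k, ∑ l, y i j k l = 0)
    (h₁ : y 0 0 1 1 = 0) (h₂ : y 0 1 0 1 = 0) (h₃ : y 0 1 1 0 = 0) (i j k l : Fin 3) :
    y i j k l = 0 := by
  have perm : ∀ ρ : Equiv.Perm (Fin 3), ∀ i j k l, y (ρ i) (ρ j) (ρ k) (ρ l) = y i j k l := by
    have hρ : ∀ ρ : Equiv.Perm (Fin 3), ρ = 1 ∨ ρ = Equiv.swap 0 1 ∨ ρ = Equiv.swap 1 2 ∨
        ρ = Equiv.swap 0 1 * Equiv.swap 1 2 ∨ ρ = Equiv.swap 1 2 * Equiv.swap 0 1 ∨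
        ρ = Equiv.swap 0 1 * (Equiv.swap 1 2 * Equiv.swap 0 1) := by decide
    intro ρ i j k l
    rcases hρ ρ with rfl | rfl | rfl | rfl | rfl | rfl <;>
      simp only [Equiv.Perm.mul_apply, Equiv.Perm.one_apply, p₁, p₂]
  -- Every orbit has a representative in which new symbols appear in the order `0, 1, 2`.
  have orbit : ∀ i j k l : Fin 3, ∃ ρ : Equiv.Perm (Fin 3), ρ i = 0 ∧
      (ρ j = 0 ∨ ρ j = 1) ∧ (ρ j = 0 → ρ k = 0 ∨ ρ k = 1) ∧
      (ρ j = 0 → ρ k = 0 → ρ l = 0 ∨ ρ l = 1) := by decide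
  simp only [Fin.sum_univ_three] at s₁ s₂ s₃ s₄
  have c : ∀ j k l : Fin 3, (j = 0 ∨ j = 1) → (j = 0 → k = 0 ∨ k = 1) →
      (j = 0 → k = 0 → l = 0 ∨ l = 1) → y 0 j k l = 0 := by
    have e0 : y 0 0 0 2 = y 0 0 0 1 := (p₂ 0 0 0 1)
    have e1 : y 0 0 2 0 = y 0 0 1 0 := (p₂ 0 0 1 0)
    have e2 : y 0 2 0 0 = y 0 1 0 0 := (p₂ 0 1 0 0)
    have e3 : y 0 2 1 1 = y 0 1 2 2 := (p₂ 0 1 2 2)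
    have e4 : y 0 1 1 1 = y 0 2 2 2 := (p₂ 0 2 2 2)
    have e5 : y 0 1 1 1 = y 1 0 0 0 := (p₁ 1 0 0 0)
    have e6 : y 2 0 0 0 = y 1 0 0 0 := (p₂ 1 0 0 0)
    have e7 : y 0 0 2 1 = y 0 0 1 2 := (p₂ 0 0 1 2)
    have e8 : y 0 2 0 1 = y 0 1 0 2 := (p₂ 0 1 0 2)
    have e9 : y 0 2 1 0 = y 0 1 2 0 := (p₂ 0 1 2 0)
    have a1 := s₄ 0 0 0
    have a2 := s₃ 0 0 0
    have a3 := s₂ 0 0 0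
    have a4 := s₁ 0 0 0
    have b1 := s₄ 0 0 1
    have b2 := s₄ 0 1 0
    have b3 := s₄ 0 1 1
    have b4 := s₄ 0 1 2
    have b5 := s₃ 0 1 0
    have b6 := s₃ 0 1 1
    have b7 := s₃ 0 1 2
    have b8 := s₂ 0 1 1
    -- `a1`, …, `a4` give `y 0001 = … = -y 0000 / 2`; then the relation over `012*` reads
    -- `3/2 y 0000 = y 0011 + y 0101 + y 0110`.
    have z : y 0 0 0 0 = 0 := by grind
    intro j k l hj hk hl
    fin_cases j <;> fin_cases k <;> fin_cases l <;> simp at hj hk hl ⊢ <;> grind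
  obtain ⟨ρ, hi, hj, hk, hl⟩ := orbit i j k l
  rw [← perm ρ, hi]
  exact c _ _ _ hj hk hl

lemma eq_zero_of_three {f : Ten → ℂ} (hf : IsQuartic f)
    (h : ∀ g u, f (actTensor g u) = f u) (h₁ : red f ![0, 0, 1, 1] = 0)
    (h₂ : red f ![0, 1, 0, 1] = 0) (h₃ : red f ![0, 1, 1, 0] = 0) : f = 0 := by
  refine eq_zero_of_red hf h fun x => ?_
  have hx : x = ![x 0, x 1, x 2, x 3] := by ext i; fin_cases i <;> rfl
  rw [hx]
  refine table_eq_zero (fun i j k l => red f ![i, j, k, l]) ?_ ?_ ?_ ?_ ?_ ?_ h₁ h₂ h₃ _ _ _ _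
  · intro i j k l
    rw [← (red_perm f ![i, j, k, l]).1]
    congr 1; ext i; fin_cases i <;> rfl
  · intro i j k l
    rw [← (red_perm f ![i, j, k, l]).2]
    congr 1; ext i; fin_cases i <;> rfl
  · intro j k l
    rw [← red_sum hf h 0 ![0, j, k, l]]
    refine Finset.sum_congr rfl fun a _ => ?_
    congr 1; ext i; fin_cases i <;> rfl
  · intro j k l
    rw [← red_sum hf h 1 ![j, 0, k, l]]
    refine Finset.sum_congr rfl fun a _ => ?_
    congr 1; ext i; fin_cases i <;> rfl
  · intro j k l
    rw [← red_sum hf h 2 ![j, k, 0, l]]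
    refine Finset.sum_congr rfl fun a _ => ?_
    congr 1; ext i; fin_cases i <;> rfl
  · intro j k l
    rw [← red_sum hf h 3 ![j, k, l, 0]]
    refine Finset.sum_congr rfl fun a _ => ?_
    congr 1; ext i; fin_cases i <;> rfl

/-- Three coefficients of an invariant quartic, as linear coordinates on the space of invariants. -/
noncomputable def coords : quarticInvFuns →ₗ[ℂ] (Fin 3 → ℂ) where
  toFun f := ![red f ![0, 0, 1, 1], red f ![0, 1, 0, 1], red f ![0, 1, 1, 0]]
  map_add' f g := by simp [red, coef, pol_add]
  map_smul' s f := by simp [red, coef, pol_smul]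

lemma coords_injective : Function.Injective coords := by
  rw [← LinearMap.ker_eq_bot, LinearMap.ker_eq_bot']
  rintro ⟨f, ⟨Q, hQ, hfQ⟩, hinv⟩ hf
  have hq : IsQuartic f := by
    rw [funext hfQ]
    exact isQuartic_eval Q ((mem_homogeneousSubmodule _ _).mp hQ)
  exact Subtype.ext (eq_zero_of_three hq hinv (congrFun hf 0) (congrFun hf 1) (congrFun hf 2))

/-! ### The determinants -/

lemma delta_act (τ : Equiv.Perm (Fin 4)) (g : Fin 4 → Matrix.SpecialLinearGroup (Fin 2) ℂ)
    (u : Ten) : delta τ (actTensor g u) = delta τ u := by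
  -- The flattening of `g • u` is `(g_i ⊗ g_j) M (g_k ⊗ g_l)ᵀ`, with Kronecker factors of
  -- determinant 1.
  have key : (Matrix.of fun r c : Fin 2 × Fin 2 =>
      actTensor g u (fun s => ![r.1, r.2, c.1, c.2] (τ.symm s))) =
      Matrix.kroneckerMap (· * ·) (g (τ 0) : Matrix (Fin 2) (Fin 2) ℂ) (g (τ 1)).1 *
      (Matrix.of fun r c : Fin 2 × Fin 2 => u (fun s => ![r.1, r.2, c.1, c.2] (τ.symm s))) *
      (Matrix.kroneckerMap (· * ·) (g (τ 2) : Matrix (Fin 2) (Fin 2) ℂ) (g (τ 3)).1).transpose := by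
    have hp : ∀ p q : Fin 4 → Fin 2, ∏ m, (g m : Matrix (Fin 2) (Fin 2) ℂ) (p m) (q m) =
        ∏ s, (g (τ s) : Matrix (Fin 2) (Fin 2) ℂ) (p (τ s)) (q (τ s)) :=
      fun p q => (Equiv.prod_comp τ _).symm
    have hφ : ∀ p : Fin 4 → Fin 2, (Equiv.arrowCongr τ (Equiv.refl (Fin 2))) p =
        fun s => p (τ.symm s) := fun p => rfl
    ext r c
    simp only [Matrix.of_apply, actTensor]
    rw [← (Equiv.arrowCongr τ (Equiv.refl (Fin 2))).sum_comp, sum_pi_four]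
    simp only [hφ, hp, Equiv.symm_apply_apply, Fin.prod_univ_four, Matrix.mul_apply,
      Matrix.of_apply, Matrix.kroneckerMap_apply,
      Matrix.transpose_apply, Fintype.sum_prod_type, Fin.sum_univ_two]
    simp only [Matrix.cons_val]
    ring
  rw [delta, key]
  simp [delta, Matrix.det_kronecker]

lemma isHomogeneous_det {ι n : Type*} [Fintype n] [DecidableEq n]
    (M : Matrix n n (MvPolynomial ι ℂ)) (hM : ∀ i j, (M i j).IsHomogeneous 1) :
    M.det.IsHomogeneous (Fintype.card n) := by
  rw [Matrix.det_apply']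
  refine IsHomogeneous.sum _ _ _ fun σ _ => ?_
  have h := IsHomogeneous.prod Finset.univ (fun i => M (σ i) i) (fun _ => 1) fun i _ => hM _ _
  rw [Finset.sum_const, smul_eq_mul, mul_one, Finset.card_univ] at h
  have h' := h.C_mul ((Equiv.Perm.sign σ : ℤ) : ℂ)
  rwa [map_intCast] at h'

lemma delta_mem (τ : Equiv.Perm (Fin 4)) : delta τ ∈ quarticInvFuns := by
  refine ⟨⟨Matrix.det (Matrix.of fun r c : Fin 2 × Fin 2 =>
    (X (fun s => ![r.1, r.2, c.1, c.2] (τ.symm s)) : MvPolynomial (Fin 4 → Fin 2) ℂ)), ?_, ?_⟩,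
    delta_act τ⟩
  · rw [mem_homogeneousSubmodule]
    exact isHomogeneous_det _ fun i j => isHomogeneous_X ℂ _
  · intro u
    rw [RingHom.map_det, delta]
    refine congrArg Matrix.det ?_
    ext r c
    simp

/-! ### The square of the generalized determinant -/

/-- The invariant area form `ε` on `ℂ²`. -/
def J : Fin 2 → Fin 2 → ℂ := ![![0, 1], ![-1, 0]]

lemma sum_perm_two (F : Equiv.Perm (Fin 2) → ℂ) :
    ∑ σ, F σ = F 1 + F (Equiv.swap 0 1) := by
  have : (Finset.univ : Finset (Equiv.Perm (Fin 2))) = {1, Equiv.swap 0 1} := by decide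
  rw [this, Finset.sum_pair (by decide)]

lemma genDet_eq (u : Ten) : genDet 2 4 u =
    u ![0, 0, 0, 0] * u ![1, 1, 1, 1] - u ![0, 0, 0, 1] * u ![1, 1, 1, 0]
    - u ![0, 0, 1, 0] * u ![1, 1, 0, 1] + u ![0, 0, 1, 1] * u ![1, 1, 0, 0]
    - u ![0, 1, 0, 0] * u ![1, 0, 1, 1] + u ![0, 1, 0, 1] * u ![1, 0, 1, 0]
    + u ![0, 1, 1, 0] * u ![1, 0, 0, 1] - u ![0, 1, 1, 1] * u ![1, 0, 0, 0] := by
  have hrow : ∀ (a b c d : Equiv.Perm (Fin 2)) (h : Fin 2),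
      (fun j => (![a, b, c, d] : Fin 4 → Equiv.Perm (Fin 2)) j h) = ![a h, b h, c h, d h] := by
    intro a b c d h
    ext j; fin_cases j <;> rfl
  have hone : ∀ a b c d : Equiv.Perm (Fin 2), (∀ j : Fin 4, (j : ℕ) = 0 →
      (![a, b, c, d] : Fin 4 → Equiv.Perm (Fin 2)) j = 1) ↔ a = 1 := by
    intro a b c d
    simp
  rw [genDet, Finset.sum_filter, sum_pi_four]
  simp only [hone, hrow, sum_perm_two, Fin.prod_univ_two, Fin.prod_univ_four]
  simp
  ring

/-- Twice `P_{2,4}` is the quadratic form of `ε ⊗ ε ⊗ ε ⊗ ε`. -/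
lemma two_mul_genDet (u : Ten) : 2 * genDet 2 4 u =
    ∑ p : Fin 4 → Fin 2, ∑ q : Fin 4 → Fin 2, (∏ m, J (p m) (q m)) * (u p * u q) := by
  rw [genDet_eq]
  simp only [sum_pi_four, Fin.sum_univ_two, Fin.prod_univ_four]
  simp [J]
  ring

lemma J_act (A : Matrix.SpecialLinearGroup (Fin 2) ℂ) (i j : Fin 2) :
    ∑ a, ∑ b, J a b * A a i * A b j = J i j := by
  have h := A.det_coe
  rw [Matrix.det_fin_two] at h
  fin_cases i <;> fin_cases j <;> simp [J, Fin.sum_univ_two] <;> grind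

lemma sum_comm_pairs {P : Type*} [Fintype P] (F : P → P → P → P → ℂ) :
    ∑ p, ∑ q, ∑ i, ∑ j, F p q i j = ∑ i, ∑ j, ∑ p, ∑ q, F p q i j := by
  calc ∑ p, ∑ q, ∑ i, ∑ j, F p q i j
      = ∑ x : P × P, ∑ y : P × P, F x.1 x.2 y.1 y.2 := by simp only [Fintype.sum_prod_type]
    _ = ∑ y : P × P, ∑ x : P × P, F x.1 x.2 y.1 y.2 := Finset.sum_comm
    _ = _ := by simp only [Fintype.sum_prod_type]

lemma genDet_act (g : Fin 4 → Matrix.SpecialLinearGroup (Fin 2) ℂ) (u : Ten) :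
    genDet 2 4 (actTensor g u) = genDet 2 4 u := by
  have h2 : (2 : ℂ) ≠ 0 := two_ne_zero
  refine mul_left_cancel₀ h2 ?_
  rw [two_mul_genDet, two_mul_genDet]
  have h : ∀ i j : Fin 4 → Fin 2, ∏ m, J (i m) (j m) =
      ∑ p : Fin 4 → Fin 2, ∑ q : Fin 4 → Fin 2,
        ∏ m, (J (p m) (q m) * g m (p m) (i m) * g m (q m) (j m)) := by
    intro i j
    rw [Finset.prod_congr rfl fun m _ => (J_act (g m) (i m) (j m)).symm]
    simp only [Fintype.prod_sum]
  conv_rhs => simp only [h, Finset.sum_mul]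
  rw [← sum_comm_pairs]
  refine Finset.sum_congr rfl fun p _ => Finset.sum_congr rfl fun q _ => ?_
  simp only [actTensor]
  rw [Finset.sum_mul_sum, Finset.mul_sum]
  refine Finset.sum_congr rfl fun i _ => ?_
  rw [Finset.mul_sum]
  refine Finset.sum_congr rfl fun j _ => ?_
  simp only [Finset.prod_mul_distrib]
  ring

/-- The polynomial whose evaluation is `P_{2,4}`. -/
noncomputable def genPoly : MvPolynomial (Fin 4 → Fin 2) ℂ :=
  ∑ σ ∈ Finset.univ.filter
      (fun σ : Fin 4 → Equiv.Perm (Fin 2) => ∀ j : Fin 4, (j : ℕ) = 0 → σ j = 1),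
    C ((∏ j, (Equiv.Perm.sign (σ j) : ℤ)) : ℂ) * ∏ h : Fin 2, X (fun j => σ j h)

lemma genDet_sq_mem : (fun u : Ten => genDet 2 4 u ^ 2) ∈ quarticInvFuns := by
  refine ⟨⟨genPoly ^ 2, ?_, ?_⟩, fun g u => by simp only [genDet_act]⟩
  · rw [mem_homogeneousSubmodule]
    have : genPoly.IsHomogeneous 2 := by
      refine IsHomogeneous.sum _ _ _ fun σ _ => ?_
      refine IsHomogeneous.C_mul ?_ _
      exact IsHomogeneous.prod Finset.univ _ (fun _ => 1) fun i _ => isHomogeneous_X ℂ _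
    exact this.pow 2
  · intro u
    simp [genPoly, genDet, map_sum, map_prod]

/-! ### Dimension count -/

/-- `e₀₀₀₀ + e₁₁₁₁`, on which `P_{2,4}` is `1` and `Δ(1234)`, `Δ(1324)` vanish. -/
def ghz : Ten := fun p => if p = ![0, 0, 0, 0] ∨ p = ![1, 1, 1, 1] then 1 else 0
/-- The product of maximally entangled pairs in slots `1,3` and `2,4`; its `12|34` flattening is the
identity matrix. -/
def bell₁₃ : Ten := fun p => if p 0 = p 2 ∧ p 1 = p 3 then 1 else 0
/-- The product of maximally entangled pairs in slots `1,2` and `3,4`; its `13|24` flattening is the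
identity matrix. -/
def bell₁₂ : Ten := fun p => if p 0 = p 1 ∧ p 2 = p 3 then 1 else 0

lemma delta_one_eq_zero (u : Ten) (h : ∀ c d, u ![0, 1, c, d] = 0) : delta 1 u = 0 := by
  refine Matrix.det_eq_zero_of_row_eq_zero (0, 1) fun c => ?_
  rw [← h c.1 c.2]
  simp only [Matrix.of_apply]
  congr 1

lemma delta_swap_eq_zero (u : Ten) (h : ∀ c d, u ![0, c, 1, d] = 0) :
    delta (Equiv.swap 1 2) u = 0 := by
  refine Matrix.det_eq_zero_of_row_eq_zero (0, 1) fun c => ?_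
  rw [← h c.1 c.2]
  simp only [Matrix.of_apply]
  congr 1; ext i; fin_cases i <;> rfl

lemma delta_one_bell : delta 1 bell₁₃ = 1 := by
  rw [delta, ← Matrix.det_one (n := Fin 2 × Fin 2)]
  congr 1
  ext r c
  simp [bell₁₃, Matrix.one_apply, Prod.ext_iff, Equiv.Perm.one_def]
  split_ifs with h
  exacts [if_pos h, if_neg h]

lemma delta_swap_bell : delta (Equiv.swap 1 2) bell₁₂ = 1 := by
  have h : (Equiv.swap 1 2 : Equiv.Perm (Fin 4)) 0 = 0 ∧ (Equiv.swap 1 2 : Equiv.Perm (Fin 4)) 1 = 2 ∧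
    (Equiv.swap 1 2 : Equiv.Perm (Fin 4)) 2 = 1 ∧ (Equiv.swap 1 2 : Equiv.Perm (Fin 4)) 3 = 3 := by
    decide
  rw [delta, ← Matrix.det_one (n := Fin 2 × Fin 2)]
  congr 1
  ext r c
  simp [bell₁₂, Matrix.one_apply, Prod.ext_iff, h]

/-- A basis of the invariants: `P_{2,4}²`, `Δ(1234)`, `Δ(1324)`. -/
noncomputable def vec : Fin 3 → Ten → ℂ :=
  ![fun u => genDet 2 4 u ^ 2, delta 1, delta (Equiv.swap 1 2)]

lemma vec_linearIndependent : LinearIndependent ℂ vec := by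
  rw [Fintype.linearIndependent_iff]
  intro s hs
  simp only [vec, Fin.sum_univ_three, Matrix.cons_val] at hs
  have e := fun u => congrFun hs u
  simp only [Pi.add_apply, Pi.smul_apply, smul_eq_mul, Pi.zero_apply] at e
  have e1 := e ghz
  have e2 := e bell₁₃
  have e3 := e bell₁₂
  rw [delta_one_eq_zero _ (by simp [ghz]), delta_swap_eq_zero _ (by simp [ghz])] at e1
  rw [delta_one_bell, delta_swap_eq_zero _ (by simp [bell₁₃])] at e2
  rw [delta_one_eq_zero _ (by simp [bell₁₂]), delta_swap_bell] at e3
  have hg : genDet 2 4 ghz = 1 := by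
    rw [genDet_eq]; simp [ghz]
  rw [hg] at e1
  have h0 : s 0 = 0 := by simpa using e1
  rw [h0] at e2 e3
  intro i
  fin_cases i
  · exact h0
  · simpa using e2
  · simpa using e3

end Quartic

/-- The space of `G`-invariant homogeneous degree-4 polynomial functions on tensor states
in `(ℂ^2)^{⊗4}` is 3-dimensional, contains every `Δ(ijkl)`, and is spanned by `P_{2,4}²`
together with `Δ(1234)`, `Δ(1324)` and `Δ(1423)`. -/
theorem stmt16 :
    Module.finrank ℂ quarticInvFuns = 3 ∧
    (∀ τ : Equiv.Perm (Fin 4), delta τ ∈ quarticInvFuns) ∧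
    quarticInvFuns = Submodule.span ℂ
      {fun u => (genDet 2 4 u) ^ 2, delta 1, delta (Equiv.swap 1 2),
        delta (Equiv.swap 2 3 * Equiv.swap 1 2)} := by
  have hfin : Module.Finite ℂ quarticInvFuns :=
    Module.Finite.of_injective Quartic.coords Quartic.coords_injective
  have hle : Module.finrank ℂ quarticInvFuns ≤ 3 := by
    simpa using LinearMap.finrank_le_finrank_of_injective Quartic.coords_injective
  have hW : Module.finrank ℂ (Submodule.span ℂ (Set.range Quartic.vec)) = 3 := by
    simpa using finrank_span_eq_card Quartic.vec_linearIndependent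
  have hspan : Submodule.span ℂ {fun u => (genDet 2 4 u) ^ 2, delta 1, delta (Equiv.swap 1 2),
      delta (Equiv.swap 2 3 * Equiv.swap 1 2)} ≤ quarticInvFuns := by
    rw [Submodule.span_le]
    rintro f (rfl | rfl | rfl | rfl)
    · exact Quartic.genDet_sq_mem
    all_goals exact Quartic.delta_mem _
  have hWspan : Submodule.span ℂ (Set.range Quartic.vec) ≤
      Submodule.span ℂ {fun u => (genDet 2 4 u) ^ 2, delta 1, delta (Equiv.swap 1 2),
        delta (Equiv.swap 2 3 * Equiv.swap 1 2)} := by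
    refine Submodule.span_mono ?_
    rintro _ ⟨i, rfl⟩
    fin_cases i <;> simp [Quartic.vec]
  have hEq : Submodule.span ℂ (Set.range Quartic.vec) = quarticInvFuns :=
    Submodule.eq_of_le_of_finrank_le (hWspan.trans hspan) (hle.trans hW.ge)
  exact ⟨hEq ▸ hW, Quartic.delta_mem, le_antisymm (hEq.symm.le.trans hWspan) hspan⟩
end

section
/- The space of G-invariant homogeneous degree-4 polynomial functions on tensor states in (ℂ^2)^{⊗3}, where G = SL(2,ℂ)^3, is one-dimensional. -/
/-!
The invariant is Cayley's hyperdeterminant: writing a tensor as a pair of `2 × 2` slices `A`, `B`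
along its first index, it is the discriminant of the binary quadratic form
`(s, t) ↦ det (s A + t B)`. The last two factors of `SL(2)^3` fix this quadratic form, and the first
one acts on it by a unimodular substitution, so the discriminant is invariant (`hyperdet_mem`).

Conversely, a tensor with nonzero hyperdeterminant and `det B ≠ 0` is a scalar multiple of a tensor
in the orbit of `e₀⊗e₀⊗e₀ + e₁⊗e₁⊗e₁` (`exists_eq_smul_act_ghz`): a unimodular change of the pair
`A`, `B` makes both slices of rank one, and their column and row vectors are then independent. Hence
a degree-4 invariant is determined on a nonempty Zariski-open set, and so everywhere, by its value
at this single tensor, where the hyperdeterminant takes the value `1`.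
-/

open MvPolynomial

/-- The polarization of the determinant of `2 × 2` matrices:
`det (A + t B) = det A + t * mixedDet A B + t² * det B`. -/
def mixedDet {R : Type*} [CommRing R] (A B : Matrix (Fin 2) (Fin 2) R) : R :=
  A 0 0 * B 1 1 + A 1 1 * B 0 0 - (A 0 1 * B 1 0 + A 1 0 * B 0 1)

/-- The discriminant of the binary quadratic form `(s, t) ↦ det (s A + t B)`. -/
def discr {R : Type*} [CommRing R] (A B : Matrix (Fin 2) (Fin 2) R) : R :=
  mixedDet A B ^ 2 - 4 * (A.det * B.det)

/-- The `i`-th slice of a `2 × 2 × 2` array along its first index. -/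
def slice {R : Type*} (u : (Fin 3 → Fin 2) → R) (i : Fin 2) : Matrix (Fin 2) (Fin 2) R :=
  Matrix.of fun j k => u ![i, j, k]

/-- The Cayley hyperdeterminant, as a polynomial in the eight coordinates. -/
noncomputable def hyperdet : MvPolynomial (Fin 3 → Fin 2) ℂ :=
  discr (slice X 0) (slice X 1)

/-- The determinant of the slice `p₁ = 1` (with indices in `{0, 1}`), as a polynomial. -/
noncomputable def lowerDet : MvPolynomial (Fin 3 → Fin 2) ℂ :=
  (slice X 1).det

/-- The tensor `e₀⊗e₀⊗e₀ + e₁⊗e₁⊗e₁`. -/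
def ghz : (Fin 3 → Fin 2) → ℂ :=
  fun p => if p 0 = p 1 ∧ p 1 = p 2 then 1 else 0

lemma mixedDet_eq {R : Type*} [CommRing R] (A B : Matrix (Fin 2) (Fin 2) R) :
    mixedDet A B = (A + B).det - A.det - B.det := by
  simp only [mixedDet, Matrix.det_fin_two, Matrix.add_apply]
  ring

lemma discr_mul {R : Type*} [CommRing R] (h k A B : Matrix (Fin 2) (Fin 2) R)
    (hh : h.det = 1) (hk : k.det = 1) :
    discr (h * A * k) (h * B * k) = discr A B := by
  simp only [discr, mixedDet_eq, ← Matrix.add_mul, ← Matrix.mul_add, Matrix.det_mul, hh, hk,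
    one_mul, mul_one]

lemma discr_comb {R : Type*} [CommRing R] (a b c d : R) (A B : Matrix (Fin 2) (Fin 2) R) :
    discr (a • A + b • B) (c • A + d • B) = (a * d - b * c) ^ 2 * discr A B := by
  simp only [discr, mixedDet, Matrix.det_fin_two, Matrix.add_apply, Matrix.smul_apply, smul_eq_mul]
  ring

lemma eval_hyperdet (u : (Fin 3 → Fin 2) → ℂ) :
    eval u hyperdet = discr (slice u 0) (slice u 1) := by
  simp [hyperdet, discr, mixedDet, slice, Matrix.det_fin_two]

lemma eval_lowerDet (u : (Fin 3 → Fin 2) → ℂ) :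
    eval u lowerDet = (slice u 1).det := by
  simp [lowerDet, slice, Matrix.det_fin_two]

lemma eval_hyperdet_ghz : eval ghz hyperdet = 1 := by
  rw [eval_hyperdet]
  simp [discr, mixedDet, slice, Matrix.det_fin_two, ghz]

/-- The isomorphism writing a multi-index as the triple of its entries. -/
def tripleEquiv : (Fin 3 → Fin 2) ≃ Fin 2 × Fin 2 × Fin 2 where
  toFun p := (p 0, p 1, p 2)
  invFun t := ![t.1, t.2.1, t.2.2]
  left_inv p := by
    funext m
    fin_cases m <;> rfl
  right_inv t := rfl

lemma sum_triple (f : (Fin 3 → Fin 2) → ℂ) :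
    ∑ q, f q = ∑ i, ∑ j, ∑ k, f ![i, j, k] := by
  rw [← tripleEquiv.symm.sum_comp f]
  simp only [Fintype.sum_prod_type]
  rfl

lemma slice_actTensor (g : Fin 3 → Matrix.SpecialLinearGroup (Fin 2) ℂ)
    (u : (Fin 3 → Fin 2) → ℂ) (i : Fin 2) :
    slice (actTensor g u) i =
      (g 1 : Matrix (Fin 2) (Fin 2) ℂ) *
        ((g 0 : Matrix (Fin 2) (Fin 2) ℂ) i 0 • slice u 0 +
          (g 0 : Matrix (Fin 2) (Fin 2) ℂ) i 1 • slice u 1) *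
        (g 2 : Matrix (Fin 2) (Fin 2) ℂ).transpose := by
  ext j k
  simp only [slice, actTensor, sum_triple, Matrix.of_apply, Fin.prod_univ_three, Fin.sum_univ_two,
    Matrix.mul_apply, Matrix.add_apply, Matrix.smul_apply, Matrix.transpose_apply, smul_eq_mul,
    Matrix.cons_val_zero, Matrix.cons_val_one, Matrix.cons_val]
  ring

lemma hyperdet_isHomogeneous : hyperdet.IsHomogeneous 4 := by
  have hX (i j k l m n : Fin 2) :
      ((X ![i, j, k] * X ![l, m, n] : MvPolynomial (Fin 3 → Fin 2) ℂ)).IsHomogeneous 2 :=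
    (isHomogeneous_X ℂ _).mul (isHomogeneous_X ℂ _)
  have hdet (i : Fin 2) :
      (slice (X : _ → MvPolynomial (Fin 3 → Fin 2) ℂ) i).det.IsHomogeneous 2 := by
    rw [Matrix.det_fin_two]
    exact (hX ..).sub (hX ..)
  have hm : (mixedDet (slice (X : _ → MvPolynomial (Fin 3 → Fin 2) ℂ) 0)
      (slice X 1)).IsHomogeneous 2 :=
    ((hX ..).add (hX ..)).sub ((hX ..).add (hX ..))
  have h4 : (4 : MvPolynomial (Fin 3 → Fin 2) ℂ).IsHomogeneous 0 := isHomogeneous_C _ (4 : ℂ)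
  have := (hm.pow 2).sub (h4.mul ((hdet 0).mul (hdet 1)))
  exact this

lemma hyperdet_mem : hyperdet ∈ invPolySpace 2 3 4 := by
  refine ⟨hyperdet_isHomogeneous, fun g u => ?_⟩
  have h0 := (g 0).det_coe
  have h2 : ((g 2 : Matrix (Fin 2) (Fin 2) ℂ).transpose).det = 1 := by
    rw [Matrix.det_transpose, (g 2).det_coe]
  rw [Matrix.det_fin_two] at h0
  rw [eval_hyperdet, eval_hyperdet, slice_actTensor, slice_actTensor,
    discr_mul _ _ _ _ (g 1).det_coe h2, discr_comb, h0, one_pow, one_mul]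

/-- Invariance and homogeneity express the value of an invariant on the cone over the orbit of
`ghz` through its value at `ghz`. -/
lemma eval_smul_act_ghz {Q : MvPolynomial (Fin 3 → Fin 2) ℂ} (hQ : Q ∈ invPolySpace 2 3 4)
    (r : ℂ) (g : Fin 3 → Matrix.SpecialLinearGroup (Fin 2) ℂ) :
    eval (r • actTensor g ghz) Q = r ^ 4 * eval ghz Q := by
  have hh : Q.IsHomogeneous 4 := hQ.1
  rw [← hQ.2 g ghz]
  rw [eval_eq', eval_eq', Finset.mul_sum]
  refine Finset.sum_congr rfl fun d hd => ?_
  have hdeg : ∑ i, d i = 4 := by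
    rw [hh.degree_eq_sum_deg_support hd]
    exact (Finsupp.degree_eq_sum d).symm
  simp only [Pi.smul_apply, smul_eq_mul, mul_pow, Finset.prod_mul_distrib,
    Finset.prod_pow_eq_pow_sum, hdeg]
  ring

lemma exists_rank_one (M : Matrix (Fin 2) (Fin 2) ℂ) (h : M.det = 0) :
    ∃ x y : Fin 2 → ℂ, ∀ i j, M i j = x i * y j := by
  rw [Matrix.det_fin_two] at h
  simp only [Fin.forall_fin_two]
  by_cases ha : M 0 0 = 0
  · rw [ha, zero_mul, zero_sub, neg_eq_zero, mul_eq_zero] at h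
    rcases h with h | h
    · exact ⟨![0, 1], ![M 1 0, M 1 1], by simp [ha, h]⟩
    · exact ⟨![M 0 1, M 1 1], ![0, 1], by simp [ha, h]⟩
  · refine ⟨![1, M 1 0 / M 0 0], ![M 0 0, M 0 1], by simp, ?_, ?_⟩
    · simp [ha]
    · simp only [Matrix.cons_val_one, Matrix.cons_val_fin_one]
      field_simp
      linear_combination h

/-- Two independent vectors in `ℂ²` become, after division by a common scalar, the columns of a
matrix in `SL(2, ℂ)`. -/
lemma exists_sl_columns (x z : Fin 2 → ℂ) (h : x 0 * z 1 - x 1 * z 0 ≠ 0) :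
    ∃ (r : ℂ) (g : Matrix.SpecialLinearGroup (Fin 2) ℂ),
      ∀ i, x i = r * (g : Matrix (Fin 2) (Fin 2) ℂ) i 0 ∧
        z i = r * (g : Matrix (Fin 2) (Fin 2) ℂ) i 1 := by
  obtain ⟨r, hr⟩ := IsAlgClosed.exists_pow_nat_eq (x 0 * z 1 - x 1 * z 0) (n := 2) two_pos
  have hr0 : r ≠ 0 := by
    rintro rfl
    exact h (by rw [← hr]; simp)
  refine ⟨r, ⟨!![x 0 / r, z 0 / r; x 1 / r, z 1 / r], ?_⟩, ?_⟩
  · rw [Matrix.det_fin_two_of]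
    field_simp
    linear_combination -hr
  · simp only [Fin.forall_fin_two]
    simp [mul_div_cancel₀, hr0]

/-- Generic tensors lie in the cone over the orbit of `ghz`. -/
lemma exists_eq_smul_act_ghz (u : (Fin 3 → Fin 2) → ℂ) (hB : (slice u 1).det ≠ 0)
    (hD : discr (slice u 0) (slice u 1) ≠ 0) :
    ∃ (r : ℂ) (g : Fin 3 → Matrix.SpecialLinearGroup (Fin 2) ℂ), u = r • actTensor g ghz := by
  set A := slice u 0 with hA_slice
  set B := slice u 1 with hB_slice
  -- `t` is a root of `det (A + t B)`, obtained by the quadratic formula.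
  obtain ⟨e, he⟩ := IsAlgClosed.exists_pow_nat_eq (discr A B) (n := 2) two_pos
  have he0 : e ≠ 0 := by
    rintro rfl
    exact hD (by rw [← he]; simp)
  obtain ⟨t, ht⟩ : ∃ t, 2 * B.det * t = e - mixedDet A B :=
    ⟨(e - mixedDet A B) / (2 * B.det), by field_simp⟩
  have hAt : (A + t • B).det = 0 := by
    have h1 : (A + t • B).det = A.det + t * mixedDet A B + t ^ 2 * B.det := by
      simp only [mixedDet, Matrix.det_fin_two, Matrix.add_apply, Matrix.smul_apply, smul_eq_mul]
      ring
    have h2 : 4 * B.det * (A + t • B).det = 0 := by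
      rw [h1]
      rw [discr] at he
      linear_combination he + (2 * B.det * t + mixedDet A B + e) * ht
    exact (mul_eq_zero.1 h2).resolve_left (by simpa using hB)
  have hm : mixedDet (A + t • B) B = e := by
    have h1 : mixedDet (A + t • B) B = mixedDet A B + 2 * B.det * t := by
      simp only [mixedDet, Matrix.det_fin_two, Matrix.add_apply, Matrix.smul_apply, smul_eq_mul]
      ring
    rw [h1, ht]
    ring
  -- As `det (A + t B) = 0`, the determinant of `B + s (A + t B)` is affine in `s`, of slope `e`.
  set s := -B.det / e with hs
  have hse : s * e = -B.det := by rw [hs]; field_simp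
  have hBs : (B + s • (A + t • B)).det = 0 := by
    have h1 : (B + s • (A + t • B)).det =
        B.det + s * mixedDet (A + t • B) B + s ^ 2 * (A + t • B).det := by
      simp only [mixedDet, Matrix.det_fin_two, Matrix.add_apply, Matrix.smul_apply, smul_eq_mul]
      ring
    rw [h1, hm, hAt, hse]
    ring
  obtain ⟨x, y, hxy⟩ := exists_rank_one _ hAt
  obtain ⟨z, w, hzw⟩ := exists_rank_one _ hBs
  -- The mixed determinant of the rank-one matrices `x yᵀ` and `z wᵀ` is `det (x, z) * det (y, w)`.
  have hprod : (x 0 * z 1 - x 1 * z 0) * (y 0 * w 1 - y 1 * w 0) = e := by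
    have h1 : mixedDet (A + t • B) (B + s • (A + t • B)) =
        mixedDet (A + t • B) B + 2 * s * (A + t • B).det := by
      simp only [mixedDet, Matrix.det_fin_two, Matrix.add_apply, Matrix.smul_apply, smul_eq_mul]
      ring
    rw [hm, hAt, mul_zero, add_zero] at h1
    rw [← h1]
    simp only [mixedDet, hxy, hzw]
    ring
  obtain ⟨r₂, g₂, hg₂⟩ := exists_sl_columns x z fun h => by
    rw [h, zero_mul] at hprod
    exact he0 hprod.symm
  obtain ⟨r₃, g₃, hg₃⟩ := exists_sl_columns y w fun h => by
    rw [h, mul_zero] at hprod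
    exact he0 hprod.symm
  -- The first factor undoes the passage from `(A, B)` to `(A + t B, B + s (A + t B))`.
  let g₁ : Matrix.SpecialLinearGroup (Fin 2) ℂ :=
    ⟨!![1 + t * s, -t; -s, 1], by rw [Matrix.det_fin_two_of]; ring⟩
  have hBe (j k : Fin 2) : u ![1, j, k] = z j * w k - s * (x j * y k) := by
    rw [← hxy, ← hzw]
    simp only [hA_slice, hB_slice, slice, Matrix.add_apply, Matrix.smul_apply, smul_eq_mul, Matrix.of_apply]
    ring
  have hAe (j k : Fin 2) : u ![0, j, k] = (1 + t * s) * (x j * y k) - t * (z j * w k) := by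
    have h1 : u ![0, j, k] = x j * y k - t * u ![1, j, k] := by
      rw [← hxy]
      simp [hA_slice, hB_slice, slice]
    rw [h1, hBe]
    ring
  refine ⟨r₂ * r₃, ![g₁, g₂, g₃], ?_⟩
  funext p
  obtain ⟨⟨i, j, k⟩, rfl⟩ := tripleEquiv.symm.surjective p
  change u ![i, j, k] = (r₂ * r₃) * actTensor ![g₁, g₂, g₃] ghz ![i, j, k]
  have hact : actTensor ![g₁, g₂, g₃] ghz ![i, j, k] =
      (g₁ : Matrix (Fin 2) (Fin 2) ℂ) i 0 * (g₂ : Matrix (Fin 2) (Fin 2) ℂ) j 0 *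
        (g₃ : Matrix (Fin 2) (Fin 2) ℂ) k 0 +
      (g₁ : Matrix (Fin 2) (Fin 2) ℂ) i 1 * (g₂ : Matrix (Fin 2) (Fin 2) ℂ) j 1 *
        (g₃ : Matrix (Fin 2) (Fin 2) ℂ) k 1 := by
    simp [actTensor, sum_triple, Fin.prod_univ_three, ghz]
  have hg₁ : (g₁ : Matrix (Fin 2) (Fin 2) ℂ) = !![1 + t * s, -t; -s, 1] := rfl
  rw [hact, hg₁]
  fin_cases i
  · have := hAe j k
    rw [(hg₂ j).1, (hg₂ j).2, (hg₃ k).1, (hg₃ k).2] at this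
    simp only [Fin.zero_eta, this]
    simp
    ring
  · have := hBe j k
    rw [(hg₂ j).1, (hg₂ j).2, (hg₃ k).1, (hg₃ k).2] at this
    simp only [Fin.mk_one, this]
    simp
    ring

/-- The space of `G`-invariant homogeneous degree-4 polynomial functions on tensor
states in `(ℂ^2)^{⊗3}`, where `G = SL(2,ℂ)^3`, is one-dimensional. -/
theorem stmt17 : Module.finrank ℂ (invPolySpace 2 3 4) = 1 := by
  refine finrank_eq_one (⟨hyperdet, hyperdet_mem⟩ : invPolySpace 2 3 4) ?_ ?_
  · intro h
    have h0 : hyperdet = 0 := congrArg Subtype.val h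
    have h1 := eval_hyperdet_ghz
    rw [h0, map_zero] at h1
    exact zero_ne_one h1
  · rintro ⟨Q, hQ⟩
    refine ⟨eval ghz Q, Subtype.ext ?_⟩
    change eval ghz Q • hyperdet = Q
    -- The two sides agree off the zero locus of the nonzero polynomial `hyperdet * lowerDet`.
    have key : (Q - eval ghz Q • hyperdet) * (hyperdet * lowerDet) = 0 := by
      refine MvPolynomial.funext fun u => ?_
      by_cases hD : eval u hyperdet = 0
      · simp [hD]
      by_cases hB : (slice u 1).det = 0
      · simp [eval_lowerDet, hB]
      rw [eval_hyperdet] at hD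
      obtain ⟨r, g, rfl⟩ := exists_eq_smul_act_ghz u hB hD
      simp [smul_eval, eval_smul_act_ghz hQ, eval_smul_act_ghz hyperdet_mem,
        eval_hyperdet_ghz, mul_comm]
    have hH : hyperdet ≠ 0 := by
      intro h0
      have h1 := eval_hyperdet_ghz
      rw [h0, map_zero] at h1
      exact zero_ne_one h1
    have hL : lowerDet ≠ 0 := by
      intro h0
      have h1 := eval_lowerDet fun p => if p 1 = p 2 then 1 else 0
      rw [h0, map_zero] at h1
      simp [slice, Matrix.det_fin_two] at h1
    rcases mul_eq_zero.1 key with h | h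
    · exact (sub_eq_zero.1 h).symm
    · exact absurd h (mul_ne_zero hH hL)
end
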